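/- Let K and L be convex bodies in ℝ³, both centrally symmetric about the origin O, with L contained in the interior of K and L strictly convex. Suppose that for every point z on the boundary of K the graze Σ(L,z) is contained in a plane Δ_z, and that K is almost free with respect to L. Then for every x ∈ bd K, the graze Σ(L,x) is an ellipse, i.e., the image of a Euclidean circle under an injective affine map from ℝ² into ℝ³. -/

import Mathlib

open Metric Set

noncomputable section

/-- The ambient space ℝ³. -/
abbrev E3 := EuclideanSpace ℝ (Fin 3)

/-- The cone generated by `L` with apex `x`:
`C(L,x) = {x + λ (y - x) : y ∈ L, λ ≥ 0}`. -/
def coneGen (L : Set E3) (x : E3) : Set E3 :=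
  {p | ∃ y ∈ L, ∃ l : ℝ, 0 ≤ l ∧ p = x + l • (y - x)}

/-- The support cone `S(L,x)` of `L` from `x`, the boundary of `C(L,x)`. -/
def suppCone (L : Set E3) (x : E3) : Set E3 := frontier (coneGen L x)

/-- The graze `Σ(L,x) = S(L,x) ∩ bd L`. -/
def graze (L : Set E3) (x : E3) : Set E3 := suppCone L x ∩ frontier L

/-- An affine subspace of `ℝ³` is a plane if its direction is 2-dimensional. -/
def IsPlane (P : AffineSubspace ℝ E3) : Prop :=
  Module.finrank ℝ P.direction = 2

/-- The line through two points. -/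
def lineThrough (a b : E3) : Set E3 := ↑(affineSpan ℝ ({a, b} : Set E3))

/-- `K` is almost free with respect to `L` (given the planes `Δ z` containing the
grazes `Σ(L,z)` for `z ∈ bd K`): for every `z ∈ bd K` and every
`w ∈ Π_z ∩ bd K`, where `Π_z` is the plane through the origin parallel to `Δ z`,
the line through `z` and `w` does not meet `L`. -/
def AlmostFree (K L : Set E3) (Δ : E3 → AffineSubspace ℝ E3) : Prop :=
  ∀ z ∈ frontier K, ∀ w ∈ (↑(Δ z).direction : Set E3) ∩ frontier K,
    Disjoint (lineThrough z w) L

open Filter Topology InnerProductSpace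

/-- `p` is a point of `L` at which the plane through `x` with normal `a` supports `L`. -/
def Touch (L : Set E3) (x a p : E3) : Prop :=
  p ∈ L ∧ ⟪a, p - x⟫_ℝ = 0 ∧ ∀ q ∈ L, 0 ≤ ⟪a, q - x⟫_ℝ

/-- A nonzero functional nonnegative on `s` is positive on the interior. -/
lemma inner_pos_of_interior {s : Set E3} {x a c : E3} (ha : a ≠ 0)
    (h : ∀ q ∈ s, 0 ≤ ⟪a, q - x⟫_ℝ) (hc : c ∈ interior s) : 0 < ⟪a, c - x⟫_ℝ := by
  rw [mem_interior_iff_mem_nhds, Metric.mem_nhds_iff] at hc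
  obtain ⟨e, he, hb⟩ := hc
  have hna : 0 < ‖a‖ := norm_pos_iff.2 ha
  have hmem : c - (e / (2 * ‖a‖)) • a ∈ s := by
    apply hb
    rw [Metric.mem_ball, dist_eq_norm]
    have : c - (e / (2 * ‖a‖)) • a - c = -((e / (2 * ‖a‖)) • a) := by abel
    rw [this, norm_neg, norm_smul, Real.norm_of_nonneg (by positivity)]
    have : e / (2 * ‖a‖) * ‖a‖ = e / 2 := by field_simp
    linarith
  have h1 := h _ hmem
  have h2 : ⟪a, c - (e / (2 * ‖a‖)) • a - x⟫_ℝ = ⟪a, c - x⟫_ℝ - (e / (2 * ‖a‖)) * ‖a‖ ^ 2 := by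
    rw [← real_inner_self_eq_norm_sq]
    simp only [inner_sub_right, inner_smul_right]; ring
  have : 0 < (e / (2 * ‖a‖)) * ‖a‖ ^ 2 := by positivity
  linarith

lemma convex_coneGen {L : Set E3} (hL : Convex ℝ L) (x : E3) : Convex ℝ (coneGen L x) := by
  rintro p ⟨y, hy, l, hl, rfl⟩ q ⟨y', hy', l', hl', rfl⟩ a b ha hb hab
  have hal : 0 ≤ a * l := by positivity
  have hbl : 0 ≤ b * l' := by positivity
  rcases eq_or_lt_of_le (add_nonneg hal hbl) with h0 | h0
  · refine ⟨y, hy, 0, le_rfl, ?_⟩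
    have h1 : a * l = 0 := by linarith
    have h2 : b * l' = 0 := by linarith
    have h3 : a • (x + l • (y - x)) + b • (x + l' • (y' - x))
      = (a + b) • x + (a * l) • (y - x) + (b * l') • (y' - x) := by module
    rw [h3, h1, h2, hab]; simp
  · refine ⟨(a * l / (a * l + b * l')) • y + (b * l' / (a * l + b * l')) • y', ?_, a * l + b * l',
      h0.le, ?_⟩
    · apply hL hy hy' (by positivity) (by positivity)
      field_simp
    · have h3 : a • (x + l • (y - x)) + b • (x + l' • (y' - x))
        = (a + b) • x + (a * l) • y + (b * l') • y' - (a * l + b * l') • x := by module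
      rw [h3, hab]
      have e1 : (a * l + b * l') * (a * l / (a * l + b * l')) = a * l := by field_simp
      have e2 : (a * l + b * l') * (b * l' / (a * l + b * l')) = b * l' := by field_simp
      rw [smul_sub, smul_add, smul_smul, smul_smul, e1, e2]
      module

lemma subset_coneGen (L : Set E3) (x : E3) : L ⊆ coneGen L x := by
  intro y hy
  exact ⟨y, hy, 1, zero_le_one, by simp⟩

/-- Supporting functional at a non-interior point of a convex set with interior. -/
lemma exists_support {s : Set E3} (hs : Convex ℝ s) (hi : (interior s).Nonempty) {p : E3}
    (hp : p ∉ interior s) : ∃ a : E3, a ≠ 0 ∧ ∀ q ∈ s, 0 ≤ ⟪a, q - p⟫_ℝ := by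
  obtain ⟨f, hf⟩ := geometric_hahn_banach_open_point hs.interior isOpen_interior hp
  set a := (InnerProductSpace.toDual ℝ E3).symm (-f) with ha
  have hfa : ∀ v, ⟪a, v⟫_ℝ = - f v := by
    intro v
    rw [ha, InnerProductSpace.toDual_symm_apply]; rfl
  refine ⟨a, ?_, ?_⟩
  · rintro h0
    obtain ⟨c, hc⟩ := hi
    have := hf c hc
    have h1 := hfa (p - c)
    rw [h0, inner_zero_left, map_sub] at h1
    linarith
  · intro q hq
    have hcl : q ∈ closure (interior s) := by
      rw [hs.closure_interior_eq_closure_of_nonempty_interior hi]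
      exact subset_closure hq
    have : closure (interior s) ⊆ {q | f q ≤ f p} := by
      apply closure_minimal
      · intro c hc; exact (hf c hc).le
      · exact isClosed_le f.continuous continuous_const
    have h2 : f q ≤ f p := this hcl
    rw [hfa, map_sub]; linarith

lemma graze_iff {L : Set E3} (hLcomp : IsCompact L) (hLconv : Convex ℝ L)
    (hLint : (interior L).Nonempty) (x p : E3) :
    p ∈ graze L x ↔ ∃ a : E3, a ≠ 0 ∧ Touch L x a p := by
  constructor
  · rintro ⟨h1, h2⟩
    have hpL : p ∈ L := hLcomp.isClosed.frontier_subset h2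
    have hni : p ∉ interior (coneGen L x) := h1.2
    obtain ⟨a, ha, hq⟩ := exists_support (convex_coneGen hLconv x)
      (hLint.mono (interior_mono (subset_coneGen L x))) hni
    have hx : 0 ≤ ⟪a, x - p⟫_ℝ := hq x ⟨p, hpL, 0, le_rfl, by simp⟩
    have hall : ∀ q ∈ L, 0 ≤ ⟪a, q - x⟫_ℝ := by
      intro q hqL
      by_contra hneg
      push Not at hneg
      set t := ⟪a, q - x⟫_ℝ with ht
      have key := hq (x + ((⟪a, x - p⟫_ℝ + 1) / (-t)) • (q - x))
        ⟨q, hqL, _, by apply div_nonneg <;> linarith, rfl⟩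
      have : ⟪a, x + ((⟪a, x - p⟫_ℝ + 1) / (-t)) • (q - x) - p⟫_ℝ =
          ⟪a, x - p⟫_ℝ + ((⟪a, x - p⟫_ℝ + 1) / (-t)) * t := by
        rw [ht]; simp only [inner_sub_right, inner_smul_right, inner_add_right]; ring
      rw [this] at key
      have h3 : ((⟪a, x - p⟫_ℝ + 1) / (-t)) * t = -(⟪a, x - p⟫_ℝ + 1) := by
        have : t ≠ 0 := hneg.ne
        field_simp
      linarith
    refine ⟨a, ha, hpL, ?_, hall⟩
    have h4 := hall p hpL
    have : ⟪a, p - x⟫_ℝ = - ⟪a, x - p⟫_ℝ := by rw [← inner_neg_right]; congr 1; abel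
    linarith
  · rintro ⟨a, ha, hp, h0, hq⟩
    refine ⟨⟨subset_closure (subset_coneGen L x hp), ?_⟩, ⟨subset_closure hp, ?_⟩⟩
    · intro hi
      have := inner_pos_of_interior (x := x) ha ?_ hi
      · linarith
      · rintro q ⟨y, hy, l, hl, rfl⟩
        have : x + l • (y - x) - x = l • (y - x) := by abel
        rw [this, inner_smul_right]
        exact mul_nonneg hl (hq y hy)
    · intro hi
      have := inner_pos_of_interior (x := x) ha hq hi
      linarith

lemma touch_unique {L : Set E3} (hs : StrictConvex ℝ L) {x a p q : E3} (ha : a ≠ 0)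
    (hp : Touch L x a p) (hq : Touch L x a q) : p = q := by
  by_contra hne
  have hm := hs hp.1 hq.1 hne (a := 1/2) (b := 1/2) (by norm_num) (by norm_num) (by norm_num)
  have := inner_pos_of_interior (x := x) ha hp.2.2 hm
  have e : ⟪a, (1/2 : ℝ) • p + (1/2 : ℝ) • q - x⟫_ℝ
      = 1/2 * ⟪a, p - x⟫_ℝ + 1/2 * ⟪a, q - x⟫_ℝ := by
    simp only [inner_sub_right, inner_smul_right, inner_add_right]; ring
  rw [e, hp.2.1, hq.2.1] at this
  norm_num at this

/-- `p` is touched by some plane through `x`. -/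
def IsTouch (L : Set E3) (x p : E3) : Prop := ∃ a : E3, a ≠ 0 ∧ Touch L x a p

lemma IsTouch.not_interior {L : Set E3} {x p : E3} (h : IsTouch L x p) : p ∉ interior L := by
  obtain ⟨a, ha, hp⟩ := h
  intro hi
  have := inner_pos_of_interior (x := x) ha hp.2.2 hi
  linarith [hp.2.1]

lemma IsTouch.mem {L : Set E3} {x p : E3} (h : IsTouch L x p) : p ∈ L := h.choose_spec.2.1

/-- Three distinct points of `L` not in the interior are not collinear. -/
lemma not_collinear {L : Set E3} (hs : StrictConvex ℝ L) {p q r : E3}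
    (hp : p ∈ L) (hq : q ∈ L) (hr : r ∈ L) (hp' : p ∉ interior L) (hq' : q ∉ interior L)
    (hr' : r ∉ interior L) (hpq : p ≠ q) (hpr : p ≠ r) (hqr : q ≠ r) (t : ℝ)
    (h : r - p = t • (q - p)) : False := by
  have hr1 : r = p + t • (q - p) := by rw [← h]; abel
  rcases lt_trichotomy t 0 with ht | ht | ht
  · -- p between r and q
    apply hp'
    have := hs hr hq (Ne.symm hqr) (a := 1 / (1 - t)) (b := -t / (1 - t)) (by apply div_pos <;> linarith)
      (by apply div_pos <;> linarith) (by have : (1 - t) ≠ 0 := by linarith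
                                          field_simp; ring)
    convert this using 1
    have : (1 - t) ≠ 0 := by linarith
    rw [hr1]
    have e1 : (1 / (1 - t)) • (p + t • (q - p)) + (-t / (1 - t)) • q
      = ((1 / (1 - t)) * (1 - t)) • p + ((1 / (1 - t)) * t + (-t / (1 - t))) • q := by module
    rw [e1]
    have e2 : (1 / (1 - t)) * (1 - t) = 1 := by field_simp
    have e3 : (1 / (1 - t)) * t + (-t / (1 - t)) = 0 := by field_simp; ring
    rw [e2, e3]; simp
  · subst ht; apply hpr; rw [hr1]; simp
  · rcases lt_trichotomy t 1 with h1 | h1 | h1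
    · apply hr'
      have := hs hp hq hpq (a := 1 - t) (b := t) (by linarith) ht (by ring)
      convert this using 1
      rw [hr1]; module
    · subst h1; apply hqr; rw [hr1]; simp
    · apply hq'
      have := hs hp hr hpr (a := 1 - 1 / t) (b := 1 / t) (by
        have : 1 / t < 1 := by rw [div_lt_one ht]; exact h1
        linarith) (by positivity) (by ring)
      convert this using 1
      rw [hr1]
      have e1 : (1 - 1 / t) • p + (1 / t) • (p + t • (q - p)) = p + ((1 / t) * t) • (q - p) := by module
      rw [e1]
      have : 1 / t * t = 1 := by field_simp
      rw [this]; simp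

lemma touch_exists {L : Set E3} (hL : IsCompact L) (hne : L.Nonempty) {x κ : E3}
    (hκ : ∀ q ∈ L, 0 < ⟪κ, q - x⟫_ℝ) (β : E3) : ∃ (m : ℝ) (p : E3), Touch L x (β - m • κ) p := by
  obtain ⟨p, hp, hmin⟩ := hL.exists_isMinOn hne
    (f := fun q => ⟪β, q - x⟫_ℝ / ⟪κ, q - x⟫_ℝ)
    (ContinuousOn.div (by fun_prop) (by fun_prop) (fun q hq => (hκ q hq).ne'))
  refine ⟨⟪β, p - x⟫_ℝ / ⟪κ, p - x⟫_ℝ, p, hp, ?_, ?_⟩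
  · rw [inner_sub_left, real_inner_smul_left]
    have := (hκ p hp).ne'
    field_simp; ring
  · intro q hq
    have h1 := hmin hq
    simp only [mem_setOf_eq] at h1
    have h2 := hκ q hq
    rw [inner_sub_left, real_inner_smul_left]
    rw [le_div_iff₀ h2] at h1
    linarith

lemma touch_m_eq {L : Set E3} {x κ β p p' : E3} {m m' : ℝ}
    (hκ : ∀ q ∈ L, 0 < ⟪κ, q - x⟫_ℝ)
    (h : Touch L x (β - m • κ) p) (h' : Touch L x (β - m' • κ) p') : m = m' := by
  obtain ⟨hp, h0, hq⟩ := h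
  obtain ⟨hp', h0', hq'⟩ := h'
  have h1 := hq p' hp'
  have h2 := hq' p hp
  rw [inner_sub_left, real_inner_smul_left] at h0 h0' h1 h2
  have h3 := hκ p hp
  have h4 := hκ p' hp'
  apply le_antisymm
  · by_contra hc; push Not at hc; nlinarith
  · by_contra hc; push Not at hc; nlinarith

lemma touch_p_eq {L : Set E3} (hs : StrictConvex ℝ L) {x κ β p p' : E3} {m m' : ℝ}
    (hκ : ∀ q ∈ L, 0 < ⟪κ, q - x⟫_ℝ) (hβ : ∀ c : ℝ, β ≠ c • κ)
    (h : Touch L x (β - m • κ) p) (h' : Touch L x (β - m' • κ) p') : p = p' := by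
  have := touch_m_eq hκ h h'
  subst this
  exact touch_unique hs (sub_ne_zero.2 (hβ m)) h h'

lemma touch_smul {L : Set E3} {x a p : E3} {c : ℝ} (hc : 0 ≤ c) (h : Touch L x a p) :
    Touch L x (c • a) p := by
  refine ⟨h.1, ?_, ?_⟩
  · rw [real_inner_smul_left, h.2.1, mul_zero]
  · intro q hq; rw [real_inner_smul_left]; exact mul_nonneg hc (h.2.2 q hq)

lemma touch_tendsto {L : Set E3} (hL : IsCompact L) (hs : StrictConvex ℝ L)
    {ι : Type*} {l : Filter ι} {xs κs βs ps : ι → E3} {ms : ι → ℝ} {x κ β p : E3} {m : ℝ}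
    (hκ : ∀ q ∈ L, 0 < ⟪κ, q - x⟫_ℝ) (hβ : ∀ c : ℝ, β ≠ c • κ)
    (hx : Tendsto xs l (𝓝 x)) (hκs : Tendsto κs l (𝓝 κ)) (hβs : Tendsto βs l (𝓝 β))
    (ht : ∀ᶠ i in l, Touch L (xs i) (βs i - ms i • κs i) (ps i))
    (h : Touch L x (β - m • κ) p) : Tendsto ps l (𝓝 p) ∧ Tendsto ms l (𝓝 m) := by
  have main : ∀ g : Ultrafilter ι, (g : Filter ι) ≤ l →
      Tendsto ps g (𝓝 p) ∧ Tendsto ms g (𝓝 m) := by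
    intro g hg
    have ht' := ht.filter_mono hg
    have hx' := hx.mono_left hg
    have hκ' := hκs.mono_left hg
    have hβ' := hβs.mono_left hg
    obtain ⟨p', hp', hlim⟩ := hL.ultrafilter_le_nhds (g.map ps) (by
      rw [le_principal_iff]
      exact ht'.mono fun i hi => hi.1)
    have hps : Tendsto ps g (𝓝 p') := hlim
    have hden : Tendsto (fun i => ⟪κs i, ps i - xs i⟫_ℝ) g (𝓝 ⟪κ, p' - x⟫_ℝ) :=
      hκ'.inner (hps.sub hx')
    have hnum : Tendsto (fun i => ⟪βs i, ps i - xs i⟫_ℝ) g (𝓝 ⟪β, p' - x⟫_ℝ) :=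
      hβ'.inner (hps.sub hx')
    have hpos := hκ p' hp'
    have hms : Tendsto ms g (𝓝 (⟪β, p' - x⟫_ℝ / ⟪κ, p' - x⟫_ℝ)) := by
      refine (hnum.div hden hpos.ne').congr' ?_
      filter_upwards [ht', hden.eventually (lt_mem_nhds hpos)] with i hi hi2
      have := hi.2.1
      rw [inner_sub_left, real_inner_smul_left] at this
      have h5 := hi2.ne'
      simp only [Pi.div_apply]
      rw [div_eq_iff h5]; linarith
    set m' := ⟪β, p' - x⟫_ℝ / ⟪κ, p' - x⟫_ℝ with hm'
    have htl : Touch L x (β - m' • κ) p' := by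
      refine ⟨hp', ?_, ?_⟩
      · rw [inner_sub_left, real_inner_smul_left, hm']; field_simp; ring
      · intro q hq
        have hlim2 : Tendsto (fun i => ⟪βs i - ms i • κs i, q - xs i⟫_ℝ) g
            (𝓝 ⟪β - m' • κ, q - x⟫_ℝ) :=
          (hβ'.sub (hms.smul hκ')).inner (tendsto_const_nhds.sub hx')
        exact ge_of_tendsto hlim2 (ht'.mono fun i hi => hi.2.2 q hq)
    have e1 := touch_p_eq hs hκ hβ h htl
    have e2 := touch_m_eq hκ h htl
    rw [e1, e2]
    exact ⟨hps, hms⟩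
  exact ⟨tendsto_iff_ultrafilter _ _ _ |>.2 fun g hg => (main g hg).1,
    tendsto_iff_ultrafilter _ _ _ |>.2 fun g hg => (main g hg).2⟩


/-- Standing assumptions on `L`. -/
structure SC (L : Set E3) : Prop where
  comp : IsCompact L
  strict : StrictConvex ℝ L
  zero : (0 : E3) ∈ interior L

lemma SC.conv {L : Set E3} (h : SC L) : Convex ℝ L := h.strict.convex
lemma SC.zero_mem {L : Set E3} (h : SC L) : (0 : E3) ∈ L := interior_subset h.zero
lemma SC.ne {L : Set E3} (h : SC L) : L.Nonempty := ⟨0, h.zero_mem⟩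

lemma exists_perp (a b : E3) : ∃ v : E3, v ≠ 0 ∧ ⟪a, v⟫_ℝ = 0 ∧ ⟪b, v⟫_ℝ = 0 := by
  let f : E3 →ₗ[ℝ] (ℝ × ℝ) := ((innerₛₗ ℝ a).prod (innerₛₗ ℝ b))
  have h : LinearMap.ker f ≠ ⊥ := by
    apply LinearMap.ker_ne_bot_of_finrank_lt
    simp
  obtain ⟨v, hv, h0⟩ := Submodule.exists_mem_ne_zero_of_ne_bot h
  refine ⟨v, h0, ?_, ?_⟩
  · have := congrArg Prod.fst (LinearMap.mem_ker.1 hv); simpa [f] using this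
  · have := congrArg Prod.snd (LinearMap.mem_ker.1 hv); simpa [f] using this

lemma perp_unique {u1 u2 v w : E3} (hu : LinearIndependent ℝ ![u1, u2]) (hv : v ≠ 0)
    (h1 : ⟪v, u1⟫_ℝ = 0) (h2 : ⟪v, u2⟫_ℝ = 0) (h3 : ⟪w, u1⟫_ℝ = 0) (h4 : ⟪w, u2⟫_ℝ = 0) :
    ∃ c : ℝ, w = c • v := by
  set S := Submodule.span ℝ (Set.range ![u1, u2]) with hS
  have hf : Module.finrank ℝ S = 2 := by
    rw [hS, finrank_span_eq_card hu]; simp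
  have hf2 : Module.finrank ℝ Sᗮ = 1 := by
    have := Submodule.finrank_add_finrank_orthogonal S
    rw [hf, finrank_euclideanSpace] at this
    simp at this; omega
  have mem : ∀ y : E3, ⟪y, u1⟫_ℝ = 0 → ⟪y, u2⟫_ℝ = 0 → y ∈ Sᗮ := by
    intro y a b
    rw [Submodule.mem_orthogonal']
    intro s hs
    induction hs using Submodule.span_induction with
    | mem z hz =>
      obtain ⟨i, rfl⟩ := hz
      fin_cases i
      · exact a
      · exact b
    | zero => simp
    | add _ _ _ _ h h' => rw [inner_add_right, h, h', add_zero]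
    | smul c _ _ h => rw [inner_smul_right, h, mul_zero]
  obtain ⟨c, hc⟩ := (finrank_eq_one_iff_of_nonzero' (⟨v, mem v h1 h2⟩ : Sᗮ)
    (by intro h; exact hv (congrArg Subtype.val h))).1 hf2 ⟨w, mem w h3 h4⟩
  exact ⟨c, (congrArg Subtype.val hc).symm⟩

lemma linInd_pair {u1 u2 : E3} (h1 : u1 ≠ 0) (h : ∀ t : ℝ, u2 ≠ t • u1) :
    LinearIndependent ℝ ![u1, u2] := by
  rw [LinearIndependent.pair_iff' h1]
  intro a ha
  exact h a ha.symm

lemma pos_ne_zero {L : Set E3} (hL : SC L) {x κ : E3} (hκ : ∀ q ∈ L, 0 < ⟪κ, q - x⟫_ℝ) : κ ≠ 0 := by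
  rintro rfl
  have := hκ 0 hL.zero_mem
  simp at this

lemma isTouch_exists {L : Set E3} (hL : SC L) {x κ : E3} (hκ : ∀ q ∈ L, 0 < ⟪κ, q - x⟫_ℝ) :
    ∃ p, IsTouch L x p := by
  obtain ⟨β, h0, h1, -⟩ := exists_perp κ κ
  obtain ⟨m, p, hp⟩ := touch_exists hL.comp hL.ne hκ β
  refine ⟨p, _, ?_, hp⟩
  intro h
  have h2 : ⟪β - m • κ, β⟫_ℝ = 0 := by rw [h]; simp
  rw [inner_sub_left, real_inner_smul_left, h1] at h2
  simp at h2
  exact h0 h2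

lemma graze_span {L : Set E3} (hL : SC L) {x κ v : E3} (hκ : ∀ q ∈ L, 0 < ⟪κ, q - x⟫_ℝ)
    (h : ∀ p, IsTouch L x p → ⟪v, p - x⟫_ℝ = 0) : v = 0 := by
  by_contra hv
  have key : ∀ w : E3, w ≠ 0 → (∀ p, IsTouch L x p → ⟪w, p - x⟫_ℝ = 0) →
      0 < ⟪w, 0 - x⟫_ℝ := by
    intro w hw hwp
    obtain ⟨m, p, hp⟩ := touch_exists hL.comp hL.ne hκ w
    have hm : m = 0 := by
      by_cases h0 : w - m • κ = 0
      · obtain ⟨p', hp'⟩ := isTouch_exists hL hκ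
        have h1 := hwp p' hp'
        rw [sub_eq_zero.1 h0, real_inner_smul_left] at h1
        rcases mul_eq_zero.1 h1 with h2 | h2
        · exact h2
        · exact absurd h2 (hκ _ hp'.mem).ne'
      · have h1 := hwp p ⟨_, h0, hp⟩
        have h2 := hp.2.1
        rw [inner_sub_left, real_inner_smul_left, h1] at h2
        have h3 := (hκ p hp.1)
        by_contra hm
        have := mul_ne_zero hm h3.ne'
        exact this (by linarith)
    subst hm
    rw [zero_smul, sub_zero] at hp
    exact inner_pos_of_interior hw hp.2.2 hL.zero
  have h1 := key v hv h
  have h2 := key (-v) (neg_ne_zero.2 hv) (fun p hp => by rw [inner_neg_left, h p hp, neg_zero])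
  rw [inner_neg_left] at h2
  linarith

lemma n_pos {L : Set E3} (hL : SC L) {x κ n : E3} (hκ : ∀ q ∈ L, 0 < ⟪κ, q - x⟫_ℝ)
    (hn : ∀ p, IsTouch L x p → ⟪n, p - x⟫_ℝ = 1) : ∀ q ∈ L, 0 < ⟪n, q - x⟫_ℝ := by
  intro q hq
  obtain ⟨m, p, hp⟩ := touch_exists hL.comp hL.ne hκ n
  have hm : 0 < m := by
    by_cases h0 : n - m • κ = 0
    · obtain ⟨p', hp'⟩ := isTouch_exists hL hκ
      have h1 := hn p' hp'
      rw [sub_eq_zero.1 h0, real_inner_smul_left] at h1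
      have := hκ _ hp'.mem
      by_contra hc; push Not at hc; nlinarith
    · have h1 := hn p ⟨_, h0, hp⟩
      have h2 := hp.2.1
      rw [inner_sub_left, real_inner_smul_left, h1] at h2
      have := hκ p hp.1
      by_contra hc; push Not at hc; nlinarith
  have h1 := hp.2.2 q hq
  rw [inner_sub_left, real_inner_smul_left] at h1
  have := mul_pos hm (hκ q hq)
  linarith

lemma proj_mem {L : Set E3} (hL : SC L) {x κ n : E3} (hκ : ∀ q ∈ L, 0 < ⟪κ, q - x⟫_ℝ)
    (hn : ∀ p, IsTouch L x p → ⟪n, p - x⟫_ℝ = 1) {q : E3} (hq : q ∈ L) :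
    x + (1 / ⟪n, q - x⟫_ℝ) • (q - x) ∈ L := by
  have hpos := n_pos hL hκ hn
  have hqp := hpos q hq
  by_contra hc
  set q' := x + (1 / ⟪n, q - x⟫_ℝ) • (q - x) with hq'
  obtain ⟨f, u, hfu, hf⟩ := geometric_hahn_banach_point_closed hL.conv hL.comp.isClosed hc
  set b := (InnerProductSpace.toDual ℝ E3).symm f with hb
  have hfb : ∀ v, ⟪b, v⟫_ℝ = f v := fun v => by rw [hb, InnerProductSpace.toDual_symm_apply]
  have hsep : ∀ y ∈ L, ⟪b, q' - x⟫_ℝ < ⟪b, y - x⟫_ℝ := by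
    intro y hy
    rw [hfb, hfb, map_sub, map_sub]
    linarith [hf y hy]
  set c := ⟪b, q' - x⟫_ℝ with hcdef
  have hbq : ⟪b, q - x⟫_ℝ = c * ⟪n, q - x⟫_ℝ := by
    have : q' - x = (1 / ⟪n, q - x⟫_ℝ) • (q - x) := by rw [hq']; abel
    rw [hcdef, this, inner_smul_right]; field_simp
  obtain ⟨m, p, hp⟩ := touch_exists hL.comp hL.ne hpos (b - c • n)
  by_cases h0 : b - c • n - m • n = 0
  · have h1 : ⟪b - c • n - m • n, q - x⟫_ℝ = 0 := by rw [h0]; simp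
    rw [inner_sub_left, inner_sub_left, real_inner_smul_left, real_inner_smul_left, hbq] at h1
    have hm : m = 0 := by
      by_contra hm
      exact mul_ne_zero hm hqp.ne' (by linarith)
    obtain ⟨p', hp'⟩ := isTouch_exists hL hκ
    have h2 : ⟪b - c • n - m • n, p' - x⟫_ℝ = 0 := by rw [h0]; simp
    rw [inner_sub_left, inner_sub_left, real_inner_smul_left, real_inner_smul_left, hn p' hp', hm] at h2
    linarith [hsep p' hp'.mem]
  · have h1 := hn p ⟨_, h0, hp⟩
    have h2 := hp.2.1
    have h3 := hp.2.2 q hq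
    rw [inner_sub_left, inner_sub_left, real_inner_smul_left, real_inner_smul_left, hbq] at h3
    rw [inner_sub_left, inner_sub_left, real_inner_smul_left, real_inner_smul_left, h1] at h2
    have h4 := hsep p hp.1
    nlinarith

lemma indep3 {L : Set E3} (hL : SC L) {x n v p1 p2 p3 : E3}
    (hn : ∀ p, IsTouch L x p → ⟪n, p - x⟫_ℝ = 1) (h1 : IsTouch L x p1) (h2 : IsTouch L x p2)
    (h3 : IsTouch L x p3) (h12 : p1 ≠ p2) (h13 : p1 ≠ p3) (h23 : p2 ≠ p3)
    (v1 : ⟪v, p1 - x⟫_ℝ = 0) (v2 : ⟪v, p2 - x⟫_ℝ = 0) (v3 : ⟪v, p3 - x⟫_ℝ = 0) : v = 0 := by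
  by_contra hv
  have hli : LinearIndependent ℝ ![p2 - p1, p3 - p1] := by
    apply linInd_pair (sub_ne_zero.2 h12.symm)
    intro t ht
    exact not_collinear hL.strict h1.mem h2.mem h3.mem h1.not_interior h2.not_interior
      h3.not_interior h12 h13 h23 t ht
  have e2 : p2 - p1 = (p2 - x) - (p1 - x) := by abel
  have e3 : p3 - p1 = (p3 - x) - (p1 - x) := by abel
  obtain ⟨c, hc⟩ := perp_unique (w := n) hli hv
    (by rw [e2, inner_sub_right, v1, v2, sub_zero]) (by rw [e3, inner_sub_right, v1, v3, sub_zero])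
    (by rw [e2, inner_sub_right, hn _ h1, hn _ h2, sub_self])
    (by rw [e3, inner_sub_right, hn _ h1, hn _ h3, sub_self])
  have := hn _ h1
  rw [hc, real_inner_smul_left, v1] at this
  norm_num at this

lemma indep2 {L : Set E3} {x n p1 p2 : E3}
    (hn : ∀ p, IsTouch L x p → ⟪n, p - x⟫_ℝ = 1) (h1 : IsTouch L x p1) (h2 : IsTouch L x p2)
    (h12 : p1 ≠ p2) : LinearIndependent ℝ ![p1 - x, p2 - x] := by
  apply linInd_pair
  · intro h
    have := hn _ h1
    rw [h] at this; simp at this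
  · intro t ht
    have := hn _ h2
    rw [ht, inner_smul_right, hn _ h1] at this
    apply h12
    have : t = 1 := by linarith
    rw [this, one_smul] at ht
    exact (sub_left_injective ht).symm

/-- The standing assumptions of the theorem, in terms of normals `N z` and offsets `d z`. -/
structure Setup (K L : Set E3) (N : E3 → E3) (d : E3 → ℝ) : Prop where
  Kc : IsCompact K
  Kv : Convex ℝ K
  SL : SC L
  LK : L ⊆ interior K
  N0 : ∀ z ∈ frontier K, N z ≠ 0
  pl : ∀ z ∈ frontier K, ∀ p, IsTouch L z p → ⟪N z, p⟫_ℝ = d z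
  af : ∀ z ∈ frontier K, ∀ w ∈ frontier K, ⟪N z, w⟫_ℝ = 0 → ∀ t : ℝ, z + t • (w - z) ∉ L

lemma hit_frontier {K : Set E3} {c P : E3} (hc : c ∈ interior K) (hP : P ∉ interior K) :
    ∃ w ∈ segment ℝ c P, w ∈ frontier K := by
  by_contra hno
  push Not at hno
  have hout : ∀ w ∈ segment ℝ c P, w ∉ interior K → w ∈ (closure K)ᶜ := by
    intro w hw h1 h2
    exact hno w hw ⟨h2, h1⟩
  obtain ⟨w, -, h1, h2⟩ := (convex_segment (𝕜 := ℝ) c P).isPreconnected (interior K) ((closure K)ᶜ)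
    isOpen_interior isClosed_closure.isOpen_compl (by
      intro w hw
      by_cases h : w ∈ interior K
      · exact Or.inl h
      · exact Or.inr (hout w hw h)) ⟨c, left_mem_segment ℝ c P, hc⟩
      ⟨P, right_mem_segment ℝ c P, hout P (right_mem_segment ℝ c P) hP⟩
  exact h2 (subset_closure (interior_subset h1))

lemma Setup.normal {K L : Set E3} {N : E3 → E3} {d : E3 → ℝ} (S : Setup K L N d) {x : E3}
    (hx : x ∈ frontier K) : ∃ ν : E3, ‖ν‖ = 1 ∧ (∀ q ∈ K, 0 ≤ ⟪ν, q - x⟫_ℝ) ∧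
      ∀ q ∈ L, 0 < ⟪ν, q - x⟫_ℝ := by
  obtain ⟨a, ha, hq⟩ := exists_support S.Kv ⟨0, S.LK S.SL.zero_mem⟩ hx.2
  have hn : 0 < ‖a‖ := norm_pos_iff.2 ha
  have h1 : ∀ q ∈ K, 0 ≤ ⟪(‖a‖⁻¹) • a, q - x⟫_ℝ := by
    intro q hqK
    rw [real_inner_smul_left]; exact mul_nonneg (by positivity) (hq q hqK)
  refine ⟨(‖a‖⁻¹) • a, ?_, h1, ?_⟩
  · rw [norm_smul, norm_inv, norm_norm]; field_simp
  · intro q hqL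
    exact inner_pos_of_interior (smul_ne_zero (inv_ne_zero hn.ne') ha) h1 (S.LK hqL)

lemma Setup.off {K L : Set E3} {N : E3 → E3} {d : E3 → ℝ} (S : Setup K L N d) {x M : E3} {e : ℝ}
    (hx : x ∈ frontier K) (hM : M ≠ 0) (h : ∀ p, IsTouch L x p → ⟪M, p⟫_ℝ = e) :
    e - ⟪M, x⟫_ℝ ≠ 0 := by
  intro h0
  obtain ⟨ν, -, -, hν⟩ := S.normal hx
  apply hM
  apply graze_span S.SL hν
  intro p hp
  rw [inner_sub_right, h p hp]; exact h0

lemma n_of_plane {L : Set E3} {x M : E3} {e : ℝ} (h0 : e - ⟪M, x⟫_ℝ ≠ 0)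
    (h : ∀ p, IsTouch L x p → ⟪M, p⟫_ℝ = e) :
    ∀ p, IsTouch L x p → ⟪(e - ⟪M, x⟫_ℝ)⁻¹ • M, p - x⟫_ℝ = 1 := by
  intro p hp
  rw [real_inner_smul_left, inner_sub_right, h p hp]
  field_simp

lemma Setup.exists_n {K L : Set E3} {N : E3 → E3} {d : E3 → ℝ} (S : Setup K L N d) {x : E3}
    (hx : x ∈ frontier K) : ∃ n : E3, ∀ p, IsTouch L x p → ⟪n, p - x⟫_ℝ = 1 :=
  ⟨_, n_of_plane (S.off hx (S.N0 x hx) (S.pl x hx)) (S.pl x hx)⟩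

open Classical in
/-- The touching point of the plane through `x` with normal in `β + ℝ κ`. -/
def tp (L : Set E3) (x κ β : E3) : E3 :=
  if h : ∃ (p : E3) (m : ℝ), Touch L x (β - m • κ) p then h.choose else 0

lemma tp_spec {L : Set E3} (hL : SC L) {x κ : E3} (hκ : ∀ q ∈ L, 0 < ⟪κ, q - x⟫_ℝ) (β : E3) :
    ∃ m : ℝ, Touch L x (β - m • κ) (tp L x κ β) := by
  obtain ⟨m, p, hp⟩ := touch_exists hL.comp hL.ne hκ β
  have h : ∃ (p : E3) (m : ℝ), Touch L x (β - m • κ) p := ⟨p, m, hp⟩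
  unfold tp
  rw [dif_pos h]
  exact h.choose_spec

lemma tp_eq {L : Set E3} (hL : SC L) {x κ β p : E3} {m : ℝ} (hκ : ∀ q ∈ L, 0 < ⟪κ, q - x⟫_ℝ)
    (hβ : ∀ c : ℝ, β ≠ c • κ) (h : Touch L x (β - m • κ) p) : p = tp L x κ β := by
  obtain ⟨m', h'⟩ := tp_spec hL hκ β
  exact touch_p_eq hL.strict hκ hβ h h'

lemma tp_isTouch {L : Set E3} (hL : SC L) {x κ β : E3} (hκ : ∀ q ∈ L, 0 < ⟪κ, q - x⟫_ℝ)
    (hβ : ∀ c : ℝ, β ≠ c • κ) : IsTouch L x (tp L x κ β) := by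
  obtain ⟨m', h'⟩ := tp_spec hL hκ β
  exact ⟨_, sub_ne_zero.2 (hβ m'), h'⟩

lemma eventually_pos {L : Set E3} (hL : IsCompact L) {ι : Type*} {l : Filter ι}
    {xs κs : ι → E3} {x κ : E3} (hκ : ∀ q ∈ L, 0 < ⟪κ, q - x⟫_ℝ)
    (hx : Tendsto xs l (𝓝 x)) (hκs : Tendsto κs l (𝓝 κ)) :
    ∀ᶠ i in l, ∀ q ∈ L, 0 < ⟪κs i, q - xs i⟫_ℝ := by
  have h1 : ∀ᶠ w : E3 × E3 in 𝓝 (x, κ), ∀ q ∈ L, 0 < ⟪w.2, q - w.1⟫_ℝ := by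
    apply hL.eventually_forall_of_forall_eventually
    intro q hq
    have hc : Continuous fun z : (E3 × E3) × E3 => ⟪z.1.2, z.2 - z.1.1⟫_ℝ := by fun_prop
    exact hc.continuousAt.eventually (lt_mem_nhds (hκ q hq))
  exact (hx.prodMk_nhds hκs).eventually h1

lemma tp_tendsto {L : Set E3} (hL : SC L)
    {ι : Type*} {l : Filter ι} {xs κs βs : ι → E3} {x κ β : E3}
    (hκ : ∀ q ∈ L, 0 < ⟪κ, q - x⟫_ℝ) (hβ : ∀ c : ℝ, β ≠ c • κ)
    (hx : Tendsto xs l (𝓝 x)) (hκs : Tendsto κs l (𝓝 κ)) (hβs : Tendsto βs l (𝓝 β)) :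
    Tendsto (fun i => tp L (xs i) (κs i) (βs i)) l (𝓝 (tp L x κ β)) := by
  obtain ⟨m, hm⟩ := tp_spec hL hκ β
  have hex : ∀ i, ∃ m : ℝ, (∀ q ∈ L, 0 < ⟪κs i, q - xs i⟫_ℝ) →
      Touch L (xs i) (βs i - m • κs i) (tp L (xs i) (κs i) (βs i)) := by
    intro i
    by_cases h : ∀ q ∈ L, 0 < ⟪κs i, q - xs i⟫_ℝ
    · obtain ⟨m, hm⟩ := tp_spec hL h (βs i)
      exact ⟨m, fun _ => hm⟩
    · exact ⟨0, fun h' => absurd h' h⟩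
  choose ms hms using hex
  exact (touch_tendsto hL.comp hL.strict (ms := ms) hκ hβ hx hκs hβs
    ((eventually_pos hL.comp hκ hx hκs).mono fun i hi => hms i hi) hm).1

lemma tp_ne {L : Set E3} (hL : SC L) {x κ β : E3} (hκ : ∀ q ∈ L, 0 < ⟪κ, q - x⟫_ℝ)
    (hβ : ∀ c : ℝ, β ≠ c • κ) : tp L x κ β ≠ tp L x κ (-β) := by
  intro h
  obtain ⟨m, hm⟩ := tp_spec hL hκ β
  obtain ⟨m', hm'⟩ := tp_spec hL hκ (-β)
  rw [← h] at hm'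
  have h1 := hm.2.1
  have h2 := hm'.2.1
  have hk := hκ _ hm.1
  rw [inner_sub_left, real_inner_smul_left] at h1 h2
  rw [inner_neg_left] at h2
  have h3 : (m + m') * ⟪κ, tp L x κ β - x⟫_ℝ = 0 := by linarith
  have h4 : m' = -m := by
    rcases mul_eq_zero.1 h3 with h | h
    · linarith
    · exact absurd h hk.ne'
  have h5 := inner_pos_of_interior (sub_ne_zero.2 (hβ m)) hm.2.2 hL.zero
  have h6 := hm'.2.2 0 hL.zero_mem
  have : -β - m' • κ = -(β - m • κ) := by rw [h4]; module
  rw [this, inner_neg_left] at h6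
  linarith

lemma tp_smul {L : Set E3} (hL : SC L) {x κ β : E3} (hκ : ∀ q ∈ L, 0 < ⟪κ, q - x⟫_ℝ)
    (hβ : ∀ c : ℝ, β ≠ c • κ) {s : ℝ} (hs : 0 < s) : tp L x κ (s • β) = tp L x κ β := by
  obtain ⟨m, hm⟩ := tp_spec hL hκ (s • β)
  apply tp_eq hL hκ hβ (m := s⁻¹ * m)
  have := touch_smul (c := s⁻¹) (by positivity) hm
  convert this using 1
  rw [smul_sub, smul_smul, smul_smul, inv_mul_cancel₀ hs.ne', one_smul]

/-- Orthonormal frames. -/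
structure Frame (t1 t2 ν : E3) : Prop where
  n1 : ‖t1‖ = 1
  n2 : ‖t2‖ = 1
  n3 : ‖ν‖ = 1
  h12 : ⟪t1, t2⟫_ℝ = 0
  h13 : ⟪t1, ν⟫_ℝ = 0
  h23 : ⟪t2, ν⟫_ℝ = 0

lemma normalize_norm {a : E3} (ha : a ≠ 0) : ‖(‖a‖⁻¹) • a‖ = 1 := by
  have hn : 0 < ‖a‖ := norm_pos_iff.2 ha
  rw [norm_smul, norm_inv, norm_norm]; field_simp

lemma frame_of_two {t1 ν : E3} (h1 : ‖t1‖ = 1) (h3 : ‖ν‖ = 1) (h13 : ⟪t1, ν⟫_ℝ = 0) :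
    ∃ t2, Frame t1 t2 ν := by
  obtain ⟨v, hv, ha, hb⟩ := exists_perp t1 ν
  refine ⟨(‖v‖⁻¹) • v, h1, normalize_norm hv, h3, ?_, h13, ?_⟩
  · rw [inner_smul_right, ha, mul_zero]
  · rw [real_inner_smul_left, real_inner_comm, hb, mul_zero]

lemma exists_frame {ν : E3} (h3 : ‖ν‖ = 1) : ∃ t1 t2, Frame t1 t2 ν := by
  obtain ⟨v, hv, ha, -⟩ := exists_perp ν ν
  obtain ⟨t2, h⟩ := frame_of_two (t1 := (‖v‖⁻¹) • v) (normalize_norm hv) h3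
    (by rw [real_inner_smul_left, real_inner_comm, ha, mul_zero])
  exact ⟨_, t2, h⟩

lemma Frame.s1 {t1 t2 ν : E3} (F : Frame t1 t2 ν) : ⟪t1, t1⟫_ℝ = 1 := by
  rw [real_inner_self_eq_norm_sq, F.n1]; norm_num
lemma Frame.s2 {t1 t2 ν : E3} (F : Frame t1 t2 ν) : ⟪t2, t2⟫_ℝ = 1 := by
  rw [real_inner_self_eq_norm_sq, F.n2]; norm_num
lemma Frame.s3 {t1 t2 ν : E3} (F : Frame t1 t2 ν) : ⟪ν, ν⟫_ℝ = 1 := by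
  rw [real_inner_self_eq_norm_sq, F.n3]; norm_num
lemma Frame.h21 {t1 t2 ν : E3} (F : Frame t1 t2 ν) : ⟪t2, t1⟫_ℝ = 0 := by
  rw [real_inner_comm, F.h12]
lemma Frame.h31 {t1 t2 ν : E3} (F : Frame t1 t2 ν) : ⟪ν, t1⟫_ℝ = 0 := by
  rw [real_inner_comm, F.h13]
lemma Frame.h32 {t1 t2 ν : E3} (F : Frame t1 t2 ν) : ⟪ν, t2⟫_ℝ = 0 := by
  rw [real_inner_comm, F.h23]

lemma Frame.decomp {t1 t2 ν : E3} (F : Frame t1 t2 ν) (v : E3) :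
    v = ⟪t1, v⟫_ℝ • t1 + ⟪t2, v⟫_ℝ • t2 + ⟪ν, v⟫_ℝ • ν := by
  set w := v - (⟪t1, v⟫_ℝ • t1 + ⟪t2, v⟫_ℝ • t2 + ⟪ν, v⟫_ℝ • ν) with hw
  have e1 : ⟪t1, w⟫_ℝ = 0 := by
    rw [hw]; simp only [inner_sub_right, inner_add_right, inner_smul_right, F.s1, F.h12, F.h13]; ring
  have e2 : ⟪t2, w⟫_ℝ = 0 := by
    rw [hw]; simp only [inner_sub_right, inner_add_right, inner_smul_right, F.s2, F.h21, F.h23]; ring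
  have e3 : ⟪ν, w⟫_ℝ = 0 := by
    rw [hw]; simp only [inner_sub_right, inner_add_right, inner_smul_right, F.s3, F.h31, F.h32]; ring
  have hν : ν ≠ 0 := by intro h; have := F.s3; rw [h] at this; simp at this
  have ht1 : t1 ≠ 0 := by intro h; have := F.s1; rw [h] at this; simp at this
  obtain ⟨c, hc⟩ := perp_unique (u1 := t1) (u2 := t2) (v := ν) (w := w)
    (linInd_pair ht1 (by
      intro t h
      have h1 := F.h12
      have h2 := F.s2
      rw [h, inner_smul_right, F.s1] at h1
      have : t = 0 := by linarith
      rw [h, this] at h2; simp at h2)) hν F.h31 F.h32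
      (by rw [real_inner_comm, e1]) (by rw [real_inner_comm, e2])
  rw [hc, inner_smul_right, F.s3] at e3
  have : c = 0 := by linarith
  rw [this, zero_smul] at hc
  exact sub_eq_zero.1 hc

lemma Frame.comb_ne {t1 t2 ν : E3} (F : Frame t1 t2 ν) {a b : ℝ} (h : ¬ (a = 0 ∧ b = 0)) (c : ℝ) :
    a • t1 + b • t2 ≠ c • ν := by
  intro h0
  have h1 : ⟪t1, a • t1 + b • t2⟫_ℝ = ⟪t1, c • ν⟫_ℝ := by rw [h0]
  have h2 : ⟪t2, a • t1 + b • t2⟫_ℝ = ⟪t2, c • ν⟫_ℝ := by rw [h0]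
  simp only [inner_add_right, inner_smul_right, F.s1, F.s2, F.h12, F.h13, F.h21, F.h23] at h1 h2
  apply h; constructor <;> linarith

/-- The touching point in direction `a t1 + b t2`. -/
lemma Frame.touch_eq {L : Set E3} (hL : SC L) {t1 t2 ν x p a : E3} (F : Frame t1 t2 ν)
    (hκ : ∀ q ∈ L, 0 < ⟪ν, q - x⟫_ℝ) (ha : a ≠ 0) (h : Touch L x a p) :
    ¬ (⟪t1, a⟫_ℝ = 0 ∧ ⟪t2, a⟫_ℝ = 0) ∧
    p = tp L x ν (⟪t1, a⟫_ℝ • t1 + ⟪t2, a⟫_ℝ • t2) := by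
  have hd := F.decomp a
  have h1 : ¬ (⟪t1, a⟫_ℝ = 0 ∧ ⟪t2, a⟫_ℝ = 0) := by
    rintro ⟨h1, h2⟩
    rw [h1, h2, zero_smul, zero_smul, zero_add, zero_add] at hd
    have h3 := h.2.1
    rw [hd, real_inner_smul_left] at h3
    rcases mul_eq_zero.1 h3 with h4 | h4
    · apply ha; rw [hd, h4, zero_smul]
    · exact (hκ p h.1).ne' h4
  refine ⟨h1, tp_eq hL hκ (F.comb_ne h1) (m := -⟪ν, a⟫_ℝ) ?_⟩
  convert h using 1
  rw [neg_smul, sub_neg_eq_add]; exact hd.symm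

/-- Parametrisation of the graze by angle. -/
def pθ (L : Set E3) (x t1 t2 ν : E3) (θ : ℝ) : E3 :=
  tp L x ν (Real.cos θ • t1 + Real.sin θ • t2)

lemma cs_ne (θ : ℝ) : ¬ (Real.cos θ = 0 ∧ Real.sin θ = 0) := by
  rintro ⟨h1, h2⟩
  have := Real.sin_sq_add_cos_sq θ
  rw [h1, h2] at this; norm_num at this

lemma polar_exists {a b : ℝ} (h : ¬ (a = 0 ∧ b = 0)) :
    ∃ r θ : ℝ, 0 < r ∧ a = r * Real.cos θ ∧ b = r * Real.sin θ := by
  set z : ℂ := ⟨a, b⟩ with hz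
  have hz0 : z ≠ 0 := by
    intro h0; apply h
    constructor
    · exact congrArg Complex.re h0
    · exact congrArg Complex.im h0
  refine ⟨‖z‖, z.arg, norm_pos_iff.2 hz0, ?_, ?_⟩
  · rw [Complex.norm_mul_cos_arg]
  · rw [Complex.norm_mul_sin_arg]

lemma Frame.surj {L : Set E3} (hL : SC L) {t1 t2 ν x p : E3} (F : Frame t1 t2 ν)
    (hκ : ∀ q ∈ L, 0 < ⟪ν, q - x⟫_ℝ) (h : IsTouch L x p) : ∃ θ, p = pθ L x t1 t2 ν θ := by
  obtain ⟨a, ha, ht⟩ := h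
  obtain ⟨h1, h2⟩ := F.touch_eq hL hκ ha ht
  obtain ⟨r, θ, hr, e1, e2⟩ := polar_exists h1
  refine ⟨θ, ?_⟩
  rw [h2, e1, e2, pθ, ← tp_smul hL hκ (F.comb_ne (cs_ne θ)) hr]
  congr 1; module

lemma Frame.pθ_isTouch {L : Set E3} (hL : SC L) {t1 t2 ν x : E3} (F : Frame t1 t2 ν)
    (hκ : ∀ q ∈ L, 0 < ⟪ν, q - x⟫_ℝ) (θ : ℝ) : IsTouch L x (pθ L x t1 t2 ν θ) :=
  tp_isTouch hL hκ (F.comb_ne (cs_ne θ))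

lemma Frame.pθ_continuous {L : Set E3} (hL : SC L) {t1 t2 ν x : E3} (F : Frame t1 t2 ν)
    (hκ : ∀ q ∈ L, 0 < ⟪ν, q - x⟫_ℝ) : Continuous (pθ L x t1 t2 ν) := by
  rw [continuous_iff_continuousAt]
  intro θ
  apply tp_tendsto hL hκ (F.comb_ne (cs_ne θ)) tendsto_const_nhds tendsto_const_nhds
  exact Continuous.tendsto (by fun_prop) θ

lemma Frame.graze_connected {L : Set E3} (hL : SC L) {t1 t2 ν x : E3} (F : Frame t1 t2 ν)
    (hκ : ∀ q ∈ L, 0 < ⟪ν, q - x⟫_ℝ) :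
    IsPreconnected {p | IsTouch L x p} ∧ {p | IsTouch L x p}.Nontrivial := by
  have e : {p | IsTouch L x p} = Set.range (pθ L x t1 t2 ν) := by
    ext p; constructor
    · intro h; obtain ⟨θ, h⟩ := F.surj hL hκ h; exact ⟨θ, h.symm⟩
    · rintro ⟨θ, rfl⟩; exact F.pθ_isTouch hL hκ θ
  constructor
  · rw [e]; exact isPreconnected_range (F.pθ_continuous hL hκ)
  · rw [e]
    refine ⟨_, ⟨0, rfl⟩, _, ⟨Real.pi, rfl⟩, ?_⟩
    have := tp_ne hL hκ (F.comb_ne (cs_ne 0))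
    simpa [pθ] using this

lemma Frame.graze_accum {L : Set E3} (hL : SC L) {t1 t2 ν x p0 : E3} (F : Frame t1 t2 ν)
    (hκ : ∀ q ∈ L, 0 < ⟪ν, q - x⟫_ℝ) (h0 : IsTouch L x p0) :
    (𝓝[{p | IsTouch L x p ∧ p ≠ p0}] p0).NeBot := by
  rw [← mem_closure_iff_nhdsWithin_neBot, _root_.mem_closure_iff]
  intro U hU hp
  obtain ⟨hc, hn⟩ := F.graze_connected hL hκ
  obtain ⟨p1, h1, hne⟩ := hn.exists_ne p0
  obtain ⟨w, hw1, hw2, hw3⟩ := hc U ({p0}ᶜ) hU isOpen_compl_singleton (by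
    intro w hw
    by_cases h : w = p0
    · left; rw [h]; exact hp
    · right; exact h) ⟨p0, h0, hp⟩ ⟨p1, h1, hne⟩
  exact ⟨w, hw2, hw1, hw3⟩

lemma Setup.zeroK {K L : Set E3} {N : E3 → E3} {d : E3 → ℝ} (S : Setup K L N d) :
    (0 : E3) ∈ interior K := S.LK S.SL.zero_mem

lemma Setup.limit_plane {K L : Set E3} {N : E3 → E3} {d : E3 → ℝ} (S : Setup K L N d) {w0 M : E3}
    {e : ℝ} (hw : w0 ∈ frontier K)
    (hcl : w0 ∈ closure {z | ∀ p, IsTouch L z p → ⟪M, p⟫_ℝ = e}) :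
    ∀ p, IsTouch L w0 p → ⟪M, p⟫_ℝ = e := by
  intro p hp
  obtain ⟨ν, h1, -, hν⟩ := S.normal hw
  obtain ⟨t1, t2, F⟩ := exists_frame h1
  obtain ⟨θ, hθ⟩ := F.surj S.SL hν hp
  rw [mem_closure_iff_nhdsWithin_neBot] at hcl
  have hb := F.comb_ne (cs_ne θ)
  set β := Real.cos θ • t1 + Real.sin θ • t2
  have hid : Tendsto (fun z : E3 => z) (𝓝[{z | ∀ p, IsTouch L z p → ⟪M, p⟫_ℝ = e}] w0) (𝓝 w0) :=
    nhdsWithin_le_nhds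
  have ht := tp_tendsto S.SL hν hb hid tendsto_const_nhds tendsto_const_nhds
    (κs := fun _ => ν) (βs := fun _ => β)
  have hlim : Tendsto (fun z => ⟪M, tp L z ν β⟫_ℝ)
      (𝓝[{z | ∀ p, IsTouch L z p → ⟪M, p⟫_ℝ = e}] w0) (𝓝 ⟪M, tp L w0 ν β⟫_ℝ) :=
    tendsto_const_nhds.inner ht
  have heq : ∀ᶠ z in 𝓝[{z | ∀ p, IsTouch L z p → ⟪M, p⟫_ℝ = e}] w0, e = ⟪M, tp L z ν β⟫_ℝ := by
    filter_upwards [self_mem_nhdsWithin,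
      eventually_pos S.SL.comp hν hid (tendsto_const_nhds (x := ν))] with z hz hz2
    exact (hz _ (tp_isTouch S.SL hz2 hb)).symm
  have h3 := tendsto_nhds_unique (tendsto_const_nhds.congr' heq) hlim
  rw [hθ, pθ]
  exact h3.symm

lemma Setup.no_parallel {K L : Set E3} {N : E3 → E3} {d : E3 → ℝ} (S : Setup K L N d) {w0 M : E3}
    {e : ℝ} (hw : w0 ∈ frontier K) (hM : M ≠ 0)
    (h : ∀ p, IsTouch L w0 p → ⟪M, p⟫_ℝ = e) : ⟪M, w0⟫_ℝ ≠ 0 := by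
  intro h0
  obtain ⟨ν, h1, -, hν⟩ := S.normal hw
  have hn := n_of_plane (S.off hw hM h) h
  have := n_pos S.SL hν hn 0 S.SL.zero_mem
  rw [real_inner_smul_left, inner_sub_right, h0] at this
  simp at this

lemma radial {K : Set E3} (hK : Convex ℝ K) {p0 w0 : E3} (hp : p0 ∈ interior K)
    (hw : w0 ∈ frontier K) {ε : ℝ} (hε : 0 < ε) :
    ∀ᶠ u in 𝓝 w0, ∃ r : ℝ, 0 < r ∧ p0 + r • (u - p0) ∈ frontier K ∧
      dist (p0 + r • (u - p0)) w0 < ε := by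
  set D := ‖w0 - p0‖ with hD
  have hD0 : 0 ≤ D := norm_nonneg _
  obtain ⟨η, hη0, hη1, hη2⟩ : ∃ η : ℝ, 0 < η ∧ η ≤ 1/2 ∧ η * D ≤ ε / 2 := by
    refine ⟨min (1/2) (ε / (2 * (D + 1))), by positivity, min_le_left _ _, ?_⟩
    calc min (1/2) (ε / (2 * (D + 1))) * D ≤ (ε / (2 * (D + 1))) * D := by
          gcongr; exact min_le_right _ _
      _ ≤ (ε / (2 * (D + 1))) * (D + 1) := by gcongr; linarith
      _ = ε / 2 := by field_simp
  have hin : p0 + (1 - η) • (w0 - p0) ∈ interior K := by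
    have := hK.combo_interior_closure_mem_interior hp hw.1 (a := η) (b := 1 - η) hη0 (by linarith)
      (by ring)
    convert this using 1; module
  have hout : p0 + (1 + η) • (w0 - p0) ∉ closure K := by
    intro h
    apply hw.2
    have := hK.combo_interior_closure_mem_interior hp h (a := η / (1 + η)) (b := 1 / (1 + η))
      (by positivity) (by positivity) (by field_simp; ring)
    convert this using 1
    rw [smul_add, smul_smul, one_div, inv_mul_cancel₀ (by positivity), one_smul]
    have : η / (1 + η) + (1 + η)⁻¹ = 1 := by field_simp; ring
    rw [← add_assoc, ← add_smul, this]; simp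
  have c1 : Continuous fun u : E3 => p0 + (1 - η) • (u - p0) := by fun_prop
  have c2 : Continuous fun u : E3 => p0 + (1 + η) • (u - p0) := by fun_prop
  filter_upwards [c1.continuousAt.preimage_mem_nhds (isOpen_interior.mem_nhds hin),
    c2.continuousAt.preimage_mem_nhds (isClosed_closure.isOpen_compl.mem_nhds hout),
    Metric.ball_mem_nhds w0 (show 0 < ε / 4 by positivity)] with u h1 h2 h3
  obtain ⟨z, hz, hzf⟩ := hit_frontier h1 (P := p0 + (1 + η) • (u - p0))
    (fun h => h2 (subset_closure (interior_subset h)))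
  obtain ⟨a, b, ha, hb, hab, rfl⟩ := hz
  have e : a • (p0 + (1 - η) • (u - p0)) + b • (p0 + (1 + η) • (u - p0))
      = p0 + (1 + (b - a) * η) • (u - p0) := by
    have : a = 1 - b := by linarith
    rw [this]; module
  rw [e] at hzf
  have hba : |(b - a) * η| ≤ η := by
    rw [abs_mul, abs_of_pos hη0]
    have : |b - a| ≤ 1 := by rw [abs_le]; constructor <;> linarith
    nlinarith
  have hba' := abs_le.1 hba
  refine ⟨_, by linarith, hzf, ?_⟩
  rw [dist_eq_norm]
  have e2 : p0 + (1 + (b - a) * η) • (u - p0) - w0 =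
      ((b - a) * η) • (w0 - p0) + (1 + (b - a) * η) • (u - w0) := by module
  rw [e2]
  rw [Metric.mem_ball, dist_eq_norm] at h3
  calc _ ≤ ‖((b - a) * η) • (w0 - p0)‖ + ‖(1 + (b - a) * η) • (u - w0)‖ := norm_add_le _ _
    _ = |(b - a) * η| * D + |1 + (b - a) * η| * ‖u - w0‖ := by
      rw [norm_smul, norm_smul, Real.norm_eq_abs, Real.norm_eq_abs]
    _ ≤ η * D + 2 * ‖u - w0‖ := by
      have : |1 + (b - a) * η| ≤ 2 := by rw [abs_le]; constructor <;> linarith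
      gcongr
    _ < ε := by linarith

lemma exists_dual {a M : E3} (ha : a ≠ 0) (hM : ∀ c : ℝ, M ≠ c • a) (s t : ℝ) :
    ∃ v : E3, ⟪a, v⟫_ℝ = s ∧ ⟪M, v⟫_ℝ = t := by
  have haa : ⟪a, a⟫_ℝ ≠ 0 := by rwa [Ne, inner_self_eq_zero]
  set M' := M - (⟪a, M⟫_ℝ / ⟪a, a⟫_ℝ) • a with hM'
  have h0 : M' ≠ 0 := sub_ne_zero.2 (hM _)
  have h1 : ⟪a, M'⟫_ℝ = 0 := by rw [hM', inner_sub_right, inner_smul_right]; field_simp; ring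
  have hMM : ⟪M', M'⟫_ℝ ≠ 0 := by rwa [Ne, inner_self_eq_zero]
  have h2 : ⟪M, M'⟫_ℝ = ⟪M', M'⟫_ℝ := by
    have : M = M' + (⟪a, M⟫_ℝ / ⟪a, a⟫_ℝ) • a := by rw [hM']; abel
    nth_rw 1 [this]
    rw [inner_add_left, real_inner_smul_left, h1]; ring
  refine ⟨(s / ⟪a, a⟫_ℝ) • a + ((t - (s / ⟪a, a⟫_ℝ) * ⟪M, a⟫_ℝ) / ⟪M', M'⟫_ℝ) • M', ?_, ?_⟩
  · rw [inner_add_right, inner_smul_right, inner_smul_right, h1]; field_simp; ring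
  · rw [inner_add_right, inner_smul_right, inner_smul_right, h2]; field_simp; ring

/-- Two planes through three noncollinear touching points agree. -/
lemma plane_agree {L : Set E3} (hL : SC L) {z N0 M p1 p2 p3 : E3} {d0 e : ℝ} (hN0 : N0 ≠ 0)
    (h1 : IsTouch L z p1) (h2 : IsTouch L z p2)
    (h3 : IsTouch L z p3) (h12 : p1 ≠ p2) (h13 : p1 ≠ p3) (h23 : p2 ≠ p3)
    (a1 : ⟪N0, p1⟫_ℝ = d0) (a2 : ⟪N0, p2⟫_ℝ = d0) (a3 : ⟪N0, p3⟫_ℝ = d0)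
    (b1 : ⟪M, p1⟫_ℝ = e) (b2 : ⟪M, p2⟫_ℝ = e) (b3 : ⟪M, p3⟫_ℝ = e) :
    ∃ c : ℝ, M = c • N0 ∧ e = c * d0 := by
  have hli : LinearIndependent ℝ ![p2 - p1, p3 - p1] := by
    apply linInd_pair (sub_ne_zero.2 h12.symm)
    intro t ht
    exact not_collinear hL.strict h1.mem h2.mem h3.mem h1.not_interior h2.not_interior
      h3.not_interior h12 h13 h23 t ht
  obtain ⟨c, hc⟩ := perp_unique (v := N0) (w := M) hli hN0
    (by rw [inner_sub_right, a1, a2, sub_self]) (by rw [inner_sub_right, a1, a3, sub_self])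
    (by rw [inner_sub_right, b1, b2, sub_self]) (by rw [inner_sub_right, b1, b3, sub_self])
  refine ⟨c, hc, ?_⟩
  rw [← b1, ← a1, hc, real_inner_smul_left]

lemma shift_support {L : Set E3} (hL : SC L) {x y κ a M : E3} {e s : ℝ}
    (hκ : ∀ q ∈ L, 0 < ⟪κ, q - y⟫_ℝ) (hδ : e - ⟪M, y⟫_ℝ ≠ 0)
    (hM : ∀ p, IsTouch L y p → ⟪M, p⟫_ℝ = e) (ha : ∀ q ∈ L, 0 ≤ ⟪a, q - x⟫_ℝ)
    (hs : s * (e - ⟪M, y⟫_ℝ) = ⟪a, y - x⟫_ℝ) :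
    ∀ q ∈ L, 0 ≤ ⟪a, q - x⟫_ℝ + s * (⟪M, q⟫_ℝ - e) := by
  intro q hq
  have hn := n_of_plane hδ hM
  have hpos := n_pos hL hκ hn q hq
  have hmem := ha _ (proj_mem hL hκ hn hq)
  set μ := ⟪(e - ⟪M, y⟫_ℝ)⁻¹ • M, q - y⟫_ℝ with hμ
  have h1 : ⟪M, q⟫_ℝ - ⟪M, y⟫_ℝ = μ * (e - ⟪M, y⟫_ℝ) := by
    rw [hμ, real_inner_smul_left, inner_sub_right]; field_simp
  have h2 : ⟪a, y + (1 / μ) • (q - y) - x⟫_ℝ = ⟪a, y - x⟫_ℝ + (1 / μ) * ⟪a, q - y⟫_ℝ := by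
    simp only [inner_sub_right, inner_smul_right, inner_add_right]; ring
  rw [h2] at hmem
  have h3 : 0 ≤ μ * (⟪a, y - x⟫_ℝ + (1 / μ) * ⟪a, q - y⟫_ℝ) := mul_nonneg hpos.le hmem
  have h4 : μ * (⟪a, y - x⟫_ℝ + (1 / μ) * ⟪a, q - y⟫_ℝ) = μ * ⟪a, y - x⟫_ℝ + ⟪a, q - y⟫_ℝ := by
    field_simp
  rw [h4] at h3
  have h5 : ⟪a, q - x⟫_ℝ = ⟪a, q - y⟫_ℝ + ⟪a, y - x⟫_ℝ := by
    rw [← inner_add_right]; congr 1; abel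
  have h6 : s * (⟪M, q⟫_ℝ - e) = μ * ⟪a, y - x⟫_ℝ - ⟪a, y - x⟫_ℝ := by
    rw [← hs]
    have : ⟪M, q⟫_ℝ - e = μ * (e - ⟪M, y⟫_ℝ) - (e - ⟪M, y⟫_ℝ) := by linarith
    rw [this]; ring
  rw [h5, h6]; linarith

lemma comb_touch {L : Set E3} (hL : SC L) {x a M z p : E3} {e s : ℝ} (ha : a ≠ 0)
    (ht : Touch L x a p) (hMp : ⟪M, p⟫_ℝ = e)
    (hy : ∀ q ∈ L, 0 ≤ ⟪a, q - x⟫_ℝ + s * (⟪M, q⟫_ℝ - e))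
    (hz : ⟪a, z - x⟫_ℝ * (⟪a, z - x⟫_ℝ + s * (⟪M, z⟫_ℝ - e)) < 0) : IsTouch L z p := by
  set X := ⟪a, z - x⟫_ℝ with hX
  set Y := X + s * (⟪M, z⟫_ℝ - e) with hY
  have hX0 : X ≠ 0 := by rintro h; rw [h] at hz; simp at hz
  have hY0 : Y ≠ 0 := by rintro h; rw [h] at hz; simp at hz
  have hcomb : |Y| * X + |X| * Y = 0 := by
    rcases lt_or_gt_of_ne hX0 with h | h
    · have : 0 < Y := by by_contra hc; push Not at hc; nlinarith
      rw [abs_of_neg h, abs_of_pos this]; ring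
    · have : Y < 0 := by by_contra hc; push Not at hc; nlinarith
      rw [abs_of_pos h, abs_of_neg this]; ring
  have key : ∀ q, ⟪|Y| • a + |X| • (a + s • M), q - z⟫_ℝ =
      |Y| * ⟪a, q - x⟫_ℝ + |X| * (⟪a, q - x⟫_ℝ + s * (⟪M, q⟫_ℝ - e)) := by
    intro q
    have e1 : ⟪|Y| • a + |X| • (a + s • M), q - z⟫_ℝ =
      (|Y| * ⟪a, q - x⟫_ℝ + |X| * (⟪a, q - x⟫_ℝ + s * (⟪M, q⟫_ℝ - e)))
       - (|Y| * X + |X| * Y) := by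
      rw [hY]
      have : q - z = (q - x) - (z - x) := by abel
      rw [this]
      simp only [inner_add_left, real_inner_smul_left]
      rw [inner_sub_right a, ← hX]
      have : ⟪M, q - x - (z - x)⟫_ℝ = ⟪M, q⟫_ℝ - ⟪M, z⟫_ℝ := by
        rw [← inner_sub_right]; congr 1; abel
      rw [this]; ring
    rw [e1, hcomb, sub_zero]
  refine ⟨|Y| • a + |X| • (a + s • M), ?_, ht.1, ?_, ?_⟩
  · intro h0
    have h1 := key 0
    rw [h0, inner_zero_left] at h1
    have h2 := inner_pos_of_interior ha ht.2.2 hL.zero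
    have h3 := hy 0 hL.zero_mem
    have h4 : 0 < |Y| := abs_pos.2 hY0
    have h5 : 0 < |X| := abs_pos.2 hX0
    have := mul_pos h4 h2
    have := mul_nonneg h5.le h3
    linarith
  · rw [key, ht.2.1, hMp]; ring
  · intro q hq
    rw [key]
    have := mul_nonneg (abs_nonneg Y) (ht.2.2 q hq)
    have := mul_nonneg (abs_nonneg X) (hy q hq)
    linarith

/-- Near `p0` on the graze there are support functionals converging to one at `p0`, which give
that every point `z` with `A_x(z) A_y(z) < 0` has its graze in the same plane. -/
lemma Setup.spread {K L : Set E3} {N : E3 → E3} {d : E3 → ℝ} (S : Setup K L N d) {x y p0 : E3}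
    (hx : x ∈ frontier K) (hy : y ∈ frontier K)
    (hyp : ∀ p, IsTouch L y p → ⟪N x, p⟫_ℝ = d x) (hp0 : IsTouch L x p0) :
    ∃ a : E3, a ≠ 0 ∧ Touch L x a p0 ∧ ∀ s : ℝ, s * (d x - ⟪N x, y⟫_ℝ) = ⟪a, y - x⟫_ℝ →
      ∀ z ∈ frontier K, ⟪a, z - x⟫_ℝ * (⟪a, z - x⟫_ℝ + s * (⟪N x, z⟫_ℝ - d x)) < 0 →
        ∀ p, IsTouch L z p → ⟪N x, p⟫_ℝ = d x := by
  obtain ⟨ν, hν1, -, hν⟩ := S.normal hx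
  obtain ⟨ν', -, -, hν'⟩ := S.normal hy
  obtain ⟨t1, t2, F⟩ := exists_frame hν1
  have hacc := F.graze_accum S.SL hν hp0
  set U := Ultrafilter.of (𝓝[{p | IsTouch L x p ∧ p ≠ p0}] p0) with hU
  have hUle : (U : Filter E3) ≤ 𝓝[{p | IsTouch L x p ∧ p ≠ p0}] p0 := Ultrafilter.of_le _
  have hUp : Tendsto (fun p : E3 => p) U (𝓝 p0) := hUle.trans nhdsWithin_le_nhds
  have hUT : ∀ᶠ p in (U : Filter E3), IsTouch L x p ∧ p ≠ p0 := hUle self_mem_nhdsWithin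
  have hex : ∀ p : E3, ∃ a : E3, ‖a‖ = 1 ∧ (IsTouch L x p → Touch L x a p) := by
    intro p
    by_cases h : IsTouch L x p
    · obtain ⟨a, ha, ht⟩ := h
      exact ⟨(‖a‖⁻¹) • a, normalize_norm ha, fun _ => touch_smul (by positivity) ht⟩
    · exact ⟨ν, hν1, fun h' => absurd h' h⟩
  choose a ha1 hat using hex
  obtain ⟨a0, ha0, hlim⟩ := (isCompact_sphere (0 : E3) 1).ultrafilter_le_nhds (U.map a) (by
    rw [le_principal_iff]
    exact Filter.Eventually.of_forall (f := (U : Filter E3)) (p := fun p => a p ∈ sphere (0 : E3) 1)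
      fun p => by simp [ha1 p])
  have hlim : Tendsto a U (𝓝 a0) := hlim
  have ha0n : a0 ≠ 0 := by
    rintro rfl
    simp at ha0
  have ht0 : Touch L x a0 p0 := by
    refine ⟨hp0.mem, ?_, ?_⟩
    · have h1 : Tendsto (fun p => ⟪a p, p - x⟫_ℝ) U (𝓝 ⟪a0, p0 - x⟫_ℝ) :=
        hlim.inner (hUp.sub tendsto_const_nhds)
      refine tendsto_nhds_unique h1 (tendsto_const_nhds.congr' ?_)
      filter_upwards [hUT] with p hp
      exact (hat p hp.1).2.1.symm
    · intro q hq
      have h1 : Tendsto (fun p => ⟪a p, q - x⟫_ℝ) U (𝓝 ⟪a0, q - x⟫_ℝ) :=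
        hlim.inner tendsto_const_nhds
      exact ge_of_tendsto h1 (hUT.mono fun p hp => (hat p hp.1).2.2 q hq)
  refine ⟨a0, ha0n, ht0, ?_⟩
  intro s hs z hz hneg
  set M := N x with hM
  have hM0 : M ≠ 0 := S.N0 x hx
  have hδ := S.off hy hM0 hyp
  have hss : ∀ p, ⟪a p, y - x⟫_ℝ / (d x - ⟪M, y⟫_ℝ) * (d x - ⟪M, y⟫_ℝ) = ⟪a p, y - x⟫_ℝ := by
    intro p; field_simp
  have hs0 : s = ⟪a0, y - x⟫_ℝ / (d x - ⟪M, y⟫_ℝ) := by rw [← hs]; field_simp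
  have hTz : ∀ᶠ p in (U : Filter E3), IsTouch L z p := by
    have hA : Tendsto (fun p => ⟪a p, z - x⟫_ℝ) U (𝓝 ⟪a0, z - x⟫_ℝ) := hlim.inner tendsto_const_nhds
    have hB : Tendsto (fun p => ⟪a p, y - x⟫_ℝ) U (𝓝 ⟪a0, y - x⟫_ℝ) := hlim.inner tendsto_const_nhds
    have hC := hA.mul (hA.add ((hB.div_const (d x - ⟪M, y⟫_ℝ)).mul_const (⟪M, z⟫_ℝ - d x)))
    rw [← hs0] at hC
    filter_upwards [hUT, hC.eventually (gt_mem_nhds hneg)] with p hp hp2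
    exact comb_touch S.SL (norm_ne_zero_iff.1 (by rw [ha1 p]; norm_num)) (hat p hp.1)
      (S.pl x hx p hp.1) (shift_support S.SL hν' hδ hyp (hat p hp.1).2.2 (hss p)) hp2
  have hTz0 : IsTouch L z p0 :=
    comb_touch S.SL ha0n ht0 (S.pl x hx p0 hp0) (shift_support S.SL hν' hδ hyp ht0.2.2 hs) hneg
  obtain ⟨p1, hp1, hp1'⟩ := (hTz.and hUT).exists
  have hne1 : ∀ᶠ p in (U : Filter E3), p ≠ p1 :=
    hUp.eventually (isOpen_ne.mem_nhds hp1'.2.symm)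
  obtain ⟨p2, ⟨hp2, hp2'⟩, hp21⟩ := ((hTz.and hUT).and hne1).exists
  obtain ⟨c, hc1, hc2⟩ := plane_agree S.SL (S.N0 z hz) hTz0 hp1 hp2 hp1'.2.symm hp2'.2.symm hp21.symm
    (S.pl z hz _ hTz0) (S.pl z hz _ hp1) (S.pl z hz _ hp2)
    (S.pl x hx p0 hp0) (S.pl x hx _ hp1'.1) (S.pl x hx _ hp2'.1)
  intro p hp
  rw [hM, hc1, real_inner_smul_left, S.pl z hz p hp, ← hc2]

lemma Setup.inj {K L : Set E3} {N : E3 → E3} {d : E3 → ℝ} (S : Setup K L N d) {x y κ : E3}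
    (hx : x ∈ frontier K) (hy : y ∈ frontier K) (hxy : x ≠ y)
    (hκ : ∀ q ∈ L, 0 < ⟪κ, q - x⟫_ℝ) (hk : ⟪κ, y - x⟫_ℝ = 0)
    (hyp : ∀ p, IsTouch L y p → ⟪N x, p⟫_ℝ = d x) : False := by
  have hκ0 := pos_ne_zero S.SL hκ
  have hκn : 0 < ‖κ‖ := norm_pos_iff.2 hκ0
  have hyx : y - x ≠ 0 := sub_ne_zero.2 hxy.symm
  obtain ⟨t2, F⟩ := frame_of_two (normalize_norm hyx) (normalize_norm hκ0)
    (by rw [real_inner_smul_left, inner_smul_right, real_inner_comm, hk]; ring)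
  set ν := (‖κ‖⁻¹) • κ with hν
  set t1 := (‖y - x‖⁻¹) • (y - x) with ht1
  have hνp : ∀ q ∈ L, 0 < ⟪ν, q - x⟫_ℝ := by
    intro q hq; rw [hν, real_inner_smul_left]; exact mul_pos (by positivity) (hκ q hq)
  -- choose p0
  obtain ⟨hcon, hnt⟩ := F.graze_connected S.SL hνp
  have hinf := hcon.infinite_of_nontrivial hnt
  obtain ⟨p0, hp0, hp0'⟩ := hinf.exists_notMem_finite
    (Set.toFinite {tp L x ν t2, tp L x ν (-t2)})
  simp only [mem_insert_iff, mem_singleton_iff, not_or] at hp0'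
  have hp0 : IsTouch L x p0 := hp0
  obtain ⟨a, ha, hta, hspread⟩ := S.spread hx hy hyp hp0
  have hay : ⟪a, y - x⟫_ℝ ≠ 0 := by
    intro h0
    obtain ⟨h1, h2⟩ := F.touch_eq S.SL hνp ha hta
    have h3 : ⟪t1, a⟫_ℝ = 0 := by rw [ht1, real_inner_smul_left, real_inner_comm, h0, mul_zero]
    rw [h3, zero_smul, zero_add] at h2
    have h4 : ⟪t2, a⟫_ℝ ≠ 0 := fun h => h1 ⟨h3, h⟩
    have hb : ∀ c : ℝ, t2 ≠ c • ν := by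
      intro c
      have := F.comb_ne (a := 0) (b := 1) (by norm_num) c
      simpa using this
    have hb' : ∀ c : ℝ, -t2 ≠ c • ν := by
      intro c
      have := F.comb_ne (a := 0) (b := -1) (by norm_num) c
      simpa using this
    rcases lt_or_gt_of_ne h4 with h5 | h5
    · apply hp0'.2
      rw [h2, ← tp_smul S.SL hνp hb' (s := -⟪t2, a⟫_ℝ) (by linarith)]
      congr 1; module
    · apply hp0'.1
      rw [h2, tp_smul S.SL hνp hb h5]
  set M := N x with hM
  set e := d x with he
  have hM0 : M ≠ 0 := S.N0 x hx
  have hδ := S.off hy hM0 hyp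
  have hδx : e - ⟪M, x⟫_ℝ ≠ 0 := S.off hx hM0 (S.pl x hx)
  set s := ⟪a, y - x⟫_ℝ / (e - ⟪M, y⟫_ℝ) with hsdef
  have hs : s * (e - ⟪M, y⟫_ℝ) = ⟪a, y - x⟫_ℝ := by rw [hsdef]; field_simp
  have hs0 : s ≠ 0 := by intro h; rw [h, zero_mul] at hs; exact hay hs.symm
  have hspr := hspread s hs
  -- the point P
  have hn := n_of_plane hδx (S.pl x hx)
  set n := (e - ⟪M, x⟫_ℝ)⁻¹ • M with hndef
  have hnp := n_pos S.SL hνp hn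
  have hMp0 := S.pl x hx p0 hp0
  set τ := ⟪n, 0 - x⟫_ℝ with hτ
  have hτ0 : 0 < τ := hnp 0 S.SL.zero_mem
  have hMn : ∀ v : E3, ⟪M, v⟫_ℝ = (e - ⟪M, x⟫_ℝ) * ⟪n, v⟫_ℝ := by
    intro v; rw [hndef, real_inner_smul_left]; field_simp
  set P := x + τ • (p0 - x) with hP
  have hMP : ⟪M, P⟫_ℝ = 0 := by
    rw [hMn, hP, inner_add_right, inner_smul_right, hn p0 hp0, hτ, zero_sub, inner_neg_right]
    ring
  have hPint : P ∈ interior K := by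
    by_contra hc
    obtain ⟨w, hw, hwf⟩ := hit_frontier S.zeroK hc
    obtain ⟨b, σ, hb, hσ, hbσ, rfl⟩ := hw
    rw [smul_zero, zero_add] at hwf
    have hden : 0 < b + σ * τ := by
      rcases eq_or_lt_of_le hσ with h | h
      · rw [← h] at hbσ ⊢; linarith
      · have := mul_pos h hτ0; linarith
    apply S.af x hx _ hwf (by rw [inner_smul_right, ← hM, hMP, mul_zero]) (1 / (b + σ * τ))
    have hmem := S.SL.conv S.SL.zero_mem hp0.mem (a := b / (b + σ * τ)) (b := σ * τ / (b + σ * τ))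
      (by positivity) (by positivity) (by field_simp)
    convert hmem using 1
    have e1 : σ • P - x = b • (0 - x) + (σ * τ) • (p0 - x) := by
      rw [hP]
      have : b = 1 - σ := by linarith
      rw [this]; module
    rw [e1]
    have e2 : x + (1 / (b + σ * τ)) • (b • (0 - x) + (σ * τ) • (p0 - x)) =
      (1 - (1 / (b + σ * τ)) * (b + σ * τ)) • x + ((1 / (b + σ * τ)) * (σ * τ)) • p0 := by module
    rw [e2]
    have e3 : (1 / (b + σ * τ)) * (b + σ * τ) = 1 := by field_simp
    rw [e3, smul_zero, sub_self, zero_smul]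
    congr 2; ring
  obtain ⟨f, hf0, hfM, hfa⟩ := exists_perp M a
  obtain ⟨R, hR⟩ : ∃ R : ℝ, P + R • f ∉ interior K := by
    by_contra hc
    push Not at hc
    obtain ⟨B, hB⟩ := S.Kc.isBounded.exists_norm_le
    have hfn : 0 < ‖f‖ := norm_pos_iff.2 hf0
    have h1 := hB _ (interior_subset (hc ((B + ‖P‖ + 1) / ‖f‖)))
    have hB0 : 0 ≤ B := (norm_nonneg _).trans (hB _ (interior_subset hPint))
    have h2 : ‖((B + ‖P‖ + 1) / ‖f‖) • f‖ = B + ‖P‖ + 1 := by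
      rw [norm_smul, Real.norm_of_nonneg (by positivity)]; field_simp
    have h3 : ‖((B + ‖P‖ + 1) / ‖f‖) • f‖ ≤ ‖P + ((B + ‖P‖ + 1) / ‖f‖) • f‖ + ‖P‖ := by
      have : ((B + ‖P‖ + 1) / ‖f‖) • f = (P + ((B + ‖P‖ + 1) / ‖f‖) • f) - P := by abel
      nth_rw 1 [this]
      exact norm_sub_le _ _
    linarith
  obtain ⟨w0, hw0, hw0f⟩ := hit_frontier hPint hR
  obtain ⟨b1, b2, -, -, hb12, hw0e⟩ := hw0
  have hw0e : w0 = P + (b2 * R) • f := by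
    rw [← hw0e]
    have : b1 = 1 - b2 := by linarith
    rw [this]; module
  have hMw0 : ⟪M, w0⟫_ℝ = 0 := by rw [hw0e, inner_add_right, inner_smul_right, hMP, hfM]; ring
  have haw0 : ⟪a, w0 - x⟫_ℝ = 0 := by
    have : w0 - x = τ • (p0 - x) + (b2 * R) • f := by rw [hw0e, hP]; abel
    rw [this, inner_add_right, inner_smul_right, inner_smul_right, hfa, hta.2.1]; ring
  -- direction v
  have hMa : ∀ c : ℝ, M ≠ c • a := by
    intro c hc
    have h1 := hn p0 hp0
    rw [hndef, real_inner_smul_left, hc, real_inner_smul_left a (p0 - x), hta.2.1] at h1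
    simp at h1
  obtain ⟨v, hv1, hv2⟩ := exists_dual ha hMa (-1) (2 / s)
  have hsv : s * ⟪M, v⟫_ℝ = 2 := by rw [hv2]; field_simp
  have hvals : ∀ t : ℝ, ⟪a, (w0 + t • v) - x⟫_ℝ = -t ∧
      ⟪a, (w0 + t • v) - x⟫_ℝ + s * (⟪M, w0 + t • v⟫_ℝ - e) = t - s * e := by
    intro t
    have h1 : ⟪a, (w0 + t • v) - x⟫_ℝ = -t := by
      have : (w0 + t • v) - x = (w0 - x) + t • v := by abel
      rw [this, inner_add_right, inner_smul_right, haw0, hv1]; ring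
    refine ⟨h1, ?_⟩
    rw [h1, inner_add_right, inner_smul_right, hMw0]
    have : s * (0 + t * ⟪M, v⟫_ℝ - e) = t * (s * ⟪M, v⟫_ℝ) - s * e := by ring
    rw [this, hsv]; ring
  obtain ⟨σ, hσ⟩ : ∃ σ : ℝ, ∀ r : ℝ, 0 < r → (-(r * σ)) * (r * σ - s * e) < 0 := by
    rcases le_total 0 (-(s * e)) with h | h
    · refine ⟨1, fun r hr => ?_⟩
      have : 0 < r * 1 - s * e := by linarith
      nlinarith
    · refine ⟨-1, fun r hr => ?_⟩
      have : r * (-1) - s * e < 0 := by linarith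
      nlinarith
  -- w0 is a limit of points with graze in the same plane
  have hcl : w0 ∈ closure {z | ∀ p, IsTouch L z p → ⟪M, p⟫_ℝ = e} := by
    rw [Metric.mem_closure_iff]
    intro ε hε
    have hrad := radial S.Kv (S.LK hp0.mem) hw0f hε
    have hpath : Tendsto (fun r : ℝ => w0 + (r * σ) • v) (𝓝[>] 0) (𝓝 w0) := by
      have : Continuous fun r : ℝ => w0 + (r * σ) • v := by fun_prop
      have h2 := this.tendsto 0
      simp only [zero_mul, zero_smul, add_zero] at h2
      exact h2.mono_left nhdsWithin_le_nhds
    obtain ⟨r, ⟨l, hl, hzf, hzd⟩, hr⟩ := ((hpath.eventually hrad).and self_mem_nhdsWithin).exists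
    have hr : 0 < r := hr
    refine ⟨_, ?_, by rw [dist_comm]; exact hzd⟩
    apply hspr _ hzf
    obtain ⟨h1, h2⟩ := hvals (r * σ)
    set u := w0 + (r * σ) • v with hu
    have e1 : ⟪a, p0 + l • (u - p0) - x⟫_ℝ = l * ⟪a, u - x⟫_ℝ := by
      have : p0 + l • (u - p0) - x = (1 - l) • (p0 - x) + l • (u - x) := by module
      rw [this, inner_add_right, inner_smul_right, inner_smul_right, hta.2.1]; ring
    have e2 : ⟪M, p0 + l • (u - p0)⟫_ℝ - e = l * (⟪M, u⟫_ℝ - e) := by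
      rw [inner_add_right, inner_smul_right, inner_sub_right, hMp0]; ring
    rw [e1, e2]
    have h3 := hσ r hr
    rw [← h1, ← h2] at h3
    have : l * ⟪a, u - x⟫_ℝ * (l * ⟪a, u - x⟫_ℝ + s * (l * (⟪M, u⟫_ℝ - e))) =
      l ^ 2 * (⟪a, u - x⟫_ℝ * (⟪a, u - x⟫_ℝ + s * (⟪M, u⟫_ℝ - e))) := by ring
    rw [this]
    have hl2 : 0 < l ^ 2 := by positivity
    nlinarith
  exact S.no_parallel hw0f hM0 (S.limit_plane hw0f hcl) hMw0

/-- A boundary point with an inner tangent ball. -/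
structure Good (K : Set E3) (x ν : E3) (r : ℝ) : Prop where
  fr : x ∈ frontier K
  un : ‖ν‖ = 1
  rp : 0 < r
  nor : ∀ q ∈ K, 0 ≤ ⟪ν, q - x⟫_ℝ
  ball : closedBall (x + r • ν) r ⊆ K

lemma Setup.good_dense {K L : Set E3} {N : E3 → E3} {d : E3 → ℝ} (S : Setup K L N d) {x0 : E3}
    (hx : x0 ∈ frontier K) {ε : ℝ} (hε : 0 < ε) :
    ∃ x ν r, Good K x ν r ∧ dist x x0 < ε := by
  have hcl : x0 ∈ closure (interior K) := by
    rw [S.Kv.closure_interior_eq_closure_of_nonempty_interior ⟨0, S.zeroK⟩]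
    exact hx.1
  obtain ⟨c, hc, hcd⟩ := Metric.mem_closure_iff.1 hcl (ε / 2) (by positivity)
  have hfc : IsCompact (frontier K) := S.Kc.of_isClosed_subset isClosed_frontier
    S.Kc.isClosed.frontier_subset
  obtain ⟨x, hxf, hmin⟩ := hfc.exists_isMinOn ⟨x0, hx⟩ (f := fun y => dist c y) (by fun_prop)
  have hmin : ∀ y ∈ frontier K, dist c x ≤ dist c y := fun y hy => hmin hy
  set r := dist c x with hr
  have hr0 : 0 < r := by
    rw [hr, dist_pos]; rintro rfl; exact hxf.2 hc
  have hball : ball c r ⊆ interior K := by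
    intro y hy
    by_contra hni
    obtain ⟨w, hw, hwf⟩ := hit_frontier hc hni
    have h1 := hmin w hwf
    have h2 := (convex_ball c r).segment_subset (mem_ball_self hr0) hy hw
    rw [mem_ball, dist_comm] at h2
    linarith
  have hcb : closedBall c r ⊆ K := by
    rw [← closure_ball c hr0.ne']
    exact closure_minimal (hball.trans interior_subset) S.Kc.isClosed
  obtain ⟨ν, hν, hnor, -⟩ := S.normal hxf
  have hcν : c = x + r • ν := by
    have h1 := hnor (c - r • ν) (hcb (by
      rw [mem_closedBall, dist_eq_norm]
      have : c - r • ν - c = -(r • ν) := by abel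
      rw [this, norm_neg, norm_smul, hν, Real.norm_of_nonneg hr0.le, mul_one]))
    have h2 : ⟪ν, c - r • ν - x⟫_ℝ = ⟪ν, c - x⟫_ℝ - r := by
      have : c - r • ν - x = (c - x) - r • ν := by abel
      rw [this, inner_sub_right, inner_smul_right, real_inner_self_eq_norm_sq, hν]; ring
    rw [h2] at h1
    have h3 : ‖c - x - r • ν‖ ^ 2 ≤ 0 := by
      rw [norm_sub_sq_real, inner_smul_right, norm_smul, hν, Real.norm_of_nonneg hr0.le, ← dist_eq_norm,
        ← hr, real_inner_comm]
      nlinarith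
    have h4 : ‖c - x - r • ν‖ = 0 := by
      have := norm_nonneg (c - x - r • ν)
      nlinarith
    have h5 := norm_eq_zero.1 h4
    rw [sub_eq_zero] at h5
    rw [← h5]; abel
  refine ⟨x, ν, r, ⟨hxf, hν, hr0, hnor, ?_⟩, ?_⟩
  · rw [← hcν]; exact hcb
  · have h1 := hmin x0 hx
    have h2 := dist_triangle x c x0
    rw [dist_comm x c] at h2
    rw [dist_comm] at hcd
    linarith

lemma Good.near {K : Set E3} (hK : IsClosed K) {x ν w : E3} {r : ℝ} (G : Good K x ν r)
    (hw : ⟪ν, w⟫_ℝ = 0) (hwr : ‖w‖ ≤ r) :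
    ∃ δ : ℝ, 0 ≤ δ ∧ δ ≤ ‖w‖ ^ 2 / r ∧ x + w + δ • ν ∈ frontier K := by
  have hr := G.rp
  have hν0 : ν ≠ 0 := norm_ne_zero_iff.1 (by rw [G.un]; norm_num)
  have hout : x + w ∉ interior K := by
    intro h
    have := inner_pos_of_interior hν0 G.nor h
    have e : x + w - x = w := by abel
    rw [e, hw] at this
    exact lt_irrefl _ this
  have hin : x + w + (‖w‖ ^ 2 / r) • ν ∈ K := by
    apply G.ball
    rw [mem_closedBall, dist_eq_norm]
    have e : x + w + (‖w‖ ^ 2 / r) • ν - (x + r • ν) = w + (‖w‖ ^ 2 / r - r) • ν := by module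
    rw [e]
    apply abs_le_of_sq_le_sq' _ hr.le |>.2
    rw [norm_add_sq_real, inner_smul_right, real_inner_comm, hw, norm_smul, G.un, Real.norm_eq_abs, mul_one,
      sq_abs]
    have h1 : ‖w‖ ^ 2 ≤ r ^ 2 := by gcongr
    have h2 : (‖w‖ ^ 2 / r) * r = ‖w‖ ^ 2 := by field_simp
    have h3 : (‖w‖ ^ 2 / r) ≤ r := by rw [div_le_iff₀ hr]; nlinarith
    have h4 : 0 ≤ ‖w‖ ^ 2 / r := by positivity
    nlinarith
  by_cases hi : x + w + (‖w‖ ^ 2 / r) • ν ∈ interior K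
  · obtain ⟨z, hz, hzf⟩ := hit_frontier hi hout
    obtain ⟨a, b, ha, hb, hab, rfl⟩ := hz
    refine ⟨a * (‖w‖ ^ 2 / r), by positivity, ?_, ?_⟩
    · have : a ≤ 1 := by linarith
      have h4 : 0 ≤ ‖w‖ ^ 2 / r := by positivity
      nlinarith
    · convert hzf using 1
      have : b = 1 - a := by linarith
      rw [this]; module
  · exact ⟨_, by positivity, le_rfl, subset_closure hin, hi⟩

/-- The normal of the plane of the graze from `y`, normalised relative to `x`. -/
def mv (N : E3 → E3) (d : E3 → ℝ) (x y : E3) : E3 := (d y - ⟪N y, x⟫_ℝ)⁻¹ • N y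

lemma Setup.eventually_off {K L : Set E3} {N : E3 → E3} {d : E3 → ℝ} (S : Setup K L N d) {x : E3}
    (hx : x ∈ frontier K) : ∀ᶠ y in 𝓝[frontier K] x, d y - ⟪N y, x⟫_ℝ ≠ 0 := by
  by_contra hc
  have hc : ∃ᶠ y in 𝓝[frontier K] x, d y - ⟪N y, x⟫_ℝ = 0 := by
    intro h; apply hc; exact h
  rw [frequently_iff_neBot] at hc
  set U := Ultrafilter.of (𝓝[frontier K] x ⊓ 𝓟 {y | d y - ⟪N y, x⟫_ℝ = 0}) with hU
  have hUle : (U : Filter E3) ≤ 𝓝[frontier K] x ⊓ 𝓟 {y | d y - ⟪N y, x⟫_ℝ = 0} := Ultrafilter.of_le _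
  have hU1 : (U : Filter E3) ≤ 𝓝[frontier K] x := hUle.trans inf_le_left
  have hU2 : ∀ᶠ y in (U : Filter E3), d y - ⟪N y, x⟫_ℝ = 0 := by
    have : (U : Filter E3) ≤ 𝓟 {y | d y - ⟪N y, x⟫_ℝ = 0} := hUle.trans inf_le_right
    exact this (mem_principal_self _)
  have hUf : ∀ᶠ y in (U : Filter E3), y ∈ frontier K := hU1 self_mem_nhdsWithin
  have hUx : Tendsto (fun y : E3 => y) U (𝓝 x) := hU1.trans nhdsWithin_le_nhds
  obtain ⟨a0, ha0, hlim⟩ := (isCompact_sphere (0 : E3) 1).ultrafilter_le_nhds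
    (U.map fun y => (‖N y‖⁻¹) • N y) (by
    rw [le_principal_iff]
    show ∀ᶠ y in (U : Filter E3), (‖N y‖⁻¹) • N y ∈ sphere (0 : E3) 1
    filter_upwards [hUf] with y hy
    rw [mem_sphere_zero_iff_norm]
    exact normalize_norm (S.N0 y hy))
  have hlim : Tendsto (fun y => (‖N y‖⁻¹) • N y) U (𝓝 a0) := hlim
  obtain ⟨ν, h1, -, hν⟩ := S.normal hx
  obtain ⟨t1, t2, F⟩ := exists_frame h1
  have h0 : a0 = 0 := by
    apply graze_span S.SL hν
    intro p hp
    obtain ⟨θ, hθ⟩ := F.surj S.SL hν hp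
    have hb := F.comb_ne (cs_ne θ)
    have ht := tp_tendsto S.SL hν hb hUx tendsto_const_nhds tendsto_const_nhds
      (κs := fun _ => ν) (βs := fun _ => Real.cos θ • t1 + Real.sin θ • t2)
    have hl := Filter.Tendsto.inner (𝕜 := ℝ) hlim (ht.sub (tendsto_const_nhds (x := x)))
    rw [hθ, pθ]
    refine tendsto_nhds_unique hl (tendsto_const_nhds.congr' ?_)
    filter_upwards [hU2, hUf, eventually_pos S.SL.comp hν hUx (tendsto_const_nhds (x := ν))]
      with y h2 h3 h4
    rw [real_inner_smul_left, inner_sub_right, S.pl y h3 _ (tp_isTouch S.SL h4 hb), h2, mul_zero]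
  rw [h0] at ha0
  simp at ha0

lemma mv_touch {K L : Set E3} {N : E3 → E3} {d : E3 → ℝ} (S : Setup K L N d) {x y p : E3}
    (hy : y ∈ frontier K) (h : d y - ⟪N y, x⟫_ℝ ≠ 0) (hp : IsTouch L y p) :
    ⟪mv N d x y, p - x⟫_ℝ = 1 := by
  rw [mv, real_inner_smul_left, inner_sub_right, S.pl y hy p hp]
  field_simp

/-- Projection of `v` orthogonal to `τ`. -/
def prj (τ v : E3) : E3 := v - (⟪v, τ⟫_ℝ / ⟪τ, τ⟫_ℝ) • τ

lemma prj_inner {τ : E3} (v : E3) (h : τ ≠ 0) : ⟪prj τ v, τ⟫_ℝ = 0 := by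
  have : ⟪τ, τ⟫_ℝ ≠ 0 := by rwa [Ne, inner_self_eq_zero]
  rw [prj, inner_sub_left, real_inner_smul_left]; field_simp; ring

lemma prj_tendsto {ι : Type*} {l : Filter ι} {τs : ι → E3} {τ v : E3} (hτ : τ ≠ 0)
    (h : Tendsto τs l (𝓝 τ)) (hv : ⟪v, τ⟫_ℝ = 0) : Tendsto (fun i => prj (τs i) v) l (𝓝 v) := by
  have h0 : ⟪τ, τ⟫_ℝ ≠ 0 := by rwa [Ne, inner_self_eq_zero]
  have h1 : Tendsto (fun i => prj (τs i) v) l (𝓝 (prj τ v)) := by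
    unfold prj
    exact tendsto_const_nhds.sub ((((tendsto_const_nhds.inner h).div (h.inner h) h0)).smul h)
  convert h1 using 2
  rw [prj, hv]; simp

/-- Vectors orthogonal to the two generators touched by the planes through the direction `τ`. -/
def NN (L : Set E3) (x ν τ : E3) : Submodule ℝ E3 where
  carrier := {v | ∀ β : E3, ⟪β, ν⟫_ℝ = 0 → ⟪β, τ⟫_ℝ = 0 → β ≠ 0 → ⟪v, tp L x ν β - x⟫_ℝ = 0}
  zero_mem' := by intro β _ _ _; simp
  add_mem' := by
    intro a b ha hb β h1 h2 h3
    rw [inner_add_left, ha β h1 h2 h3, hb β h1 h2 h3, add_zero]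
  smul_mem' := by
    intro c a ha β h1 h2 h3
    rw [real_inner_smul_left, ha β h1 h2 h3, mul_zero]

lemma not_par_of_perp {β ν : E3} (hb : β ≠ 0) (h : ⟪β, ν⟫_ℝ = 0) : ∀ c : ℝ, β ≠ c • ν := by
  intro c hc
  have : ⟪β, β⟫_ℝ = 0 := by nth_rw 2 [hc]; rw [inner_smul_right, h, mul_zero]
  exact hb (inner_self_eq_zero.1 this)

lemma eventually_not_par {ι : Type*} {l : Filter ι} {βs κs : ι → E3} {β κ : E3} (hb : β ≠ 0)
    (hk : κ ≠ 0) (h : ⟪β, κ⟫_ℝ = 0) (hβ : Tendsto βs l (𝓝 β)) (hκ : Tendsto κs l (𝓝 κ)) :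
    ∀ᶠ i in l, ∀ c : ℝ, βs i ≠ c • κs i := by
  have h1 : Tendsto (fun i => ⟪βs i, βs i⟫_ℝ * ⟪κs i, κs i⟫_ℝ - ⟪βs i, κs i⟫_ℝ ^ 2) l
      (𝓝 (⟪β, β⟫_ℝ * ⟪κ, κ⟫_ℝ - ⟪β, κ⟫_ℝ ^ 2)) :=
    ((hβ.inner hβ).mul (hκ.inner hκ)).sub ((hβ.inner hκ).pow 2)
  have h2 : 0 < ⟪β, β⟫_ℝ * ⟪κ, κ⟫_ℝ - ⟪β, κ⟫_ℝ ^ 2 := by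
    rw [h, real_inner_self_eq_norm_sq, real_inner_self_eq_norm_sq]
    have := norm_pos_iff.2 hb
    have := norm_pos_iff.2 hk
    have : 0 < ‖β‖ ^ 2 * ‖κ‖ ^ 2 := by positivity
    linarith
  filter_upwards [h1.eventually (lt_mem_nhds h2)] with i hi c hc
  rw [hc] at hi
  simp only [real_inner_smul_left, inner_smul_right] at hi
  have : c * (c * ⟪κs i, κs i⟫_ℝ) * ⟪κs i, κs i⟫_ℝ - (c * ⟪κs i, κs i⟫_ℝ) ^ 2 = 0 := by ring
  linarith

/-- Differences of normalised normals: distinctness and limits. -/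
lemma Setup.diff_limit {K L : Set E3} {N : E3 → E3} {d : E3 → ℝ} (S : Setup K L N d)
    {x ν τ : E3} (hx : x ∈ frontier K) (hν : ∀ q ∈ L, 0 < ⟪ν, q - x⟫_ℝ)
    (hτ : τ ≠ 0) (hντ : ⟪ν, τ⟫_ℝ = 0) {ι : Type*} {l : Filter ι} {ys zs τs : ι → E3} {ε : ι → ℝ}
    (hyx : Tendsto ys l (𝓝 x)) (hzx : Tendsto zs l (𝓝 x)) (hyf : ∀ᶠ i in l, ys i ∈ frontier K)
    (hzf : ∀ᶠ i in l, zs i ∈ frontier K) (hε : ∀ᶠ i in l, ε i ≠ 0)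
    (hd : ∀ᶠ i in l, zs i - ys i = ε i • τs i) (hlim : Tendsto τs l (𝓝 τ)) :
    (∀ᶠ i in l, mv N d x (ys i) ≠ mv N d x (zs i)) ∧
    ∀ (c : ι → ℝ) (v : E3) [l.NeBot],
      Tendsto (fun i => c i • (mv N d x (ys i) - mv N d x (zs i))) l (𝓝 v) → v ∈ NN L x ν τ := by
  have hν0 := pos_ne_zero S.SL hν
  have hy' : ∀ᶠ i in l, d (ys i) - ⟪N (ys i), x⟫_ℝ ≠ 0 :=
    (tendsto_nhdsWithin_iff.2 ⟨hyx, hyf⟩).eventually (S.eventually_off hx)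
  have hz' : ∀ᶠ i in l, d (zs i) - ⟪N (zs i), x⟫_ℝ ≠ 0 :=
    (tendsto_nhdsWithin_iff.2 ⟨hzx, hzf⟩).eventually (S.eventually_off hx)
  have hτ0 : ∀ᶠ i in l, τs i ≠ 0 := hlim.eventually (isOpen_ne.mem_nhds hτ)
  have hκ := prj_tendsto (v := ν) hτ hlim hντ
  have hpos := eventually_pos S.SL.comp hν hyx hκ
  constructor
  · filter_upwards [hy', hz', hτ0, hpos, hε, hd, hyf, hzf] with i h1 h2 h3 h4 h5 h6 h7 h8 heq
    refine S.inj h7 h8 ?_ h4 ?_ ?_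
    · intro h
      rw [← h, sub_self] at h6
      exact smul_ne_zero h5 h3 h6.symm
    · rw [h6, inner_smul_right, prj_inner _ h3, mul_zero]
    · intro p hp
      have h9 := mv_touch S h8 h2 hp
      rw [← heq, mv, real_inner_smul_left, inner_sub_right, inv_mul_eq_div, div_eq_one_iff_eq h1] at h9
      linarith
  · intro c v _ hv β hβν hβτ hβ0
    have hβ := prj_tendsto (v := β) hτ hlim hβτ
    have htp := tp_tendsto S.SL hν (not_par_of_perp hβ0 hβν) hyx hκ hβ
    have hl := Filter.Tendsto.inner (𝕜 := ℝ) hv (htp.sub (tendsto_const_nhds (x := x)))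
    refine tendsto_nhds_unique hl (tendsto_const_nhds.congr' ?_)
    filter_upwards [hy', hz', hτ0, hpos, hd, hyf, hzf, eventually_not_par hβ0 hν0 hβν hβ hκ]
      with i h1 h2 h3 h4 h6 h7 h8 h9
    obtain ⟨m, hm⟩ := tp_spec S.SL h4 (prj (τs i) β)
    have hm' : Touch L (zs i) (prj (τs i) β - m • prj (τs i) ν)
        (tp L (ys i) (prj (τs i) ν) (prj (τs i) β)) := by
      have e : ∀ q, ⟪prj (τs i) β - m • prj (τs i) ν, q - zs i⟫_ℝ =
          ⟪prj (τs i) β - m • prj (τs i) ν, q - ys i⟫_ℝ := by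
        intro q
        have : q - zs i = (q - ys i) - ε i • τs i := by rw [← h6]; abel
        rw [this, inner_sub_right, inner_smul_right]
        have : ⟪prj (τs i) β - m • prj (τs i) ν, τs i⟫_ℝ = 0 := by
          rw [inner_sub_left, real_inner_smul_left, prj_inner _ h3, prj_inner _ h3]; ring
        rw [this]; ring
      refine ⟨hm.1, ?_, ?_⟩
      · rw [e]; exact hm.2.1
      · intro q hq; rw [e]; exact hm.2.2 q hq
    have hne := sub_ne_zero.2 (h9 m)
    rw [real_inner_smul_left, inner_sub_left, mv_touch S h7 h1 ⟨_, hne, hm⟩,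
      mv_touch S h8 h2 ⟨_, hne, hm'⟩]
    ring

lemma NN_closed {L : Set E3} (hL : SC L) {x ν τ v : E3} (hν : ∀ q ∈ L, 0 < ⟪ν, q - x⟫_ℝ)
    (hτ : τ ≠ 0) {ι : Type*} {l : Filter ι} [l.NeBot] {τs vs : ι → E3}
    (hν' : ∀ i, ⟪ν, τs i⟫_ℝ = 0)
    (h1 : Tendsto τs l (𝓝 τ)) (h2 : Tendsto vs l (𝓝 v)) (h : ∀ᶠ i in l, vs i ∈ NN L x ν (τs i)) :
    v ∈ NN L x ν τ := by
  intro β hβν hβτ hβ0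
  have hβ := prj_tendsto (v := β) hτ h1 hβτ
  have htp := tp_tendsto hL hν (not_par_of_perp hβ0 hβν) (tendsto_const_nhds (x := x))
    (tendsto_const_nhds (x := ν)) hβ
  have hl := Filter.Tendsto.inner (𝕜 := ℝ) h2 (htp.sub (tendsto_const_nhds (x := x)))
  refine tendsto_nhds_unique hl (tendsto_const_nhds.congr' ?_)
  filter_upwards [h, h1.eventually (isOpen_ne.mem_nhds hτ), hβ.eventually (isOpen_ne.mem_nhds hβ0)]
    with i h3 h4 h5
  refine (h3 _ ?_ (prj_inner _ h4) h5).symm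
  rw [prj, inner_sub_left, real_inner_smul_left, hβν, real_inner_comm ν (τs i), hν' i]; ring

lemma NN_smul {L : Set E3} {x ν τ v : E3} {c : ℝ} (hc : c ≠ 0) :
    v ∈ NN L x ν (c • τ) ↔ v ∈ NN L x ν τ := by
  constructor
  · intro h β h1 h2 h3
    exact h β h1 (by rw [inner_smul_right, h2, mul_zero]) h3
  · intro h β h1 h2 h3
    rw [inner_smul_right] at h2
    exact h β h1 ((mul_eq_zero.1 h2).resolve_left hc) h3

lemma NN_one_dim {L : Set E3} (hL : SC L) {x ν τ n v w : E3} (hν : ∀ q ∈ L, 0 < ⟪ν, q - x⟫_ℝ)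
    (hn : ∀ p, IsTouch L x p → ⟪n, p - x⟫_ℝ = 1) (hv : v ∈ NN L x ν τ) (hw : w ∈ NN L x ν τ)
    (hv0 : v ≠ 0) : ∃ c : ℝ, w = c • v := by
  obtain ⟨β, h0, h1, h2⟩ := exists_perp ν τ
  rw [real_inner_comm] at h1 h2
  have hβ := not_par_of_perp h0 h1
  have h1' : ⟪-β, ν⟫_ℝ = 0 := by rw [inner_neg_left, h1, neg_zero]
  have h2' : ⟪-β, τ⟫_ℝ = 0 := by rw [inner_neg_left, h2, neg_zero]
  have h0' : -β ≠ 0 := neg_ne_zero.2 h0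
  have hβ' := not_par_of_perp h0' h1'
  exact perp_unique (indep2 hn (tp_isTouch hL hν hβ) (tp_isTouch hL hν hβ') (tp_ne hL hν hβ)) hv0
    (hv β h1 h2 h0) (hv _ h1' h2' h0') (hw β h1 h2 h0) (hw _ h1' h2' h0')

lemma NN_disj {L : Set E3} (hL : SC L) {x ν τ τ' n β β' v : E3} (hν : ∀ q ∈ L, 0 < ⟪ν, q - x⟫_ℝ)
    (hn : ∀ p, IsTouch L x p → ⟪n, p - x⟫_ℝ = 1)
    (h0 : β ≠ 0) (h1 : ⟪β, ν⟫_ℝ = 0) (h2 : ⟪β, τ⟫_ℝ = 0)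
    (h0' : β' ≠ 0) (h1' : ⟪β', ν⟫_ℝ = 0) (h2' : ⟪β', τ'⟫_ℝ = 0)
    (hne : tp L x ν β' ≠ tp L x ν β) (hne' : tp L x ν β' ≠ tp L x ν (-β))
    (hv : v ∈ NN L x ν τ) (hv' : v ∈ NN L x ν τ') : v = 0 := by
  have hβ := not_par_of_perp h0 h1
  have g1' : ⟪-β, ν⟫_ℝ = 0 := by rw [inner_neg_left, h1, neg_zero]
  have g2' : ⟪-β, τ⟫_ℝ = 0 := by rw [inner_neg_left, h2, neg_zero]
  have g0' : -β ≠ 0 := neg_ne_zero.2 h0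
  have hβn := not_par_of_perp g0' g1'
  have hβ' := not_par_of_perp h0' h1'
  exact indep3 hL hn (tp_isTouch hL hν hβ) (tp_isTouch hL hν hβn) (tp_isTouch hL hν hβ')
    (tp_ne hL hν hβ) hne.symm hne'.symm (hv β h1 h2 h0) (hv _ g1' g2' g0') (hv' _ h1' h2' h0')

/-- Approach of a good point from a tangent direction. -/
lemma Good.approach {K : Set E3} (hK : IsClosed K) {x ν τ : E3} {r : ℝ} (G : Good K x ν r)
    (hτ : ⟪ν, τ⟫_ℝ = 0) : ∃ Y Gs : ℕ → E3, (∀ᶠ n in atTop, Y n ∈ frontier K) ∧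
      (∀ n, Y n - x = ((n : ℝ) + 1)⁻¹ • Gs n) ∧ Tendsto Gs atTop (𝓝 τ) := by
  have hr := G.rp
  have hε : Tendsto (fun n : ℕ => ((n : ℝ) + 1)⁻¹) atTop (𝓝 0) := by
    have := tendsto_one_div_add_atTop_nhds_zero_nat (𝕜 := ℝ)
    simpa using this
  have key : ∀ n : ℕ, ∃ δ : ℝ, 0 ≤ δ ∧ δ ≤ ‖((n : ℝ) + 1)⁻¹ • τ‖ ^ 2 / r ∧
      (‖((n : ℝ) + 1)⁻¹ • τ‖ ≤ r → x + ((n : ℝ) + 1)⁻¹ • τ + δ • ν ∈ frontier K) := by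
    intro n
    by_cases h : ‖((n : ℝ) + 1)⁻¹ • τ‖ ≤ r
    · obtain ⟨δ, h1, h2, h3⟩ := G.near hK (w := ((n : ℝ) + 1)⁻¹ • τ)
        (by rw [inner_smul_right, hτ, mul_zero]) h
      exact ⟨δ, h1, h2, fun _ => h3⟩
    · exact ⟨0, le_rfl, by positivity, fun h' => absurd h' h⟩
  choose δ h1 h2 h3 using key
  refine ⟨fun n => x + ((n : ℝ) + 1)⁻¹ • τ + δ n • ν, fun n => τ + (((n : ℝ) + 1) * δ n) • ν,
    ?_, ?_, ?_⟩
  · have : Tendsto (fun n : ℕ => ‖((n : ℝ) + 1)⁻¹ • τ‖) atTop (𝓝 0) := by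
      simpa using (hε.smul_const τ).norm
    filter_upwards [this.eventually (gt_mem_nhds hr)] with n hn
    exact h3 n hn.le
  · intro n
    have : ((n : ℝ) + 1)⁻¹ * (((n : ℝ) + 1) * δ n) = δ n := by
      have : (n : ℝ) + 1 ≠ 0 := by positivity
      field_simp
    rw [smul_add, smul_smul, this]; module
  · have hz : Tendsto (fun n : ℕ => ((n : ℝ) + 1) * δ n) atTop (𝓝 0) := by
      have hb : Tendsto (fun n : ℕ => ((n : ℝ) + 1)⁻¹ * (‖τ‖ ^ 2 / r)) atTop (𝓝 0) := by
        simpa using hε.mul_const (‖τ‖ ^ 2 / r)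
      refine tendsto_of_tendsto_of_tendsto_of_le_of_le tendsto_const_nhds hb ?_ ?_
      · intro n; have := h1 n; show 0 ≤ ((n : ℝ) + 1) * δ n; positivity
      · intro n
        show ((n : ℝ) + 1) * δ n ≤ ((n : ℝ) + 1)⁻¹ * (‖τ‖ ^ 2 / r)
        have h := h2 n
        have hp : 0 < (n : ℝ) + 1 := by positivity
        rw [norm_smul, norm_inv, Real.norm_of_nonneg hp.le] at h
        calc ((n : ℝ) + 1) * δ n ≤ ((n : ℝ) + 1) * ((((n : ℝ) + 1)⁻¹ * ‖τ‖) ^ 2 / r) := by gcongr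
          _ = ((n : ℝ) + 1)⁻¹ * (‖τ‖ ^ 2 / r) := by field_simp
    simpa using (tendsto_const_nhds (x := τ)).add (hz.smul_const ν)

lemma Setup.blowup {K L : Set E3} {N : E3 → E3} {d : E3 → ℝ} (S : Setup K L N d)
    {x ν : E3} {r : ℝ} (G : Good K x ν r) (hν : ∀ q ∈ L, 0 < ⟪ν, q - x⟫_ℝ)
    (T : Finset E3) (hT : ∀ τ ∈ T, ⟪ν, τ⟫_ℝ = 0) (h0 : (0 : E3) ∈ T) {τ0 : E3} (hτ0 : τ0 ∈ T)
    (hne : τ0 ≠ 0) :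
    ∃ u : E3 → E3, u 0 = 0 ∧ (∃ τ ∈ T, u τ ≠ 0) ∧
      ∀ τ ∈ T, ∀ τ' ∈ T, τ ≠ τ' → u τ - u τ' ∈ NN L x ν (τ' - τ) := by
  have hex : ∀ τ, ∃ Y Gs : ℕ → E3, τ ∈ T → ((∀ᶠ n in atTop, Y n ∈ frontier K) ∧
      (∀ n, Y n - x = ((n : ℝ) + 1)⁻¹ • Gs n) ∧ Tendsto Gs atTop (𝓝 τ)) := by
    intro τ
    by_cases h : τ ∈ T
    · obtain ⟨Y, Gs, h'⟩ := G.approach S.Kc.isClosed (hT τ h)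
      exact ⟨Y, Gs, fun _ => h'⟩
    · exact ⟨fun _ => 0, fun _ => 0, fun h' => absurd h' h⟩
  choose Y Gs hY using hex
  have hε : Tendsto (fun n : ℕ => ((n : ℝ) + 1)⁻¹) atTop (𝓝 0) := by
    have := tendsto_one_div_add_atTop_nhds_zero_nat (𝕜 := ℝ)
    simpa using this
  have hYx : ∀ τ ∈ T, Tendsto (Y τ) atTop (𝓝 x) := by
    intro τ h
    have h1 : Tendsto (fun n : ℕ => x + ((n : ℝ) + 1)⁻¹ • Gs τ n) atTop (𝓝 x) := by
      simpa using (tendsto_const_nhds (x := x)).add (hε.smul (hY τ h).2.2)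
    refine h1.congr fun n => ?_
    rw [← (hY τ h).2.1 n]; abel
  have hdl : ∀ τ ∈ T, ∀ τ' ∈ T, τ ≠ τ' → _ := fun τ h τ' h' hn =>
    S.diff_limit (τ := τ' - τ) (l := atTop) (ys := Y τ) (zs := Y τ') (τs := fun n => Gs τ' n - Gs τ n)
      (ε := fun n => ((n : ℝ) + 1)⁻¹) G.fr hν (sub_ne_zero.2 hn.symm)
      (by rw [inner_sub_right, hT τ h, hT τ' h', sub_zero]) (hYx τ h) (hYx τ' h') (hY τ h).1 (hY τ' h').1
      (Eventually.of_forall fun n => by positivity)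
      (Eventually.of_forall fun n => by
        rw [smul_sub, ← (hY τ h).2.1 n, ← (hY τ' h').2.1 n]; abel)
      ((hY τ' h').2.2.sub (hY τ h).2.2)
  set D : ℕ → E3 → E3 := fun n τ => mv N d x (Y τ n) - mv N d x (Y 0 n) with hD
  set m : ℕ → ℝ := fun n => ∑ τ ∈ T, ‖D n τ‖ with hm
  have hmD : ∀ n, ∀ τ ∈ T, ‖D n τ‖ ≤ m n := fun n τ h =>
    Finset.single_le_sum (f := fun τ => ‖D n τ‖) (fun _ _ => norm_nonneg _) h
  have hmpos : ∀ᶠ n in atTop, 0 < m n := by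
    filter_upwards [(hdl τ0 hτ0 0 h0 hne).1] with n hn
    exact lt_of_lt_of_le (norm_pos_iff.2 (sub_ne_zero.2 hn)) (hmD n τ0 hτ0)
  set U : Ultrafilter ℕ := Filter.hyperfilter ℕ with hU
  have hUle : (U : Filter ℕ) ≤ atTop := by
    rw [hU, ← Nat.cofinite_eq_atTop]; exact Filter.hyperfilter_le_cofinite
  have hlim : ∀ τ, ∃ v : E3, τ ∈ T → Tendsto (fun n => (m n)⁻¹ • D n τ) U (𝓝 v) := by
    intro τ
    by_cases h : τ ∈ T
    · obtain ⟨v, -, hv⟩ := (isCompact_closedBall (0 : E3) 1).ultrafilter_le_nhds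
        (U.map fun n => (m n)⁻¹ • D n τ) (by
          rw [le_principal_iff]
          refine Filter.Eventually.of_forall (f := (U : Filter ℕ))
            (p := fun n => (m n)⁻¹ • D n τ ∈ closedBall (0 : E3) 1) ?_
          intro n
          have hm0 : 0 ≤ m n := le_trans (norm_nonneg _) (hmD n τ h)
          rw [mem_closedBall_zero_iff, norm_smul, norm_inv, Real.norm_of_nonneg hm0, inv_mul_eq_div]
          exact div_le_one_of_le₀ (hmD n τ h) hm0)
      exact ⟨v, fun _ => hv⟩
    · exact ⟨0, fun h' => absurd h' h⟩
  choose u hu using hlim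
  refine ⟨u, ?_, ?_, ?_⟩
  · refine tendsto_nhds_unique (hu 0 h0) (tendsto_const_nhds.congr fun n => ?_)
    simp [hD]
  · by_contra hc
    push Not at hc
    have h1 : Tendsto (fun n => ∑ τ ∈ T, ‖(m n)⁻¹ • D n τ‖) U (𝓝 (∑ τ ∈ T, ‖u τ‖)) :=
      tendsto_finsetSum _ fun τ h => (hu τ h).norm
    have h2 : ∑ τ ∈ T, ‖u τ‖ = 0 := Finset.sum_eq_zero fun τ h => by rw [hc τ h, norm_zero]
    have h3 : Tendsto (fun n => ∑ τ ∈ T, ‖(m n)⁻¹ • D n τ‖) U (𝓝 1) := by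
      refine tendsto_const_nhds.congr' ?_
      filter_upwards [hUle hmpos] with n hn
      have hn : 0 < m n := hn
      simp only [norm_smul, norm_inv, Real.norm_of_nonneg hn.le]
      rw [← Finset.mul_sum]
      exact (inv_mul_cancel₀ hn.ne').symm
    rw [h2] at h1
    exact zero_ne_one (tendsto_nhds_unique h1 h3)
  · intro τ h τ' h' hn
    have h1 := S.diff_limit (τ := τ' - τ) (l := (U : Filter ℕ)) (ys := Y τ) (zs := Y τ')
      (τs := fun n => Gs τ' n - Gs τ n)
      (ε := fun n => ((n : ℝ) + 1)⁻¹) G.fr hν (sub_ne_zero.2 hn.symm)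
      (by rw [inner_sub_right, hT τ h, hT τ' h', sub_zero]) ((hYx τ h).mono_left hUle)
      ((hYx τ' h').mono_left hUle) (hUle (hY τ h).1) (hUle (hY τ' h').1)
      (Eventually.of_forall fun n => by positivity)
      (Eventually.of_forall fun n => by
        rw [smul_sub, ← (hY τ h).2.1 n, ← (hY τ' h').2.1 n]; abel)
      (((hY τ' h').2.2.sub (hY τ h).2.2).mono_left hUle)
    apply h1.2 (fun n => (m n)⁻¹)
    refine ((hu τ h).sub (hu τ' h')).congr fun n => ?_
    rw [← smul_sub]; congr 1; simp only [hD]; abel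

/-- The cell argument on a grid. -/
lemma cell_grid {A B C : Submodule ℝ E3} (hAB : ∀ v ∈ A, v ∈ B → v = 0)
    (hAC : ∀ v ∈ A, v ∈ C → v = 0) (hBC : ∀ v ∈ B, v ∈ C → v = 0) {M : ℕ} (hM : 1 ≤ M)
    {u : ℕ → ℕ → E3} (h0 : u 0 0 = 0)
    (hA : ∀ i j, i + 1 ≤ M → j ≤ M → u (i + 1) j - u i j ∈ A)
    (hB : ∀ i j, i ≤ M → j + 1 ≤ M → u i (j + 1) - u i j ∈ B)
    (hC : ∀ i j, i + 1 ≤ M → j + 1 ≤ M → u (i + 1) (j + 1) - u i j ∈ C) :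
    ∀ i j, i ≤ M → j ≤ M → u i j = (i : ℝ) • u 1 0 + (j : ℝ) • u 0 1 := by
  have cell : ∀ i j, i + 1 ≤ M → j + 1 ≤ M →
      u (i + 1) (j + 1) - u i (j + 1) = u (i + 1) j - u i j := by
    intro i j hi hj
    have h1 := A.sub_mem (hA i (j + 1) hi hj) (hA i j hi (by omega))
    have h2 := B.sub_mem (hB (i + 1) j hi hj) (hB i j (by omega) hj)
    have e : u (i + 1) (j + 1) - u (i + 1) j - (u i (j + 1) - u i j) =
      u (i + 1) (j + 1) - u i (j + 1) - (u (i + 1) j - u i j) := by abel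
    rw [e] at h2
    exact sub_eq_zero.1 (hAB _ h1 h2)
  have rowA : ∀ i j, i + 1 ≤ M → j ≤ M → u (i + 1) j - u i j = u (i + 1) 0 - u i 0 := by
    intro i j hi
    induction j with
    | zero => intro _; rfl
    | succ k ih => intro hk; rw [cell i k hi hk, ih (by omega)]
  have rowB : ∀ j i, i ≤ M → j + 1 ≤ M → u i (j + 1) - u i j = u 0 (j + 1) - u 0 j := by
    intro j i
    induction i with
    | zero => intros; rfl
    | succ k ih =>
      intro hk hj
      rw [← ih (by omega) hj]
      have := cell k j hk hj
      rw [sub_eq_sub_iff_add_eq_add] at this ⊢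
      rw [this]; abel
  have diag : ∀ i j, i + 1 ≤ M → j + 1 ≤ M →
      (u (i + 1) 0 - u i 0) + (u 0 (j + 1) - u 0 j) ∈ C := by
    intro i j hi hj
    have := hC i j hi hj
    rw [← rowA i (j + 1) hi hj, ← rowB j i (by omega) hj]
    convert this using 1; abel
  have cA : ∀ i, i + 1 ≤ M → u (i + 1) 0 - u i 0 = u 1 0 := by
    intro i hi
    have h1 := C.sub_mem (diag i 0 hi hM) (diag 0 0 hM hM)
    have h2 := A.sub_mem (hA i 0 hi (by omega)) (hA 0 0 hM (by omega))
    have e : u (i + 1) 0 - u i 0 + (u 0 (0 + 1) - u 0 0) - (u (0 + 1) 0 - u 0 0 + (u 0 (0 + 1) - u 0 0)) =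
      u (i + 1) 0 - u i 0 - (u (0 + 1) 0 - u 0 0) := by abel
    rw [e] at h1
    have := sub_eq_zero.1 (hAC _ h2 h1)
    rw [this, h0]; simp
  have cB : ∀ j, j + 1 ≤ M → u 0 (j + 1) - u 0 j = u 0 1 := by
    intro j hj
    have h1 := C.sub_mem (diag 0 j hM hj) (diag 0 0 hM hM)
    have h2 := B.sub_mem (hB 0 j (by omega) hj) (hB 0 0 (by omega) hM)
    have e : u (0 + 1) 0 - u 0 0 + (u 0 (j + 1) - u 0 j) - (u (0 + 1) 0 - u 0 0 + (u 0 (0 + 1) - u 0 0)) =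
      u 0 (j + 1) - u 0 j - (u 0 (0 + 1) - u 0 0) := by abel
    rw [e] at h1
    have := sub_eq_zero.1 (hBC _ h2 h1)
    rw [this, h0]; simp
  have col : ∀ j, j ≤ M → u 0 j = (j : ℝ) • u 0 1 := by
    intro j
    induction j with
    | zero => intro _; simp [h0]
    | succ k ih =>
      intro hk
      have := cB k hk
      rw [sub_eq_iff_eq_add, ih (by omega)] at this
      rw [this]; push_cast; module
  intro i j
  induction i with
  | zero => intro _ hj; rw [col j hj]; simp
  | succ k ih =>
    intro hk hj
    have h1 := rowA k j hk hj
    rw [cA k hk, sub_eq_iff_eq_add, ih (by omega) hj] at h1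
    rw [h1]; push_cast; module

lemma Setup.grid {K L : Set E3} {N : E3 → E3} {d : E3 → ℝ} (S : Setup K L N d)
    {x ν e1 e2 : E3} {r : ℝ} (G : Good K x ν r) (hν : ∀ q ∈ L, 0 < ⟪ν, q - x⟫_ℝ)
    (h1 : ⟪ν, e1⟫_ℝ = 0) (h2 : ⟪ν, e2⟫_ℝ = 0)
    (hli : ∀ s t : ℝ, s • e1 + t • e2 = 0 → s = 0 ∧ t = 0)
    (hAB : ∀ v ∈ NN L x ν e1, v ∈ NN L x ν e2 → v = 0)
    (hAC : ∀ v ∈ NN L x ν e1, v ∈ NN L x ν (e1 + e2) → v = 0)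
    (hBC : ∀ v ∈ NN L x ν e2, v ∈ NN L x ν (e1 + e2) → v = 0) {M : ℕ} (hM : 1 ≤ M) :
    ∃ α β : E3, α ∈ NN L x ν e1 ∧ β ∈ NN L x ν e2 ∧ α + β ∈ NN L x ν (e1 + e2) ∧ α ≠ 0 ∧ β ≠ 0 ∧
      ∀ p q : ℤ, p.natAbs ≤ M → q.natAbs ≤ M →
        (p : ℝ) • α + (q : ℝ) • β ∈ NN L x ν ((p : ℝ) • e1 + (q : ℝ) • e2) := by
  classical
  set g : ℕ × ℕ → E3 := fun w => (w.1 : ℝ) • e1 + (w.2 : ℝ) • e2 with hg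
  set T : Finset E3 := (Finset.range (M + 1) ×ˢ Finset.range (M + 1)).image g with hT
  have hmem : ∀ i j, i ≤ M → j ≤ M → g (i, j) ∈ T := by
    intro i j hi hj
    apply Finset.mem_image_of_mem
    rw [Finset.mem_product, Finset.mem_range, Finset.mem_range]
    exact ⟨by simp; omega, by simp; omega⟩
  have hgi : ∀ i j i' j' : ℕ, g (i, j) = g (i', j') → i = i' ∧ j = j' := by
    intro i j i' j' h
    have h3 : ((i : ℝ) - i') • e1 + ((j : ℝ) - j') • e2 = 0 := by
      have : (i : ℝ) • e1 + (j : ℝ) • e2 = (i' : ℝ) • e1 + (j' : ℝ) • e2 := h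
      rw [← sub_eq_zero] at this
      rw [← this]; module
    obtain ⟨h4, h5⟩ := hli _ _ h3
    constructor
    · exact_mod_cast sub_eq_zero.1 h4
    · exact_mod_cast sub_eq_zero.1 h5
  have hg0 : g (0, 0) = 0 := by simp [hg]
  obtain ⟨u, hu0, ⟨τ, hτ, hune⟩, hu⟩ := S.blowup G hν T (by
      intro τ hτ
      obtain ⟨w, -, rfl⟩ := Finset.mem_image.1 hτ
      simp [hg, inner_add_right, inner_smul_right, h1, h2])
    (by rw [← hg0]; exact hmem 0 0 (by omega) (by omega)) (hmem 1 0 hM (by omega)) (by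
      intro h
      rw [← hg0] at h
      have := (hgi _ _ _ _ h).1
      omega)
  have hneg : ∀ {v τ : E3}, v ∈ NN L x ν (-τ) → v ∈ NN L x ν τ := by
    intro v τ h
    have e : -τ = (-1 : ℝ) • τ := by module
    rw [e] at h
    exact (NN_smul (by norm_num)).1 h
  have hstep : ∀ i j i' j' : ℕ, i ≤ M → j ≤ M → i' ≤ M → j' ≤ M → ¬ (i = i' ∧ j = j') →
      u (g (i, j)) - u (g (i', j')) ∈
        NN L x ν (((i : ℝ) - i') • e1 + ((j : ℝ) - j') • e2) := by
    intro i j i' j' a b c d' hne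
    apply hneg
    have := hu _ (hmem i j a b) _ (hmem i' j' c d') (fun h => hne (hgi _ _ _ _ h))
    convert this using 2
    simp only [hg]; module
  have hgrid := cell_grid hAB hAC hBC hM (u := fun i j => u (g (i, j))) (by simp only [hg0, hu0])
    (by
      intro i j hi hj
      have := hstep (i + 1) j i j hi hj (by omega) hj (by omega)
      convert this using 2; push_cast; module)
    (by
      intro i j hi hj
      have := hstep i (j + 1) i j hi hj hi (by omega) (by omega)
      convert this using 2; push_cast; module)
    (by
      intro i j hi hj
      have := hstep (i + 1) (j + 1) i j hi hj (by omega) (by omega) (by omega)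
      convert this using 2; push_cast; module)
  set α := u (g (1, 0)) with hα
  set β := u (g (0, 1)) with hβ
  have hlin : ∀ p q : ℤ, p.natAbs ≤ M → q.natAbs ≤ M →
        (p : ℝ) • α + (q : ℝ) • β ∈ NN L x ν ((p : ℝ) • e1 + (q : ℝ) • e2) := by
    intro p q hp hq
    by_cases h0 : p = 0 ∧ q = 0
    · rw [h0.1, h0.2]; simp
    have a1 : ((p.toNat : ℝ) - ((-p).toNat : ℝ)) = p := by
      have : ((p.toNat : ℤ) - ((-p).toNat : ℤ)) = p := by omega
      exact_mod_cast this
    have a2 : ((q.toNat : ℝ) - ((-q).toNat : ℝ)) = q := by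
      have : ((q.toNat : ℤ) - ((-q).toNat : ℤ)) = q := by omega
      exact_mod_cast this
    have := hstep p.toNat q.toNat (-p).toNat (-q).toNat (by omega) (by omega) (by omega) (by omega)
      (by omega)
    rw [hgrid _ _ (by omega) (by omega), hgrid (-p).toNat (-q).toNat (by omega) (by omega), a1, a2] at this
    convert this using 1
    rw [← a1, ← a2]; module
  have hαm : α ∈ NN L x ν e1 := by simpa using hlin 1 0 (by simpa using hM) (by simp)
  have hβm : β ∈ NN L x ν e2 := by simpa using hlin 0 1 (by simp) (by simpa using hM)
  have hcm : α + β ∈ NN L x ν (e1 + e2) := by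
    simpa using hlin 1 1 (by simpa using hM) (by simpa using hM)
  have hno : ¬ (α = 0 ∧ β = 0) := by
    rintro ⟨ha, hb⟩
    apply hune
    obtain ⟨⟨i, j⟩, hw, rfl⟩ := Finset.mem_image.1 hτ
    rw [Finset.mem_product, Finset.mem_range, Finset.mem_range] at hw
    rw [hgrid i j (by have := hw.1; simp at this; omega) (by have := hw.2; simp at this; omega), ha, hb]
    simp
  refine ⟨α, β, hαm, hβm, hcm, ?_, ?_, hlin⟩
  · intro ha
    rw [ha, zero_add] at hcm
    exact hno ⟨ha, hBC _ hβm hcm⟩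
  · intro hb
    rw [hb, add_zero] at hcm
    exact hno ⟨hAC _ hαm hcm, hb⟩

lemma floor_lim (s : ℝ) : Tendsto (fun k : ℕ => ((k : ℝ) + 1)⁻¹ * (⌊s * ((k : ℝ) + 1)⌋ : ℝ)) atTop (𝓝 s) := by
  have hε : Tendsto (fun n : ℕ => ((n : ℝ) + 1)⁻¹) atTop (𝓝 0) := by
    have := tendsto_one_div_add_atTop_nhds_zero_nat (𝕜 := ℝ)
    simpa using this
  have hlow : Tendsto (fun n : ℕ => s - ((n : ℝ) + 1)⁻¹) atTop (𝓝 s) := by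
    simpa using (tendsto_const_nhds (x := s)).sub hε
  refine tendsto_of_tendsto_of_tendsto_of_le_of_le hlow tendsto_const_nhds ?_ ?_
  · intro n
    have hp : 0 < (n : ℝ) + 1 := by positivity
    have := Int.sub_one_lt_floor (s * ((n : ℝ) + 1))
    show s - ((n : ℝ) + 1)⁻¹ ≤ ((n : ℝ) + 1)⁻¹ * (⌊s * ((n : ℝ) + 1)⌋ : ℝ)
    rw [inv_mul_eq_div, le_div_iff₀ hp, sub_mul, inv_mul_cancel₀ hp.ne']
    exact this.le
  · intro n
    have hp : 0 < (n : ℝ) + 1 := by positivity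
    show ((n : ℝ) + 1)⁻¹ * (⌊s * ((n : ℝ) + 1)⌋ : ℝ) ≤ s
    rw [inv_mul_eq_div, div_le_iff₀ hp]
    exact Int.floor_le _

lemma Setup.linear {K L : Set E3} {N : E3 → E3} {d : E3 → ℝ} (S : Setup K L N d)
    {x ν e1 e2 : E3} {r : ℝ} (G : Good K x ν r) (hν : ∀ q ∈ L, 0 < ⟪ν, q - x⟫_ℝ)
    (h1 : ⟪ν, e1⟫_ℝ = 0) (h2 : ⟪ν, e2⟫_ℝ = 0)
    (hli : ∀ s t : ℝ, s • e1 + t • e2 = 0 → s = 0 ∧ t = 0)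
    (hAB : ∀ v ∈ NN L x ν e1, v ∈ NN L x ν e2 → v = 0)
    (hAC : ∀ v ∈ NN L x ν e1, v ∈ NN L x ν (e1 + e2) → v = 0)
    (hBC : ∀ v ∈ NN L x ν e2, v ∈ NN L x ν (e1 + e2) → v = 0) :
    ∃ α β : E3, (∀ s t : ℝ, s • α + t • β = 0 → s = 0 ∧ t = 0) ∧
      ∀ s t : ℝ, s • α + t • β ∈ NN L x ν (s • e1 + t • e2) := by
  obtain ⟨n, hn⟩ := S.exists_n G.fr
  obtain ⟨α, β, hα, hβ, hc, hα0, hβ0, -⟩ := S.grid G hν h1 h2 hli hAB hAC hBC le_rfl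
  have hintg : ∀ p q : ℤ, (p : ℝ) • α + (q : ℝ) • β ∈ NN L x ν ((p : ℝ) • e1 + (q : ℝ) • e2) := by
    intro p q
    obtain ⟨α', β', hα', hβ', hc', hα0', hβ0', hl⟩ := S.grid G hν h1 h2 hli hAB hAC hBC
      (M := p.natAbs + q.natAbs + 1) (by omega)
    obtain ⟨c, e⟩ := NN_one_dim S.SL hν hn hα' hα hα0'
    obtain ⟨c', e'⟩ := NN_one_dim S.SL hν hn hβ' hβ hβ0'
    have hcc : c = c' := by
      have a1 := Submodule.sub_mem _ hc (Submodule.smul_mem _ c hc')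
      have a2 : α + β - c • (α' + β') = (c' - c) • β' := by rw [e, e']; module
      rw [a2] at a1
      have a3 := hBC _ (Submodule.smul_mem _ _ hβ') a1
      have := (smul_eq_zero.1 a3).resolve_right hβ0'
      linarith
    have := Submodule.smul_mem _ c (hl p q (by omega) (by omega))
    rw [e, e', ← hcc]
    convert this using 1; module
  refine ⟨α, β, ?_, ?_⟩
  · intro s t h
    have a1 : s • α ∈ NN L x ν e2 := by
      rw [eq_neg_of_add_eq_zero_left h]
      exact Submodule.neg_mem _ (Submodule.smul_mem _ _ hβ)
    have a2 := hAB _ (Submodule.smul_mem _ s hα) a1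
    have a3 := (smul_eq_zero.1 a2).resolve_right hα0
    rw [a3, zero_smul, zero_add] at h
    exact ⟨a3, (smul_eq_zero.1 h).resolve_right hβ0⟩
  · intro s t
    by_cases h0 : s • e1 + t • e2 = 0
    · obtain ⟨a, b⟩ := hli s t h0
      rw [a, b]; simp
    refine NN_closed S.SL hν h0 (l := atTop)
      (τs := fun k : ℕ => (((k : ℝ) + 1)⁻¹ * (⌊s * ((k : ℝ) + 1)⌋ : ℝ)) • e1 +
        (((k : ℝ) + 1)⁻¹ * (⌊t * ((k : ℝ) + 1)⌋ : ℝ)) • e2)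
      (vs := fun k : ℕ => (((k : ℝ) + 1)⁻¹ * (⌊s * ((k : ℝ) + 1)⌋ : ℝ)) • α +
        (((k : ℝ) + 1)⁻¹ * (⌊t * ((k : ℝ) + 1)⌋ : ℝ)) • β) ?_ ?_ ?_ ?_
    · intro i
      simp only [inner_add_right, inner_smul_right, h1, h2]; ring
    · exact ((floor_lim s).smul_const _).add ((floor_lim t).smul_const _)
    · exact ((floor_lim s).smul_const _).add ((floor_lim t).smul_const _)
    · refine Eventually.of_forall fun k => ?_
      have hk : ((k : ℝ) + 1)⁻¹ ≠ 0 := by positivity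
      simp only [mul_smul, ← smul_add]
      rw [NN_smul hk]
      exact Submodule.smul_mem _ _ (hintg _ _)

lemma Setup.exists_dirs {K L : Set E3} {N : E3 → E3} {d : E3 → ℝ} (S : Setup K L N d)
    {x ν t1 t2 : E3} (hx : x ∈ frontier K) (F : Frame t1 t2 ν) (hν : ∀ q ∈ L, 0 < ⟪ν, q - x⟫_ℝ) :
    ∃ A B C : ℝ, A ≠ 0 ∧ B ≠ 0 ∧
      (∀ v ∈ NN L x ν (A • t2), v ∈ NN L x ν (B • t1 + C • t2) → v = 0) ∧
      (∀ v ∈ NN L x ν (A • t2), v ∈ NN L x ν (A • t2 + (B • t1 + C • t2)) → v = 0) ∧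
      (∀ v ∈ NN L x ν (B • t1 + C • t2), v ∈ NN L x ν (A • t2 + (B • t1 + C • t2)) → v = 0) := by
  obtain ⟨n, hn⟩ := S.exists_n hx
  obtain ⟨hcon, hnt⟩ := F.graze_connected S.SL hν
  have hinf := hcon.infinite_of_nontrivial hnt
  set b : ℝ → E3 := fun θ => Real.cos θ • t1 + Real.sin θ • t2 with hb
  have hbne : ∀ θ, b θ ≠ 0 := fun θ => by simpa using F.comb_ne (cs_ne θ) 0
  have hbν : ∀ θ, ⟪b θ, ν⟫_ℝ = 0 := fun θ => by
    simp [hb, inner_add_left, real_inner_smul_left, F.h13, F.h23]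
  have hbτ : ∀ θ (c : ℝ), ⟪b θ, c • (-Real.sin θ • t1 + Real.cos θ • t2)⟫_ℝ = 0 := fun θ c => by
    simp only [hb, inner_add_left, real_inner_smul_left, inner_add_right, inner_smul_right, F.s1, F.s2, F.h12,
      F.h21]; ring
  have hnp : ∀ θ, ∀ c : ℝ, b θ ≠ c • ν := fun θ => not_par_of_perp (hbne θ) (hbν θ)
  have hnp' : ∀ θ, ∀ c : ℝ, -b θ ≠ c • ν := fun θ =>
    not_par_of_perp (neg_ne_zero.2 (hbne θ)) (by rw [inner_neg_left, hbν, neg_zero])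
  -- parallel directions share chords
  have hpar : ∀ (θ θ' c : ℝ), c ≠ 0 → b θ' = c • b θ →
      tp L x ν (b θ') = tp L x ν (b θ) ∨ tp L x ν (b θ') = tp L x ν (-b θ) := by
    intro θ θ' c hc h
    rcases lt_or_gt_of_ne hc with h0 | h0
    · right
      rw [h, ← tp_smul S.SL hν (hnp' θ) (s := -c) (by linarith)]
      congr 1; module
    · left; rw [h, tp_smul S.SL hν (hnp θ) h0]
  obtain ⟨p2, hp2, hp2n⟩ := (hinf.sdiff (Set.toFinite {tp L x ν (b 0), tp L x ν (-b 0)})).nonempty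
  obtain ⟨θ2, rfl⟩ := F.surj S.SL hν hp2
  obtain ⟨p3, hp3, hp3n⟩ := (hinf.sdiff (Set.toFinite {tp L x ν (b 0), tp L x ν (-b 0),
    tp L x ν (b θ2), tp L x ν (-b θ2)})).nonempty
  obtain ⟨θ3, rfl⟩ := F.surj S.SL hν hp3
  simp only [mem_insert_iff, mem_singleton_iff, not_or] at hp2n hp3n
  change ¬ tp L x ν (b θ2) = _ ∧ ¬ tp L x ν (b θ2) = _ at hp2n
  change ¬ tp L x ν (b θ3) = _ ∧ ¬ tp L x ν (b θ3) = _ ∧ ¬ tp L x ν (b θ3) = _ ∧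
    ¬ tp L x ν (b θ3) = _ at hp3n
  have hs : ∀ θ, (¬ (tp L x ν (b θ) = tp L x ν (b 0)) ∧ ¬ (tp L x ν (b θ) = tp L x ν (-b 0))) →
      Real.sin θ ≠ 0 := by
    intro θ h hs
    have hc : Real.cos θ ≠ 0 := fun hc => cs_ne θ ⟨hc, hs⟩
    rcases hpar 0 θ _ hc (by simp [hb, hs]) with h' | h'
    · exact h.1 h'
    · exact h.2 h'
  have hs2 := hs θ2 hp2n
  have hs3 := hs θ3 ⟨hp3n.1, hp3n.2.1⟩
  set κ := Real.sin θ3 / Real.sin θ2 with hκ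
  have hκ0 : κ ≠ 0 := div_ne_zero hs3 hs2
  have hκs : κ * Real.sin θ2 = Real.sin θ3 := by rw [hκ]; field_simp
  have hA : Real.cos θ3 - κ * Real.cos θ2 ≠ 0 := by
    intro h
    rcases hpar θ2 θ3 κ hκ0 (by
      have : Real.cos θ3 = κ * Real.cos θ2 := by linarith
      simp only [hb, ← hκs, this]; module) with h' | h'
    · exact hp3n.2.2.1 h'
    · exact hp3n.2.2.2 h'
  have e2 : (-(κ * Real.sin θ2)) • t1 + (κ * Real.cos θ2) • t2 =
    κ • (-Real.sin θ2 • t1 + Real.cos θ2 • t2) := by module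
  have e3 : (Real.cos θ3 - κ * Real.cos θ2) • t2 +
      ((-(κ * Real.sin θ2)) • t1 + (κ * Real.cos θ2) • t2) =
      (1 : ℝ) • (-Real.sin θ3 • t1 + Real.cos θ3 • t2) := by
    rw [← hκs]; module
  have e1 : (Real.cos θ3 - κ * Real.cos θ2) • t2 =
    (Real.cos θ3 - κ * Real.cos θ2) • (-Real.sin 0 • t1 + Real.cos 0 • t2) := by simp
  refine ⟨Real.cos θ3 - κ * Real.cos θ2, -(κ * Real.sin θ2), κ * Real.cos θ2, hA,
    neg_ne_zero.2 (mul_ne_zero hκ0 hs2), ?_, ?_, ?_⟩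
  · intro v hv hv'
    refine NN_disj S.SL hν hn (hbne 0) (hbν 0) ?_ (hbne θ2) (hbν θ2) ?_ hp2n.1 hp2n.2 hv hv'
    · rw [e1]; exact hbτ _ _
    · rw [e2]; exact hbτ _ _
  · intro v hv hv'
    refine NN_disj S.SL hν hn (hbne 0) (hbν 0) ?_ (hbne θ3) (hbν θ3) ?_ hp3n.1 hp3n.2.1 hv hv'
    · rw [e1]; exact hbτ _ _
    · rw [e3]; exact hbτ _ _
  · intro v hv hv'
    refine NN_disj S.SL hν hn (hbne θ2) (hbν θ2) ?_ (hbne θ3) (hbν θ3) ?_ hp3n.2.2.1 hp3n.2.2.2 hv hv'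
    · rw [e2]; exact hbτ _ _
    · rw [e3]; exact hbτ _ _

/-- The key linear relation at good points. -/
lemma Setup.key {K L : Set E3} {N : E3 → E3} {d : E3 → ℝ} (S : Setup K L N d)
    {x ν t1 t2 : E3} {r : ℝ} (G : Good K x ν r) (F : Frame t1 t2 ν)
    (hν : ∀ q ∈ L, 0 < ⟪ν, q - x⟫_ℝ) :
    ∃ α β : E3, (∀ s t : ℝ, s • α + t • β = 0 → s = 0 ∧ t = 0) ∧
      ∀ θ : ℝ, ⟪-Real.sin θ • α + Real.cos θ • β, pθ L x t1 t2 ν θ - x⟫_ℝ = 0 := by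
  obtain ⟨A, B, C, hA, hB, hd1, hd2, hd3⟩ := S.exists_dirs G.fr F hν
  obtain ⟨α, β, hli, h⟩ := S.linear G hν (e1 := A • t2) (e2 := B • t1 + C • t2)
    (by rw [inner_smul_right, F.h32, mul_zero])
    (by rw [inner_add_right, inner_smul_right, inner_smul_right, F.h31, F.h32]; ring)
    (by
      intro s t h0
      have e : s • A • t2 + t • (B • t1 + C • t2) = (t * B) • t1 + (s * A + t * C) • t2 := by module
      rw [e] at h0
      by_contra hc
      refine F.comb_ne (a := t * B) (b := s * A + t * C) ?_ 0 (by rw [h0]; simp)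
      rintro ⟨h1, h2⟩
      have ht := (mul_eq_zero.1 h1).resolve_right hB
      rw [ht, zero_mul, add_zero] at h2
      exact hc ⟨(mul_eq_zero.1 h2).resolve_right hA, ht⟩) hd1 hd2 hd3
  refine ⟨(-(C / (A * B))) • α + B⁻¹ • β, A⁻¹ • α, ?_, ?_⟩
  · intro s t h0
    have e : s • ((-(C / (A * B))) • α + B⁻¹ • β) + t • A⁻¹ • α =
      (t * A⁻¹ - s * (C / (A * B))) • α + (s * B⁻¹) • β := by module
    rw [e] at h0
    obtain ⟨h1, h2⟩ := hli _ _ h0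
    have hs := (mul_eq_zero.1 h2).resolve_right (inv_ne_zero hB)
    rw [hs, zero_mul, sub_zero] at h1
    exact ⟨hs, (mul_eq_zero.1 h1).resolve_right (inv_ne_zero hA)⟩
  · intro θ
    have h1 := h (Real.cos θ * A⁻¹ + Real.sin θ * (C / (A * B))) (-Real.sin θ * B⁻¹)
    have e1 : (Real.cos θ * A⁻¹ + Real.sin θ * (C / (A * B))) • A • t2 +
        (-Real.sin θ * B⁻¹) • (B • t1 + C • t2) = -Real.sin θ • t1 + Real.cos θ • t2 := by
      match_scalars <;> field_simp <;> ring
    rw [e1] at h1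
    have e2 : -Real.sin θ • ((-(C / (A * B))) • α + B⁻¹ • β) + Real.cos θ • A⁻¹ • α =
        (Real.cos θ * A⁻¹ + Real.sin θ * (C / (A * B))) • α + (-Real.sin θ * B⁻¹) • β := by
      module
    rw [e2]
    refine h1 (Real.cos θ • t1 + Real.sin θ • t2) ?_ ?_ ?_
    · simp [inner_add_left, real_inner_smul_left, F.h13, F.h23]
    · simp only [inner_add_left, real_inner_smul_left, inner_add_right, inner_smul_right, F.s1, F.s2, F.h12,
        F.h21]; ring
    · simpa using F.comb_ne (cs_ne θ) 0

lemma hasDerivAt_squeeze {f g h : ℝ → ℝ} {x D : ℝ} (hg : HasDerivAt g D x) (hh : HasDerivAt h D x)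
    (h1 : g x = f x) (h2 : h x = f x) (hgf : ∀ᶠ y in 𝓝 x, g y ≤ f y) (hfh : ∀ᶠ y in 𝓝 x, f y ≤ h y) :
    HasDerivAt f D x := by
  rw [hasDerivAt_iff_isLittleO] at hg hh ⊢
  rw [Asymptotics.isLittleO_iff] at hg hh ⊢
  intro c hc
  filter_upwards [hg hc, hh hc, hgf, hfh] with y a1 a2 a3 a4
  rw [h1] at a1
  rw [h2] at a2
  rw [Real.norm_eq_abs] at a1 a2 ⊢
  rw [abs_le] at a1 a2 ⊢
  constructor <;> linarith [a1.1, a1.2, a2.1, a2.2]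

/-- The bilinear form of the matrix `c` evaluated at unit vectors. -/
def QQ (c11 c12 c21 c22 : ℝ) (θ θ' : ℝ) : ℝ :=
  Real.cos θ * (c11 * Real.cos θ' + c12 * Real.sin θ') +
    Real.sin θ * (c21 * Real.cos θ' + c22 * Real.sin θ')

lemma ell_const {c11 c12 c21 c22 : ℝ} {l : ℝ → ℝ} (hlc : Continuous l)
    (hper : l (2 * Real.pi) = l 0)
    (hq : ∀ θ, 0 < QQ c11 c12 c21 c22 θ θ)
    (hI : ∀ θ θ', l θ' * QQ c11 c12 c21 c22 θ θ' ≤ l θ * QQ c11 c12 c21 c22 θ θ)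
    (hS : 0 < l 0 + l Real.pi) :
    (∀ θ, 0 < l θ) ∧ c12 = c21 ∧
      ∀ θ, l θ ^ 2 * QQ c11 c12 c21 c22 θ θ = l 0 ^ 2 * QQ c11 c12 c21 c22 0 0 := by
  set Q := QQ c11 c12 c21 c22 with hQ
  have hQc : ∀ θ, Continuous fun y => Q θ y := by
    intro θ; simp only [hQ, QQ]; fun_prop
  have hnear : ∀ θ, ∀ᶠ y in 𝓝 θ, 0 < Q θ y := fun θ =>
    (hQc θ).continuousAt.eventually (lt_mem_nhds (hq θ))
  have hpos : ∀ θ, 0 < l θ := by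
    have hcl : IsClosed {θ | l θ ≤ 0} := isClosed_le hlc continuous_const
    have hop : IsOpen {θ | l θ ≤ 0} := by
      rw [isOpen_iff_mem_nhds]
      intro θ hθ
      filter_upwards [hnear θ] with y hy
      have h1 := hI θ y
      have h2 : l θ * Q θ θ ≤ 0 := mul_nonpos_of_nonpos_of_nonneg hθ (hq θ).le
      by_contra hc
      have h3 : 0 < l y := not_le.1 hc
      have := mul_pos h3 hy
      linarith
    rcases isClopen_iff.1 ⟨hcl, hop⟩ with h | h
    · intro θ
      by_contra hc
      have : θ ∈ {θ | l θ ≤ 0} := not_lt.1 hc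
      rw [h] at this; exact this
    · have h1 : (0 : ℝ) ∈ {θ | l θ ≤ 0} := by rw [h]; trivial
      have h2 : Real.pi ∈ {θ | l θ ≤ 0} := by rw [h]; trivial
      have h1 : l 0 ≤ 0 := h1
      have h2 : l Real.pi ≤ 0 := h2
      linarith
  have hd1 : ∀ θ, HasDerivAt (fun y => Q θ y) (Real.cos θ * (c11 * -Real.sin θ + c12 * Real.cos θ) +
      Real.sin θ * (c21 * -Real.sin θ + c22 * Real.cos θ)) θ := by
    intro θ
    simp only [hQ, QQ]
    exact ((((Real.hasDerivAt_cos θ).const_mul c11).add ((Real.hasDerivAt_sin θ).const_mul c12)).const_mul _).add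
      ((((Real.hasDerivAt_cos θ).const_mul c21).add ((Real.hasDerivAt_sin θ).const_mul c22)).const_mul _)
  have hd2 : ∀ θ, HasDerivAt (fun y => Q y θ) (-Real.sin θ * (c11 * Real.cos θ + c12 * Real.sin θ) +
      Real.cos θ * (c21 * Real.cos θ + c22 * Real.sin θ)) θ := by
    intro θ
    simp only [hQ, QQ]
    exact ((Real.hasDerivAt_cos θ).mul_const _).add ((Real.hasDerivAt_sin θ).mul_const _)
  have hd3 : ∀ θ, HasDerivAt (fun y => Q y y) ((Real.cos θ * (c11 * -Real.sin θ + c12 * Real.cos θ) +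
      Real.sin θ * (c21 * -Real.sin θ + c22 * Real.cos θ)) +
      (-Real.sin θ * (c11 * Real.cos θ + c12 * Real.sin θ) +
      Real.cos θ * (c21 * Real.cos θ + c22 * Real.sin θ))) θ := by
    intro θ
    simp only [hQ, QQ]
    have := ((Real.hasDerivAt_cos θ).mul (((Real.hasDerivAt_cos θ).const_mul c11).add
      ((Real.hasDerivAt_sin θ).const_mul c12))).add ((Real.hasDerivAt_sin θ).mul
      (((Real.hasDerivAt_cos θ).const_mul c21).add ((Real.hasDerivAt_sin θ).const_mul c22)))
    refine this.congr_deriv ?_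
    simp only [Pi.add_apply]
    ring
  have hdl : ∀ θ, HasDerivAt l (-(l θ * (Real.cos θ * (c11 * -Real.sin θ + c12 * Real.cos θ) +
      Real.sin θ * (c21 * -Real.sin θ + c22 * Real.cos θ)) / Q θ θ)) θ := by
    intro θ
    have hne := (hq θ).ne'
    refine hasDerivAt_squeeze (g := fun y => l θ * Q y θ / Q y y) (h := fun y => l θ * Q θ θ / Q θ y)
      ?_ ?_ ?_ ?_ ?_ ?_
    · refine (((hd2 θ).const_mul (l θ)).div (hd3 θ) hne).congr_deriv ?_
      field_simp
      ring
    · refine ((hasDerivAt_const θ (l θ * Q θ θ)).div (hd1 θ) hne).congr_deriv ?_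
      field_simp
      ring
    · field_simp
    · field_simp
    · refine Eventually.of_forall fun y => ?_
      rw [div_le_iff₀ (hq y)]; exact hI y θ
    · filter_upwards [hnear θ] with y hy
      rw [le_div_iff₀ hy]; exact hI θ y
  have hΦ : ∀ θ, HasDerivAt (fun y => l y ^ 2 * Q y y) (l θ ^ 2 * (c21 - c12)) θ := by
    intro θ
    have hne := (hq θ).ne'
    refine (((hdl θ).pow 2).mul (hd3 θ)).congr_deriv ?_
    have hsc := Real.sin_sq_add_cos_sq θ
    simp only [Pi.pow_apply]
    have hsq : Real.sin θ ^ 2 = 1 - Real.cos θ ^ 2 := by linarith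
    field_simp
    push_cast
    ring_nf
    rw [hsq]
    ring
  have hper' : Q (2 * Real.pi) (2 * Real.pi) = Q 0 0 := by simp [hQ, QQ]
  have h2pi : (0 : ℝ) < 2 * Real.pi := by positivity
  have hcc : c12 = c21 := by
    obtain ⟨ξ, -, hξ⟩ := exists_hasDerivAt_eq_zero h2pi
      (f := fun y => l y ^ 2 * Q y y) (f' := fun θ => l θ ^ 2 * (c21 - c12))
      (fun y _ => (hΦ y).continuousAt.continuousWithinAt) (by simp only [hper, hper'])
      (fun y _ => hΦ y)
    have := (mul_eq_zero.1 hξ).resolve_left (by have := hpos ξ; positivity)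
    linarith
  refine ⟨hpos, hcc, fun θ => ?_⟩
  exact is_const_of_deriv_eq_zero (f := fun y => l y ^ 2 * Q y y)
    (fun y => (hΦ y).differentiableAt) (fun y => by rw [(hΦ y).deriv, hcc]; ring) θ 0

/-- Points of the form `o - l C u` with `l² uCu` constant form an ellipse. -/
lemma ell_param {c11 c12 c22 k : ℝ} {l : ℝ → ℝ} (hl : ∀ θ, 0 < l θ)
    (hq : ∀ θ, 0 < QQ c11 c12 c12 c22 θ θ) (hk : ∀ θ, l θ ^ 2 * QQ c11 c12 c12 c22 θ θ = k) :
    ∃ p1 p2 q1 q2 : ℝ,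
      (∀ θ, ∃ φ, -l θ * (c11 * Real.cos θ + c12 * Real.sin θ) = Real.cos φ * p1 + Real.sin φ * q1 ∧
        -l θ * (c12 * Real.cos θ + c22 * Real.sin θ) = Real.cos φ * p2 + Real.sin φ * q2) ∧
      (∀ φ, ∃ θ, -l θ * (c11 * Real.cos θ + c12 * Real.sin θ) = Real.cos φ * p1 + Real.sin φ * q1 ∧
        -l θ * (c12 * Real.cos θ + c22 * Real.sin θ) = Real.cos φ * p2 + Real.sin φ * q2) := by
  have hkp : 0 < k := by rw [← hk 0]; have := hl 0; have := hq 0; positivity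
  have h11 : 0 < c11 := by simpa [QQ] using hq 0
  -- positivity of the determinant
  have hquad : ∀ a b : ℝ, ¬ (a = 0 ∧ b = 0) → 0 < a * (c11 * a + c12 * b) + b * (c12 * a + c22 * b) := by
    intro a b hab
    obtain ⟨ρ, θ, hρ, rfl, rfl⟩ := polar_exists hab
    have h1 : 0 < ρ ^ 2 * QQ c11 c12 c12 c22 θ θ := by have := hq θ; positivity
    have h2 : ρ ^ 2 * QQ c11 c12 c12 c22 θ θ = ρ * Real.cos θ * (c11 * (ρ * Real.cos θ) + c12 * (ρ * Real.sin θ)) +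
      ρ * Real.sin θ * (c12 * (ρ * Real.cos θ) + c22 * (ρ * Real.sin θ)) := by rw [QQ]; ring
    linarith
  have hD : 0 < c11 * c22 - c12 ^ 2 := by
    have h1 := hquad (-c12) c11 (fun h => h11.ne' h.2)
    have h2 : -c12 * (c11 * -c12 + c12 * c11) + c11 * (c12 * -c12 + c22 * c11) =
      c11 * (c11 * c22 - c12 ^ 2) := by ring
    rw [h2] at h1
    exact (pos_iff_pos_of_mul_pos h1).1 h11
  obtain ⟨A, hA, hAs⟩ : ∃ A : ℝ, 0 < A ∧ A ^ 2 = c11 := ⟨√c11, Real.sqrt_pos.2 h11, Real.sq_sqrt h11.le⟩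
  have hDA : 0 < c22 - (c12 / A) ^ 2 := by
    have : c22 - (c12 / A) ^ 2 = (c11 * c22 - c12 ^ 2) / c11 := by rw [← hAs]; field_simp
    rw [this]; positivity
  obtain ⟨E, hE, hEs⟩ : ∃ E : ℝ, 0 < E ∧ E ^ 2 = c22 - (c12 / A) ^ 2 :=
    ⟨_, Real.sqrt_pos.2 hDA, Real.sq_sqrt hDA.le⟩
  set B := c12 / A with hB
  have hc12 : c12 = A * B := by rw [hB]; field_simp
  have hc22 : c22 = E ^ 2 + B ^ 2 := by linarith
  obtain ⟨k', hk', hks⟩ : ∃ k' : ℝ, 0 < k' ∧ k' ^ 2 = k := ⟨√k, Real.sqrt_pos.2 hkp, Real.sq_sqrt hkp.le⟩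
  have hQ : ∀ θ, QQ c11 c12 c12 c22 θ θ = (A * Real.cos θ + B * Real.sin θ) ^ 2 + (E * Real.sin θ) ^ 2 := by
    intro θ; rw [QQ, hc12, hc22, ← hAs]; ring
  refine ⟨k' * A, k' * B, 0, k' * E, ?_, ?_⟩
  · intro θ
    set y1 := -l θ * (A * Real.cos θ + B * Real.sin θ) with hy1
    set y2 := -l θ * (E * Real.sin θ) with hy2
    have hy : y1 ^ 2 + y2 ^ 2 = k' ^ 2 := by
      rw [hks, ← hk θ, hQ]; ring
    have hne : ¬ (y1 = 0 ∧ y2 = 0) := by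
      rintro ⟨a, b⟩; rw [a, b] at hy
      have : 0 < k' ^ 2 := by positivity
      linarith
    obtain ⟨ρ, φ, hρ, e1, e2⟩ := polar_exists hne
    have hρk : ρ = k' := by
      have h1 : ρ ^ 2 = k' ^ 2 := by
        rw [← hy, e1, e2]
        have := Real.sin_sq_add_cos_sq φ
        linear_combination (-ρ ^ 2) * this
      exact (pow_left_inj₀ hρ.le hk'.le (by norm_num)).1 h1
    rw [hρk] at e1 e2
    refine ⟨φ, ?_, ?_⟩
    · rw [hc12, ← hAs]; linear_combination A * e1
    · rw [hc12, hc22]; linear_combination B * e1 + E * e2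
  · intro φ
    set u2 := -Real.sin φ / E with hu2
    set u1 := (-Real.cos φ - B * u2) / A with hu1
    have f1 : A * u1 + B * u2 = -Real.cos φ := by rw [hu1]; field_simp; ring
    have f2 : E * u2 = -Real.sin φ := by rw [hu2]; field_simp
    have hne : ¬ (u1 = 0 ∧ u2 = 0) := by
      rintro ⟨a, b⟩
      rw [a, b] at f1; rw [b] at f2
      apply cs_ne φ; constructor <;> linarith
    obtain ⟨ρ, θ, hρ, e1, e2⟩ := polar_exists hne
    rw [e1, e2] at f1
    rw [e2] at f2
    refine ⟨θ, ?_⟩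
    have hlk : l θ = k' * ρ := by
      have h1 := hk θ
      rw [hQ, ← hks] at h1
      have h2 : ρ ^ 2 * ((A * Real.cos θ + B * Real.sin θ) ^ 2 + (E * Real.sin θ) ^ 2) = 1 := by
        have := Real.sin_sq_add_cos_sq φ
        have e : ρ ^ 2 * ((A * Real.cos θ + B * Real.sin θ) ^ 2 + (E * Real.sin θ) ^ 2) =
          (A * (ρ * Real.cos θ) + B * (ρ * Real.sin θ)) ^ 2 + (E * (ρ * Real.sin θ)) ^ 2 := by ring
        rw [e, f1, f2]; linarith
      have h3 : l θ ^ 2 = (k' * ρ) ^ 2 := by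
        rw [mul_pow, ← h1]; linear_combination (-(l θ) ^ 2) * h2
      exact (pow_left_inj₀ (hl θ).le (by positivity) (by norm_num)).1 h3
    rw [hlk]
    constructor
    · rw [hc12, ← hAs]; linear_combination (-k' * A) * f1
    · rw [hc12, hc22]; linear_combination (-k' * B) * f1 + (-k' * E) * f2

lemma ell_pos {c11 c12 c21 c22 o1 o2 : ℝ} {r1 r2 l : ℝ → ℝ} (hlc : Continuous l)
    (hper : l (2 * Real.pi) = l 0)
    (hr1 : ∀ θ, r1 θ = o1 - l θ * (c11 * Real.cos θ + c12 * Real.sin θ))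
    (hr2 : ∀ θ, r2 θ = o2 - l θ * (c21 * Real.cos θ + c22 * Real.sin θ))
    (hq : ∀ θ, 0 < QQ c11 c12 c21 c22 θ θ)
    (hsup : ∀ θ θ', Real.cos θ * r1 θ + Real.sin θ * r2 θ ≤ Real.cos θ * r1 θ' + Real.sin θ * r2 θ')
    (hstr : ∀ θ, Real.cos θ * r1 θ + Real.sin θ * r2 θ <
      Real.cos θ * r1 (θ + Real.pi) + Real.sin θ * r2 (θ + Real.pi)) :
    ∃ o1 o2 p1 p2 q1 q2 : ℝ,
      (∀ θ, ∃ φ, r1 θ = o1 + Real.cos φ * p1 + Real.sin φ * q1 ∧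
        r2 θ = o2 + Real.cos φ * p2 + Real.sin φ * q2) ∧
      (∀ φ, ∃ θ, r1 θ = o1 + Real.cos φ * p1 + Real.sin φ * q1 ∧
        r2 θ = o2 + Real.cos φ * p2 + Real.sin φ * q2) := by
  obtain ⟨hl, hcc, hk⟩ := ell_const hlc hper hq (by
      intro θ θ'
      have := hsup θ θ'
      rw [hr1, hr2, hr1 θ', hr2 θ'] at this
      simp only [QQ]; linarith) (by
      have := hstr 0
      rw [hr1, hr1 (0 + Real.pi)] at this
      simp at this
      have h0 : 0 < c11 := by simpa [QQ] using hq 0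
      have h1 : 0 < (l 0 + l Real.pi) * c11 := by linarith
      exact (pos_iff_pos_of_mul_pos h1).2 h0)
  subst hcc
  obtain ⟨p1, p2, q1, q2, h1, h2⟩ := ell_param hl hq hk
  refine ⟨o1, o2, p1, p2, q1, q2, ?_, ?_⟩
  · intro θ
    obtain ⟨φ, a, b⟩ := h1 θ
    exact ⟨φ, by rw [hr1]; linarith, by rw [hr2]; linarith⟩
  · intro φ
    obtain ⟨θ, a, b⟩ := h2 φ
    exact ⟨θ, by rw [hr1]; linarith, by rw [hr2]; linarith⟩

lemma ell_2d {a1 a2 a0 b1 b2 b0 : ℝ} {r1 r2 : ℝ → ℝ} (hc1 : Continuous r1) (hc2 : Continuous r2)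
    (hp1 : r1 (2 * Real.pi) = r1 0) (hp2 : r2 (2 * Real.pi) = r2 0)
    (hli : ∀ s t : ℝ, s * a1 + t * b1 = 0 → s * a2 + t * b2 = 0 → s * a0 + t * b0 = 0 → s = 0 ∧ t = 0)
    (hkey : ∀ θ, -Real.sin θ * (a1 * r1 θ + a2 * r2 θ + a0) +
      Real.cos θ * (b1 * r1 θ + b2 * r2 θ + b0) = 0)
    (hsup : ∀ θ θ', Real.cos θ * r1 θ + Real.sin θ * r2 θ ≤ Real.cos θ * r1 θ' + Real.sin θ * r2 θ')
    (hstr : ∀ θ, Real.cos θ * r1 θ + Real.sin θ * r2 θ <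
      Real.cos θ * r1 (θ + Real.pi) + Real.sin θ * r2 (θ + Real.pi)) :
    ∃ o1 o2 p1 p2 q1 q2 : ℝ,
      (∀ θ, ∃ φ, r1 θ = o1 + Real.cos φ * p1 + Real.sin φ * q1 ∧
        r2 θ = o2 + Real.cos φ * p2 + Real.sin φ * q2) ∧
      (∀ φ, ∃ θ, r1 θ = o1 + Real.cos φ * p1 + Real.sin φ * q1 ∧
        r2 θ = o2 + Real.cos φ * p2 + Real.sin φ * q2) := by
  set l : ℝ → ℝ := fun θ => Real.cos θ * (a1 * r1 θ + a2 * r2 θ + a0) +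
      Real.sin θ * (b1 * r1 θ + b2 * r2 θ + b0) with hl
  have g1 : ∀ θ, a1 * r1 θ + a2 * r2 θ + a0 = l θ * Real.cos θ := by
    intro θ
    have h1 := hkey θ
    have h2 := Real.sin_sq_add_cos_sq θ
    simp only [hl]
    linear_combination (-Real.sin θ) * h1 - (a1 * r1 θ + a2 * r2 θ + a0) * h2
  have g2 : ∀ θ, b1 * r1 θ + b2 * r2 θ + b0 = l θ * Real.sin θ := by
    intro θ
    have h1 := hkey θ
    have h2 := Real.sin_sq_add_cos_sq θ
    simp only [hl]
    linear_combination (Real.cos θ) * h1 - (b1 * r1 θ + b2 * r2 θ + b0) * h2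
  have hsing : ∀ s t : ℝ, s * a1 + t * b1 = 0 → s * a2 + t * b2 = 0 → s = 0 ∧ t = 0 := by
    intro s t h1 h2
    by_contra hne
    obtain ⟨ρ, ψ, hρ, rfl, rfl⟩ := polar_exists hne
    apply hne
    apply hli _ _ h1 h2
    have e1 := g1 (ψ + Real.pi / 2)
    have e2 := g2 (ψ + Real.pi / 2)
    rw [Real.cos_add_pi_div_two] at e1
    rw [Real.sin_add_pi_div_two] at e2
    linear_combination (ρ * Real.cos ψ) * e1 + (ρ * Real.sin ψ) * e2 - r1 (ψ + Real.pi / 2) * h1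
      - r2 (ψ + Real.pi / 2) * h2
  have hD : a1 * b2 - a2 * b1 ≠ 0 := by
    intro h
    obtain ⟨h1, h2⟩ := hsing b1 (-a1) (by ring) (by linear_combination -h)
    obtain ⟨h3, h4⟩ := hsing b2 (-a2) (by linear_combination h) (by ring)
    have := (hsing 1 0 (by linarith) (by linarith)).1
    norm_num at this
  set D := a1 * b2 - a2 * b1 with hDd
  have k1 : ∀ θ, r1 θ = (a2 * b0 - b2 * a0) / D +
      l θ * (b2 / D * Real.cos θ + (-a2 / D) * Real.sin θ) := by
    intro θ
    have e1 := g1 θ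
    have e2 := g2 θ
    field_simp
    rw [hDd]
    linear_combination b2 * e1 - a2 * e2
  have k2 : ∀ θ, r2 θ = (b1 * a0 - a1 * b0) / D +
      l θ * (-b1 / D * Real.cos θ + (a1 / D) * Real.sin θ) := by
    intro θ
    have e1 := g1 θ
    have e2 := g2 θ
    field_simp
    rw [hDd]
    linear_combination (-b1) * e1 + a1 * e2
  have hlc : Continuous l := by simp only [hl]; fun_prop
  have hlp : l (2 * Real.pi) = l 0 := by simp [hl, hp1, hp2]
  have hqc : Continuous fun θ => QQ (b2 / D) (-a2 / D) (-b1 / D) (a1 / D) θ θ := by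
    simp only [QQ]; fun_prop
  have hq0 : ∀ θ, QQ (b2 / D) (-a2 / D) (-b1 / D) (a1 / D) θ θ ≠ 0 := by
    intro θ h
    have := hstr θ
    rw [k1, k2, k1 (θ + Real.pi), k2 (θ + Real.pi), Real.cos_add_pi, Real.sin_add_pi] at this
    simp only [QQ] at h
    have h' : Real.cos θ * ((a2 * b0 - b2 * a0) / D + l (θ + Real.pi) * (b2 / D * -Real.cos θ + -a2 / D * -Real.sin θ)) +
      Real.sin θ * ((b1 * a0 - a1 * b0) / D + l (θ + Real.pi) * (-b1 / D * -Real.cos θ + a1 / D * -Real.sin θ)) =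
      Real.cos θ * ((a2 * b0 - b2 * a0) / D + l θ * (b2 / D * Real.cos θ + -a2 / D * Real.sin θ)) +
      Real.sin θ * ((b1 * a0 - a1 * b0) / D + l θ * (-b1 / D * Real.cos θ + a1 / D * Real.sin θ)) := by
      linear_combination (-l (θ + Real.pi) - l θ) * h
    linarith
  have hsign : (∀ θ, 0 < QQ (b2 / D) (-a2 / D) (-b1 / D) (a1 / D) θ θ) ∨
      (∀ θ, QQ (b2 / D) (-a2 / D) (-b1 / D) (a1 / D) θ θ < 0) := by
    by_contra hc
    push Not at hc
    obtain ⟨⟨x, hx⟩, ⟨y, hy⟩⟩ := hc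
    obtain ⟨z, hz⟩ := mem_range_of_exists_le_of_exists_ge hqc ⟨x, hx⟩ ⟨y, hy⟩
    exact hq0 z hz
  rcases hsign with h | h
  · refine ell_pos (l := fun θ => -l θ) hlc.neg (by simp only [hlp]) ?_ ?_ h hsup hstr
      (o1 := (a2 * b0 - b2 * a0) / D) (o2 := (b1 * a0 - a1 * b0) / D)
    · intro θ; rw [k1 θ]; ring
    · intro θ; rw [k2 θ]; ring
  · refine ell_pos (l := l) (c11 := -(b2 / D)) (c12 := -(-a2 / D)) (c21 := -(-b1 / D))
      (c22 := -(a1 / D)) hlc hlp ?_ ?_ ?_ hsup hstr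
      (o1 := (a2 * b0 - b2 * a0) / D) (o2 := (b1 * a0 - a1 * b0) / D)
    · intro θ; rw [k1 θ]; ring
    · intro θ; rw [k2 θ]; ring
    · intro θ
      have := h θ
      simp only [QQ] at this ⊢
      linarith

lemma circ {c s : ℝ} (h : c ^ 2 + s ^ 2 = 1) : ∃ φ : ℝ, Real.cos φ = c ∧ Real.sin φ = s := by
  have hne : ¬ (c = 0 ∧ s = 0) := by
    rintro ⟨rfl, rfl⟩; norm_num at h
  obtain ⟨ρ, φ, hρ, rfl, rfl⟩ := polar_exists hne
  have h1 := Real.sin_sq_add_cos_sq φ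
  have h2 : ρ ^ 2 = 1 := by linear_combination h - ρ ^ 2 * h1
  have h3 : ρ = 1 := by nlinarith
  exact ⟨φ, by rw [h3]; ring, by rw [h3]; ring⟩

lemma proj_aux {O σ1 σ2 n : E3} (h2 : ⟪n, σ2⟫_ℝ = 0)
    (hpos : ∀ φ : ℝ, 0 < ⟪n, O + Real.cos φ • σ1 + Real.sin φ • σ2⟫_ℝ) :
    ∃ c a b : E3, ∀ w : E3,
      (∃ φ : ℝ, w = (⟪n, O + Real.cos φ • σ1 + Real.sin φ • σ2⟫_ℝ)⁻¹ •
        (O + Real.cos φ • σ1 + Real.sin φ • σ2)) ↔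
      ∃ φ : ℝ, w = c + Real.cos φ • a + Real.sin φ • b := by
  set A := ⟪n, O⟫_ℝ with hA
  set B := ⟪n, σ1⟫_ℝ with hB
  have hin : ∀ φ : ℝ, ⟪n, O + Real.cos φ • σ1 + Real.sin φ • σ2⟫_ℝ = A + B * Real.cos φ := by
    intro φ
    rw [inner_add_right, inner_add_right, inner_smul_right, inner_smul_right, h2]; ring
  simp only [hin] at hpos ⊢
  have hp1 : 0 < A + B := by simpa using hpos 0
  have hp2 : 0 < A - B := by have := hpos Real.pi; rw [Real.cos_pi] at this; linarith
  have hAB : 0 < A ^ 2 - B ^ 2 := by nlinarith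
  obtain ⟨E, hE, hEs⟩ : ∃ E : ℝ, 0 < E ∧ E ^ 2 = A ^ 2 - B ^ 2 :=
    ⟨_, Real.sqrt_pos.2 hAB, Real.sq_sqrt hAB.le⟩
  have hneg : ∀ φ : ℝ, 0 < A - B * Real.cos φ := by
    intro φ
    have := hpos (φ + Real.pi)
    rw [Real.cos_add_pi] at this; linarith
  refine ⟨(A / E ^ 2) • O - (B / E ^ 2) • σ1, (-(B / E ^ 2)) • O + (A / E ^ 2) • σ1, E⁻¹ • σ2, ?_⟩
  intro w
  constructor
  · rintro ⟨φ, rfl⟩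
    have hd := hpos φ
    obtain ⟨φ', hc, hs⟩ := circ (c := (A * Real.cos φ + B) / (A + B * Real.cos φ))
      (s := E * Real.sin φ / (A + B * Real.cos φ)) (by
        have := Real.sin_sq_add_cos_sq φ
        rw [div_pow, div_pow, ← add_div, div_eq_one_iff_eq (pow_ne_zero 2 hd.ne'), mul_pow, hEs]
        linear_combination (A ^ 2 - B ^ 2) * this)
    refine ⟨φ', ?_⟩
    rw [hc, hs]
    match_scalars
    · field_simp; rw [hEs]; ring
    · field_simp; rw [hEs]; ring
    · field_simp
  · rintro ⟨φ', rfl⟩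
    have hd := hneg φ'
    obtain ⟨φ, hc, hs⟩ := circ (c := (A * Real.cos φ' - B) / (A - B * Real.cos φ'))
      (s := E * Real.sin φ' / (A - B * Real.cos φ')) (by
        have := Real.sin_sq_add_cos_sq φ'
        rw [div_pow, div_pow, ← add_div, div_eq_one_iff_eq (pow_ne_zero 2 hd.ne'), mul_pow, hEs]
        linear_combination (A ^ 2 - B ^ 2) * this)
    refine ⟨φ, ?_⟩
    have hin' : (A + B * Real.cos φ)⁻¹ = (A - B * Real.cos φ') / E ^ 2 := by
      have h0 := (hpos φ).ne'
      rw [inv_eq_iff_eq_inv, inv_div, hc]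
      field_simp
      rw [hEs]; ring
    rw [hin', hc, hs]
    match_scalars <;> field_simp <;> ring

lemma proj_ell {O σ1 σ2 n : E3}
    (hpos : ∀ φ : ℝ, 0 < ⟪n, O + Real.cos φ • σ1 + Real.sin φ • σ2⟫_ℝ) :
    ∃ c a b : E3, ∀ w : E3,
      (∃ φ : ℝ, w = (⟪n, O + Real.cos φ • σ1 + Real.sin φ • σ2⟫_ℝ)⁻¹ •
        (O + Real.cos φ • σ1 + Real.sin φ • σ2)) ↔
      ∃ φ : ℝ, w = c + Real.cos φ • a + Real.sin φ • b := by
  obtain ⟨ρ, ψ, e1, e2⟩ : ∃ ρ ψ : ℝ, ⟪n, σ1⟫_ℝ = ρ * Real.cos ψ ∧ ⟪n, σ2⟫_ℝ = ρ * Real.sin ψ := by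
    by_cases h : ⟪n, σ1⟫_ℝ = 0 ∧ ⟪n, σ2⟫_ℝ = 0
    · exact ⟨0, 0, by simp [h.1], by simp [h.2]⟩
    · obtain ⟨ρ, ψ, -, h1, h2⟩ := polar_exists h
      exact ⟨ρ, ψ, h1, h2⟩
  have hrot : ∀ φ : ℝ, O + Real.cos φ • (Real.cos ψ • σ1 + Real.sin ψ • σ2) +
      Real.sin φ • (-Real.sin ψ • σ1 + Real.cos ψ • σ2) =
      O + Real.cos (φ + ψ) • σ1 + Real.sin (φ + ψ) • σ2 := by
    intro φ
    rw [Real.cos_add, Real.sin_add]; module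
  obtain ⟨c, a, b, h⟩ := proj_aux (O := O) (σ1 := Real.cos ψ • σ1 + Real.sin ψ • σ2)
    (σ2 := -Real.sin ψ • σ1 + Real.cos ψ • σ2) (n := n)
    (by rw [inner_add_right, inner_smul_right, inner_smul_right, e1, e2]; ring)
    (by intro φ; rw [hrot]; exact hpos _)
  refine ⟨c, a, b, fun w => ?_⟩
  rw [← h w]
  constructor
  · rintro ⟨φ, hφ⟩
    refine ⟨φ - ψ, ?_⟩
    rw [hrot, sub_add_cancel]; exact hφ
  · rintro ⟨φ, hφ⟩
    refine ⟨φ + ψ, ?_⟩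
    rw [hrot] at hφ; exact hφ

/-- The graze from `x` is a (possibly degenerate) ellipse. -/
def IsEll (L : Set E3) (x : E3) : Prop :=
  ∃ c a b : E3, ∀ p : E3, IsTouch L x p ↔ ∃ φ : ℝ, p = c + Real.cos φ • a + Real.sin φ • b

lemma Setup.good_ell {K L : Set E3} {N : E3 → E3} {d : E3 → ℝ} (S : Setup K L N d)
    {x ν : E3} {r : ℝ} (G : Good K x ν r) : IsEll L x := by
  have hν0 : ν ≠ 0 := norm_ne_zero_iff.1 (by rw [G.un]; norm_num)
  have hν : ∀ q ∈ L, 0 < ⟪ν, q - x⟫_ℝ := fun q hq => inner_pos_of_interior hν0 G.nor (S.LK hq)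
  obtain ⟨t1, t2, F⟩ := exists_frame G.un
  obtain ⟨α, β, hli, hkey⟩ := S.key G F hν
  obtain ⟨n, hn⟩ := S.exists_n G.fr
  set P := pθ L x t1 t2 ν with hP
  have hPt : ∀ θ, IsTouch L x (P θ) := F.pθ_isTouch S.SL hν
  have hPc : Continuous P := F.pθ_continuous S.SL hν
  have hk : ∀ θ, 0 < ⟪ν, P θ - x⟫_ℝ := fun θ => hν _ (hPt θ).mem
  set r1 : ℝ → ℝ := fun θ => ⟪t1, P θ - x⟫_ℝ / ⟪ν, P θ - x⟫_ℝ with hr1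
  set r2 : ℝ → ℝ := fun θ => ⟪t2, P θ - x⟫_ℝ / ⟪ν, P θ - x⟫_ℝ with hr2
  have hw : ∀ θ, P θ - x = ⟪ν, P θ - x⟫_ℝ • (r1 θ • t1 + r2 θ • t2 + ν) := by
    intro θ
    have h0 := (hk θ).ne'
    have h1 := F.decomp (P θ - x)
    have e1 : ⟪ν, P θ - x⟫_ℝ * r1 θ = ⟪t1, P θ - x⟫_ℝ := by simp only [hr1]; field_simp
    have e2 : ⟪ν, P θ - x⟫_ℝ * r2 θ = ⟪t2, P θ - x⟫_ℝ := by simp only [hr2]; field_simp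
    rw [smul_add, smul_add, smul_smul, smul_smul, e1, e2]
    exact h1
  have hP2 : P (2 * Real.pi) = P 0 := by simp [hP, pθ]
  have hsupp : ∀ θ, ∃ m : ℝ, Real.cos θ * r1 θ + Real.sin θ * r2 θ = m ∧
      (∀ θ', m ≤ Real.cos θ * r1 θ' + Real.sin θ * r2 θ') ∧
      ∀ θ', Real.cos θ * r1 θ' + Real.sin θ * r2 θ' = m → P θ' = P θ := by
    intro θ
    obtain ⟨m, hm⟩ := tp_spec S.SL hν (Real.cos θ • t1 + Real.sin θ • t2)
    have hval : ∀ θ', ⟪Real.cos θ • t1 + Real.sin θ • t2 - m • ν, P θ' - x⟫_ℝ =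
        ⟪ν, P θ' - x⟫_ℝ * (Real.cos θ * r1 θ' + Real.sin θ * r2 θ' - m) := by
      intro θ'
      have h0 := (hk θ').ne'
      rw [inner_sub_left, inner_add_left, real_inner_smul_left, real_inner_smul_left, real_inner_smul_left]
      simp only [hr1, hr2]
      field_simp
    refine ⟨m, ?_, ?_, ?_⟩
    · have h1 := hval θ
      have h2 : ⟪Real.cos θ • t1 + Real.sin θ • t2 - m • ν, P θ - x⟫_ℝ = 0 := hm.2.1
      rw [h2] at h1
      have := (mul_eq_zero.1 h1.symm).resolve_left (hk θ).ne'
      linarith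
    · intro θ'
      have h1 := hm.2.2 (P θ') (hPt θ').mem
      rw [hval θ'] at h1
      have := (mul_nonneg_iff_of_pos_left (hk θ')).1 h1
      linarith
    · intro θ' h
      apply tp_eq S.SL hν (F.comb_ne (cs_ne θ)) (m := m)
      refine ⟨(hPt θ').mem, ?_, hm.2.2⟩
      rw [hval θ', h]; ring
  have hνc : ∀ v : E3, Continuous fun θ => ⟪v, P θ - x⟫_ℝ := by intro v; fun_prop
  have hcoef : ∀ (v : E3) (θ : ℝ), ⟪v, P θ - x⟫_ℝ =
      ⟪ν, P θ - x⟫_ℝ * (⟪v, t1⟫_ℝ * r1 θ + ⟪v, t2⟫_ℝ * r2 θ + ⟪v, ν⟫_ℝ) := by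
    intro v θ
    conv_lhs => rw [hw θ]
    rw [inner_smul_right, inner_add_right, inner_add_right, inner_smul_right, inner_smul_right]
    ring
  obtain ⟨o1, o2, p1, p2, q1, q2, hfor, hback⟩ := ell_2d (r1 := r1) (r2 := r2)
    (a1 := ⟪α, t1⟫_ℝ) (a2 := ⟪α, t2⟫_ℝ) (a0 := ⟪α, ν⟫_ℝ)
    (b1 := ⟪β, t1⟫_ℝ) (b2 := ⟪β, t2⟫_ℝ) (b0 := ⟪β, ν⟫_ℝ)
    ((hνc t1).div (hνc ν) fun θ => (hk θ).ne') ((hνc t2).div (hνc ν) fun θ => (hk θ).ne')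
    (by simp only [hr1, hP2]) (by simp only [hr2, hP2])
    (by
      intro s t h1 h2 h3
      apply hli
      have e := F.decomp (s • α + t • β)
      rw [e]
      have f : ∀ v : E3, ⟪v, s • α + t • β⟫_ℝ = s * ⟪α, v⟫_ℝ + t * ⟪β, v⟫_ℝ := by
        intro v
        rw [inner_add_right, inner_smul_right, inner_smul_right, real_inner_comm, real_inner_comm v β]
      rw [f, f, f, h1, h2, h3]; simp)
    (by
      intro θ
      have h1 := hkey θ
      rw [inner_add_left, real_inner_smul_left, real_inner_smul_left] at h1
      change -Real.sin θ * ⟪α, P θ - x⟫_ℝ + Real.cos θ * ⟪β, P θ - x⟫_ℝ = 0 at h1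
      rw [hcoef α, hcoef β] at h1
      have h2 : ⟪ν, P θ - x⟫_ℝ * (-Real.sin θ * (⟪α, t1⟫_ℝ * r1 θ + ⟪α, t2⟫_ℝ * r2 θ + ⟪α, ν⟫_ℝ) +
        Real.cos θ * (⟪β, t1⟫_ℝ * r1 θ + ⟪β, t2⟫_ℝ * r2 θ + ⟪β, ν⟫_ℝ)) = 0 := by linarith
      exact (mul_eq_zero.1 h2).resolve_left (hk θ).ne')
    (by
      intro θ θ'
      obtain ⟨m, h1, h2, -⟩ := hsupp θ
      rw [h1]; exact h2 θ')
    (by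
      intro θ
      obtain ⟨m, h1, h2, h3⟩ := hsupp θ
      rw [h1]
      refine lt_of_le_of_ne (h2 _) ?_
      intro h
      have h4 := h3 _ h.symm
      refine tp_ne S.SL hν (F.comb_ne (cs_ne θ)) ?_
      change P θ = _
      rw [← h4]
      simp only [hP, pθ, Real.cos_add_pi, Real.sin_add_pi]
      congr 1; module)
  set W : ℝ → E3 := fun φ => (o1 • t1 + o2 • t2 + ν) + Real.cos φ • (p1 • t1 + p2 • t2) +
    Real.sin φ • (q1 • t1 + q2 • t2) with hW
  have hWP : ∀ θ φ : ℝ, (r1 θ = o1 + Real.cos φ * p1 + Real.sin φ * q1 ∧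
        r2 θ = o2 + Real.cos φ * p2 + Real.sin φ * q2) →
        0 < ⟪n, W φ⟫_ℝ ∧ P θ - x = (⟪n, W φ⟫_ℝ)⁻¹ • W φ := by
    rintro θ φ ⟨h1, h2⟩
    have e : r1 θ • t1 + r2 θ • t2 + ν = W φ := by rw [h1, h2]; simp only [hW]; module
    have h3 := hw θ
    rw [e] at h3
    have h4 := hn _ (hPt θ)
    have h5 := hk θ
    have h6 : ⟪ν, P θ - x⟫_ℝ * ⟪n, W φ⟫_ℝ = 1 := by rw [← inner_smul_right, ← h3, h4]
    have h7 : 0 < ⟪n, W φ⟫_ℝ := by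
      have : 0 < ⟪ν, P θ - x⟫_ℝ * ⟪n, W φ⟫_ℝ := by rw [h6]; norm_num
      exact (pos_iff_pos_of_mul_pos this).1 h5
    refine ⟨h7, ?_⟩
    have h8 : ⟪ν, P θ - x⟫_ℝ = (⟪n, W φ⟫_ℝ)⁻¹ := eq_inv_of_mul_eq_one_left h6
    rw [← h8]; exact h3
  obtain ⟨c, a, b, hcab⟩ := proj_ell (O := o1 • t1 + o2 • t2 + ν) (σ1 := p1 • t1 + p2 • t2)
    (σ2 := q1 • t1 + q2 • t2) (n := n) (by
      intro φ
      obtain ⟨θ, h⟩ := hback φ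
      exact (hWP θ φ h).1)
  refine ⟨x + c, a, b, fun p => ?_⟩
  have hiff : IsTouch L x p ↔ ∃ φ : ℝ, p - x = (⟪n, W φ⟫_ℝ)⁻¹ • W φ := by
    constructor
    · intro hp
      obtain ⟨θ, rfl⟩ := F.surj S.SL hν hp
      obtain ⟨φ, h⟩ := hfor θ
      exact ⟨φ, (hWP θ φ h).2⟩
    · rintro ⟨φ, h⟩
      obtain ⟨θ, h'⟩ := hback φ
      rw [← (hWP θ φ h').2] at h
      rw [sub_left_inj.1 h]; exact hPt θ
  rw [hiff, hcab (p - x)]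
  constructor
  · rintro ⟨φ, h⟩; exact ⟨φ, by rw [sub_eq_iff_eq_add] at h; rw [h]; abel⟩
  · rintro ⟨φ, h⟩; exact ⟨φ, by rw [h]; abel⟩

lemma ulim {E : Type*} [NormedAddCommGroup E] [ProperSpace E] (U : Ultrafilter ℕ) {f : ℕ → E}
    {R : ℝ} (h : ∀ n, ‖f n‖ ≤ R) : ∃ l, Tendsto f (U : Filter ℕ) (𝓝 l) := by
  obtain ⟨l, -, hl⟩ := (isCompact_closedBall (0 : E) R).ultrafilter_le_nhds (U.map f) (by
    rw [le_principal_iff]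
    refine Filter.Eventually.of_forall (f := (U : Filter ℕ))
      (p := fun n => f n ∈ closedBall (0 : E) R) ?_
    intro n
    rw [mem_closedBall_zero_iff]; exact h n)
  exact ⟨l, hl⟩

lemma Setup.ell {K L : Set E3} {N : E3 → E3} {d : E3 → ℝ} (S : Setup K L N d)
    {x : E3} (hx : x ∈ frontier K) : IsEll L x := by
  obtain ⟨R, hR⟩ : ∃ R : ℝ, ∀ q ∈ L, ‖q‖ ≤ R := S.SL.comp.isBounded.exists_norm_le
  have hgd : ∀ n : ℕ, ∃ y, IsEll L y ∧ dist y x < 1 / ((n : ℝ) + 1) := by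
    intro n
    obtain ⟨y, ν, r, G, hd⟩ := S.good_dense hx (ε := 1 / ((n : ℝ) + 1)) (by positivity)
    exact ⟨y, S.good_ell G, hd⟩
  choose xs hell hdist using hgd
  have hxs0 : Tendsto xs atTop (𝓝 x) := by
    rw [tendsto_iff_dist_tendsto_zero]
    exact squeeze_zero (fun _ => dist_nonneg) (fun n => (hdist n).le)
      tendsto_one_div_add_atTop_nhds_zero_nat
  choose cs as bs hcab using hell
  set U := Filter.hyperfilter ℕ with hU
  have hUle : (U : Filter ℕ) ≤ atTop := by
    rw [hU, ← Nat.cofinite_eq_atTop]; exact Filter.hyperfilter_le_cofinite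
  have hxs : Tendsto xs (U : Filter ℕ) (𝓝 x) := hxs0.mono_left hUle
  have hb : ∀ n (φ : ℝ), ‖cs n + Real.cos φ • as n + Real.sin φ • bs n‖ ≤ R := by
    intro n φ
    exact hR _ ((hcab n _).2 ⟨φ, rfl⟩).mem
  have h0 : ∀ n, ‖cs n + as n‖ ≤ R := fun n => by simpa using hb n 0
  have h1 : ∀ n, ‖cs n - as n‖ ≤ R := fun n => by simpa [← sub_eq_add_neg] using hb n Real.pi
  have h2 : ∀ n, ‖cs n + bs n‖ ≤ R := fun n => by simpa using hb n (Real.pi / 2)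
  have hc' : ∀ n, ‖cs n‖ ≤ R := by
    intro n
    have e : (2 : ℝ) • cs n = (cs n + as n) + (cs n - as n) := by module
    have := norm_add_le (cs n + as n) (cs n - as n)
    rw [← e, norm_smul, Real.norm_eq_abs, abs_two] at this
    linarith [h0 n, h1 n]
  have ha' : ∀ n, ‖as n‖ ≤ 2 * R := by
    intro n
    have e : as n = (cs n + as n) - cs n := by abel
    have := norm_sub_le (cs n + as n) (cs n)
    rw [← e] at this
    linarith [h0 n, hc' n]
  have hb' : ∀ n, ‖bs n‖ ≤ 2 * R := by
    intro n
    have e : bs n = (cs n + bs n) - cs n := by abel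
    have := norm_sub_le (cs n + bs n) (cs n)
    rw [← e] at this
    linarith [h2 n, hc' n]
  obtain ⟨c, hc⟩ := ulim U hc'
  obtain ⟨a, ha⟩ := ulim U ha'
  obtain ⟨b, hbl⟩ := ulim U hb'
  refine ⟨c, a, b, fun p => ⟨fun hp => ?_, ?_⟩⟩
  · obtain ⟨ν, hν1, -, hν⟩ := S.normal hx
    obtain ⟨t1, t2, F⟩ := exists_frame hν1
    obtain ⟨θ, rfl⟩ := F.surj S.SL hν hp
    set β := Real.cos θ • t1 + Real.sin θ • t2 with hβ
    have hβ' : ∀ c : ℝ, β ≠ c • ν := F.comb_ne (cs_ne θ)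
    have hlim : Tendsto (fun n => tp L (xs n) ν β) (U : Filter ℕ) (𝓝 (tp L x ν β)) :=
      tp_tendsto S.SL hν hβ' hxs tendsto_const_nhds tendsto_const_nhds
    have hev := eventually_pos (κs := fun _ => ν) S.SL.comp hν hxs tendsto_const_nhds
    have hφ : ∀ n, ∃ φ : ℝ, (∀ q ∈ L, 0 < ⟪ν, q - xs n⟫_ℝ) →
        tp L (xs n) ν β = cs n + Real.cos φ • as n + Real.sin φ • bs n := by
      intro n
      by_cases h : ∀ q ∈ L, 0 < ⟪ν, q - xs n⟫_ℝ
      · obtain ⟨φ, e⟩ := (hcab n _).1 (tp_isTouch S.SL h hβ')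
        exact ⟨φ, fun _ => e⟩
      · exact ⟨0, fun h' => absurd h' h⟩
    choose φ hφ using hφ
    obtain ⟨C, hC⟩ := ulim U (f := fun n => Real.cos (φ n)) (R := 1)
      (fun n => Real.abs_cos_le_one _)
    obtain ⟨T, hT⟩ := ulim U (f := fun n => Real.sin (φ n)) (R := 1)
      (fun n => Real.abs_sin_le_one _)
    have hCT : C ^ 2 + T ^ 2 = 1 := by
      refine tendsto_nhds_unique ((hC.pow 2).add (hT.pow 2)) ?_
      simp only [Real.cos_sq_add_sin_sq]
      exact tendsto_const_nhds
    obtain ⟨ψ, rfl, rfl⟩ := circ hCT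
    refine ⟨ψ, tendsto_nhds_unique hlim ?_⟩
    refine ((hc.add (hC.smul ha)).add (hT.smul hbl)).congr' ?_
    filter_upwards [hev] with n hn
    exact (hφ n hn).symm
  · rintro ⟨φ, rfl⟩
    have hlim : Tendsto (fun n => cs n + Real.cos φ • as n + Real.sin φ • bs n) (U : Filter ℕ)
        (𝓝 (c + Real.cos φ • a + Real.sin φ • b)) :=
      (hc.add (ha.const_smul _)).add (hbl.const_smul _)
    have hT : ∀ n, ∃ m : E3, ‖m‖ = 1 ∧
        Touch L (xs n) m (cs n + Real.cos φ • as n + Real.sin φ • bs n) := by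
      intro n
      obtain ⟨m, hm, ht⟩ := (hcab n _).2 ⟨φ, rfl⟩
      exact ⟨_, normalize_norm hm, touch_smul (by positivity) ht⟩
    choose m hm1 hmt using hT
    obtain ⟨M, hM⟩ := ulim U (f := m) (R := 1) (fun n => (hm1 n).le)
    have hM1 : ‖M‖ = 1 := by
      refine tendsto_nhds_unique hM.norm ?_
      simp only [hm1]; exact tendsto_const_nhds
    refine ⟨M, norm_ne_zero_iff.1 (by rw [hM1]; norm_num), ?_, ?_, ?_⟩
    · exact S.SL.comp.isClosed.mem_of_tendsto hlim (Filter.Eventually.of_forall fun n => (hmt n).1)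
    · refine tendsto_nhds_unique (Filter.Tendsto.inner (𝕜 := ℝ) hM (hlim.sub hxs)) ?_
      simp only [fun n => (hmt n).2.1]; exact tendsto_const_nhds
    · intro q hq
      exact ge_of_tendsto' (Filter.Tendsto.inner (𝕜 := ℝ) hM ((tendsto_const_nhds (x := q)).sub hxs))
        (fun n => (hmt n).2.2 q hq)

lemma Setup.final {K L : Set E3} {N : E3 → E3} {d : E3 → ℝ} (S : Setup K L N d)
    {x : E3} (hx : x ∈ frontier K) : ∃ f : EuclideanSpace ℝ (Fin 2) →ᵃ[ℝ] E3,
      Function.Injective f ∧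
      graze L x = f '' sphere (0 : EuclideanSpace ℝ (Fin 2)) 1 := by
  obtain ⟨c, a, b, hell⟩ := S.ell hx
  obtain ⟨ν, -, -, hν⟩ := S.normal hx
  -- independence
  have hspan : ∀ v : E3, ∀ s t : ℝ, a = s • v → b = t • v → False := by
    intro v s t hs ht
    obtain ⟨m, hm, h1, h2⟩ := exists_perp (c - x) v
    refine hm (graze_span S.SL hν (fun p hp => ?_))
    obtain ⟨φ, rfl⟩ := (hell p).1 hp
    have e : c + Real.cos φ • a + Real.sin φ • b - x =
        (c - x) + (Real.cos φ * s + Real.sin φ * t) • v := by rw [hs, ht]; module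
    rw [e, real_inner_comm, inner_add_left, real_inner_smul_left, h1, h2]; ring
  have hind : ∀ s t : ℝ, s • a + t • b = 0 → s = 0 ∧ t = 0 := by
    intro s t h
    by_cases hs : s = 0
    · refine ⟨hs, ?_⟩
      by_contra ht
      rw [hs, zero_smul, zero_add, smul_eq_zero] at h
      exact hspan a 1 0 (by simp) (by simpa using h.resolve_left ht)
    · exfalso
      refine hspan b (-(s⁻¹ * t)) 1 ?_ (by simp)
      have : s • a = -(t • b) := eq_neg_of_add_eq_zero_left h
      calc a = s⁻¹ • (s • a) := by rw [smul_smul, inv_mul_cancel₀ hs, one_smul]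
        _ = _ := by rw [this]; module
  let g : EuclideanSpace ℝ (Fin 2) →ₗ[ℝ] E3 :=
    (EuclideanSpace.proj (𝕜 := ℝ) (0 : Fin 2)).toLinearMap.smulRight a +
    (EuclideanSpace.proj (𝕜 := ℝ) (1 : Fin 2)).toLinearMap.smulRight b
  let f : EuclideanSpace ℝ (Fin 2) →ᵃ[ℝ] E3 := g.toAffineMap + AffineMap.const ℝ _ c
  have hf : ∀ y, f y = c + y 0 • a + y 1 • b := by
    intro y
    simp only [f, g, AffineMap.coe_add, Pi.add_apply, LinearMap.coe_toAffineMap,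
      LinearMap.add_apply, AffineMap.coe_const, Function.const_apply]
    have : (LinearMap.smulRight (EuclideanSpace.proj (𝕜 := ℝ) (0 : Fin 2)).toLinearMap a) y
      = y 0 • a := rfl
    rw [this]
    have : (LinearMap.smulRight (EuclideanSpace.proj (𝕜 := ℝ) (1 : Fin 2)).toLinearMap b) y
      = y 1 • b := rfl
    rw [this]; module
  refine ⟨f, ?_, ?_⟩
  · intro y z h
    rw [hf, hf] at h
    have h' : (y 0 - z 0) • a + (y 1 - z 1) • b = 0 := by
      have : (y 0 - z 0) • a + (y 1 - z 1) • b =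
        (c + y 0 • a + y 1 • b) - (c + z 0 • a + z 1 • b) := by module
      rw [this, h, sub_self]
    obtain ⟨e0, e1⟩ := hind _ _ h'
    ext i
    fin_cases i
    · exact sub_eq_zero.1 e0
    · exact sub_eq_zero.1 e1
  · have hsph : ∀ y : EuclideanSpace ℝ (Fin 2), y ∈ sphere (0 : EuclideanSpace ℝ (Fin 2)) 1 ↔
        y 0 ^ 2 + y 1 ^ 2 = 1 := by
      intro y
      rw [mem_sphere_zero_iff_norm, EuclideanSpace.norm_eq, Real.sqrt_eq_one]
      simp [Fin.sum_univ_two]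
    ext p
    rw [graze_iff S.SL.comp S.SL.conv ⟨0, S.SL.zero⟩]
    change IsTouch L x p ↔ _
    rw [hell p]
    constructor
    · rintro ⟨φ, rfl⟩
      refine ⟨!₂[Real.cos φ, Real.sin φ], ?_, ?_⟩
      · rw [hsph]; simp
      · rw [hf]; simp
    · rintro ⟨y, hy, rfl⟩
      rw [hsph] at hy
      obtain ⟨φ, e1, e2⟩ := circ hy
      exact ⟨φ, by rw [hf, e1, e2]⟩

lemma plane_normal {P : AffineSubspace ℝ E3} (h : IsPlane P) :
    ∃ (N : E3) (d : ℝ), N ≠ 0 ∧ (∀ q ∈ P, ⟪N, q⟫_ℝ = d) ∧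
      ∀ w : E3, ⟪N, w⟫_ℝ = 0 → w ∈ P.direction := by
  unfold IsPlane at h
  have h3 : Module.finrank ℝ E3 = 3 := by simp
  have h1 : Module.finrank ℝ P.directionᗮ = 1 := by
    have := Submodule.finrank_add_finrank_orthogonal P.direction
    omega
  obtain ⟨⟨N, hN⟩, hN0, hspan⟩ := finrank_eq_one_iff'.1 h1
  have hN0' : N ≠ 0 := fun h => hN0 (Subtype.ext h)
  have hdir : ∀ w : E3, ⟪N, w⟫_ℝ = 0 → w ∈ P.direction := by
    intro w hw
    rw [← Submodule.orthogonal_orthogonal P.direction, Submodule.mem_orthogonal]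
    intro u hu
    obtain ⟨c, hc⟩ := hspan ⟨u, hu⟩
    have hc' : c • N = u := congrArg Subtype.val hc
    rw [← hc', real_inner_smul_left, hw, mul_zero]
  by_cases hP : ∃ q0, q0 ∈ P
  · obtain ⟨q0, hq0⟩ := hP
    refine ⟨N, ⟪N, q0⟫_ℝ, hN0', fun q hq => ?_, hdir⟩
    have hd : q - q0 ∈ P.direction := AffineSubspace.vsub_mem_direction hq hq0
    have := (Submodule.mem_orthogonal' _ _).1 hN _ hd
    rw [inner_sub_right] at this
    linarith
  · exact ⟨N, 0, hN0', fun q hq => absurd ⟨q, hq⟩ hP, hdir⟩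

lemma zero_int {L : Set E3} (hLconv : Convex ℝ L) (hLint : (interior L).Nonempty)
    (hLsym : L = -L) : (0 : E3) ∈ interior L := by
  obtain ⟨c, hc⟩ := hLint
  have hc' : -c ∈ interior L := by
    have : interior L = -interior L := by
      conv_lhs => rw [hLsym]
      exact ((Homeomorph.neg E3).preimage_interior L).symm
    rw [this]; simpa using hc
  have := hLconv.interior hc hc' (a := 1 / 2) (b := 1 / 2) (by norm_num) (by norm_num) (by norm_num)
  simpa using this

theorem statement7
    (K L : Set E3)
    (hKcomp : IsCompact K) (hKconv : Convex ℝ K) (hKint : (interior K).Nonempty)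
    (hKsym : K = -K)
    (hLcomp : IsCompact L) (hLconv : Convex ℝ L) (hLint : (interior L).Nonempty)
    (hLsym : L = -L) (hLstrict : StrictConvex ℝ L)
    (hLK : L ⊆ interior K)
    (Δ : E3 → AffineSubspace ℝ E3)
    (hΔ : ∀ z ∈ frontier K, IsPlane (Δ z) ∧ graze L z ⊆ (Δ z : Set E3))
    (hAF : AlmostFree K L Δ) :
    ∀ x ∈ frontier K, ∃ f : EuclideanSpace ℝ (Fin 2) →ᵃ[ℝ] E3,
      Function.Injective f ∧
      graze L x = f '' sphere (0 : EuclideanSpace ℝ (Fin 2)) 1 := by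
  intro x hx
  have hex : ∀ z : E3, ∃ (N : E3) (d : ℝ), z ∈ frontier K → N ≠ 0 ∧
      (∀ q ∈ Δ z, ⟪N, q⟫_ℝ = d) ∧ ∀ w : E3, ⟪N, w⟫_ℝ = 0 → w ∈ (Δ z).direction := by
    intro z
    by_cases hz : z ∈ frontier K
    · obtain ⟨N, d, h⟩ := plane_normal (hΔ z hz).1
      exact ⟨N, d, fun _ => h⟩
    · exact ⟨0, 0, fun h => absurd h hz⟩
  choose N d hNd using hex
  have S : Setup K L N d :=
    { Kc := hKcomp
      Kv := hKconv
      SL := ⟨hLcomp, hLstrict, zero_int hLconv hLint hLsym⟩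
      LK := hLK
      N0 := fun z hz => (hNd z hz).1
      pl := by
        intro z hz p hp
        exact (hNd z hz).2.1 p ((hΔ z hz).2 ((graze_iff hLcomp hLconv hLint z p).2 hp))
      af := by
        intro z hz w hw h t hmem
        refine Set.disjoint_left.1 (hAF z hz w ⟨(hNd z hz).2.2 w h, hw⟩) ?_ hmem
        have := AffineMap.lineMap_mem_affineSpan_pair t z w
        rw [AffineMap.lineMap_apply, vsub_eq_sub, vadd_eq_add, add_comm] at this
        exact this }
  exact S.final hx

end
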